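/- arXiv:1502.06875 — 2 statements merged into one kernel-verified Lean document; each statement's English description precedes it below -/
import Mathlib

section
/- (Pareto limit bound) Let ⟨V,E,d⟩ be a multi-weighted game graph and v₀ a vertex. If there exists an initial credit b ∈ ℕ^d such that Player 1 wins the energy game Δ_b⟨V,E,d⟩ from v₀, then there exists such an initial credit b with ‖b‖ ≤ (4|V|·‖E‖)^{2(d+2)³}. -/
/-! Multi-weighted game graphs, plays, strategies, energy and bounding games. -/

/-- A configuration: a vertex together with an accumulated weight vector. -/
abbrev Conf (V : Type) (d : ℕ) := V × (Fin d → ℤ)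

/-- A multi-weighted game graph: Player-1 vertices, a finite set of
weighted edges, such that every vertex has an outgoing edge. -/
structure MWG (V : Type) [Fintype V] [DecidableEq V] (d : ℕ) where
  P1 : Finset V
  E : Set (V × (Fin d → ℤ) × V)
  finE : E.Finite
  serial : ∀ v : V, ∃ u v', (v, u, v') ∈ E

variable {V : Type} [Fintype V] [DecidableEq V] {d : ℕ}

/-- The norm of an integer vector: max of absolute values of entries. -/
def vnorm {d : ℕ} (u : Fin d → ℤ) : ℕ := Finset.univ.sup fun i => (u i).natAbs

/-- `‖E‖`: the maximal norm of an edge label. -/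
noncomputable def enorm (G : MWG V d) : ℕ := G.finE.toFinset.sup fun e => vnorm e.2.1

/-- One step along an edge of the graph. -/
def Step (G : MWG V d) (c c' : Conf V d) : Prop := (c.1, c'.2 - c.2, c'.1) ∈ G.E

/-- A finite path, as a list of configurations. -/
def IsPathL (G : MWG V d) (π : List (Conf V d)) : Prop := π.Chain' (Step G)

/-- An infinite play from `v₀`, starting with weight `0`. -/
def IsPlay (G : MWG V d) (v₀ : V) (ρ : ℕ → Conf V d) : Prop :=
  ρ 0 = (v₀, 0) ∧ ∀ n, Step G (ρ n) (ρ (n+1))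

/-- A strategy: given the history (past configurations) and the current
configuration, choose a weighted move. -/
abbrev Strat (V : Type) (d : ℕ) := List (Conf V d) → Conf V d → (Fin d → ℤ) × V

/-- A valid strategy for the player owning the vertices in `P` always
chooses an edge of the game graph from the current vertex. -/
def ValidStrat (G : MWG V d) (P : Set V) (σ : Strat V d) : Prop :=
  ∀ h c, IsPathL G (h ++ [c]) → c.1 ∈ P → (c.1, (σ h c).1, (σ h c).2) ∈ G.E

/-- The history of a play before instant `n`. -/
def hist (ρ : ℕ → Conf V d) (n : ℕ) : List (Conf V d) := (List.range n).map ρ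

/-- A play is consistent with strategy `σ` of the player owning `P` if at
every configuration with vertex in `P` the next configuration is obtained
by playing the edge prescribed by `σ`. -/
def Consistent (P : Set V) (σ : Strat V d) (ρ : ℕ → Conf V d) : Prop :=
  ∀ n, (ρ n).1 ∈ P →
    ρ (n+1) = ((σ (hist ρ n) (ρ n)).2, (ρ n).2 + (σ (hist ρ n) (ρ n)).1)

/-- Player owning `P` wins the game with payoff `Win` from `v₀`. -/
def Wins (G : MWG V d) (P : Set V) (Win : (ℕ → Conf V d) → Prop) (v₀ : V) : Prop :=
  ∃ σ : Strat V d, ValidStrat G P σ ∧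
    ∀ ρ, IsPlay G v₀ ρ → Consistent P σ ρ → Win ρ

/-- Player 1's winning condition in the energy game with initial credit `b`. -/
def EnergyOK (b : Fin d → ℕ) (ρ : ℕ → Conf V d) : Prop :=
  ∀ n i, 0 ≤ (b i : ℤ) + (ρ n).2 i

/-- Player 1's winning condition in the bounding game: the norms of the
total weights of all the finite prefixes are bounded. -/
def BoundedPlay (ρ : ℕ → Conf V d) : Prop :=
  ∃ B : ℕ, ∀ n, vnorm ((ρ n).2) ≤ B

def P1WinsEnergy (G : MWG V d) (b : Fin d → ℕ) (v₀ : V) : Prop :=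
  Wins G (G.P1 : Set V) (EnergyOK b) v₀

def P2WinsEnergy (G : MWG V d) (b : Fin d → ℕ) (v₀ : V) : Prop :=
  Wins G {v | v ∉ G.P1} (fun ρ => ¬ EnergyOK b ρ) v₀

def P1WinsBounding (G : MWG V d) (v₀ : V) : Prop :=
  Wins G (G.P1 : Set V) BoundedPlay v₀

def P2WinsBounding (G : MWG V d) (v₀ : V) : Prop :=
  Wins G {v | v ∉ G.P1} (fun ρ => ¬ BoundedPlay ρ) v₀

/-- The negative unit vector `-e i`. -/
def negUnit (d : ℕ) (i : Fin d) : Fin d → ℤ := fun j => if j = i then -1 else 0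

/-- The lossy game graph: add a self-loop labelled `-e i` at each Player-1
vertex, for every coordinate `i`. -/
def lossy (G : MWG V d) : MWG V d where
  P1 := G.P1
  E := G.E ∪ (fun p : V × Fin d => (p.1, negUnit d p.2, p.1)) '' {p | p.1 ∈ G.P1}
  finE := G.finE.union ((Set.toFinite _).image _)
  serial := fun v => by
    obtain ⟨u, v', h⟩ := G.serial v
    exact ⟨u, v', Set.mem_union_left _ h⟩

/-- Every cycle of the game graph contains at least one Player-1 vertex. -/
def EveryCycleHasP1 (G : MWG V d) : Prop :=
  ∀ (n : ℕ) (c : ℕ → Conf V d), 0 < n → (∀ j < n, Step G (c j) (c (j+1))) →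
    (c 0).1 = (c n).1 → ∃ j < n, (c j).1 ∈ G.P1

/-!
Player 1 keeps a finite family `A` of credits that is closed under the game with losses, obtained
from a winning strategy by Dickson's lemma, and a point `x`: the total label of the cycles completed
so far. The labels of simple cycles are contained in a box `W`, and the hyperplanes orthogonal to
`W` cut the dual space into open faces. If `x` is close to the boundary of a zonotope of `W` that is
eroded more deeply along faces of higher dimension, then the faces whose constraints are almost
tight form a flag. Player 1 always moves to maximise, over `A`, the lexicographic functional of this
flag. Differences of support functions telescope along a cycle, so every cycle completed while the
flag is constant is lexicographically nonpositive and moves `x` back from the boundary as seen by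
the first face it is not orthogonal to. Cycles during which the flag changes are accounted for by an
amortised potential, in which raising the coordinate along a face is paid for by a smaller face of
the flag. Hence `x` never leaves the dilated zonotope, whose size does not depend on `A`.
-/

namespace MWG

/-- A set of configurations in which Player 1 can remain forever: from each of its configurations
some step of Player 1, or every step of Player 2, leads back into the set. Since configurations
record the accumulated weight, such sets replace strategies with memory. -/
structure IsInvariant (G : MWG V d) (K : Set (Conf V d)) : Prop where
  p1 : ∀ c ∈ K, c.1 ∈ G.P1 → ∃ c' ∈ K, Step G c c'
  p2 : ∀ c ∈ K, c.1 ∉ G.P1 → ∀ c', Step G c c' → c' ∈ K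

lemma exists_step (G : MWG V d) (c : Conf V d) : ∃ c', Step G c c' := by
  obtain ⟨u, v', h⟩ := G.serial c.1
  exact ⟨(v', c.2 + u), by simpa [Step] using h⟩

theorem IsInvariant.p1WinsEnergy {G : MWG V d} {K : Set (Conf V d)} (hK : G.IsInvariant K)
    {v₀ : V} {b : Fin d → ℕ} (h₀ : (v₀, 0) ∈ K) (hb : ∀ c ∈ K, ∀ i, 0 ≤ (b i : ℤ) + c.2 i) :
    P1WinsEnergy G b v₀ := by
  have hnext : ∀ c, ∃ c', Step G c c' ∧ (c ∈ K → c.1 ∈ G.P1 → c' ∈ K) := by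
    intro c
    by_cases hc : c ∈ K ∧ c.1 ∈ G.P1
    · obtain ⟨c', hc', hs⟩ := hK.p1 c hc.1 hc.2
      exact ⟨c', hs, fun _ _ => hc'⟩
    · obtain ⟨c', hs⟩ := G.exists_step c
      exact ⟨c', hs, fun h₁ h₂ => absurd ⟨h₁, h₂⟩ hc⟩
  choose next hstep hmem using hnext
  refine ⟨fun _ c => ((next c).2 - c.2, (next c).1), fun _ c _ _ => hstep c, fun ρ hρ hcons => ?_⟩
  have hρK : ∀ n, ρ n ∈ K := by
    intro n
    induction n with
    | zero => rwa [hρ.1]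
    | succ n ih =>
      by_cases hp : (ρ n).1 ∈ G.P1
      · rw [show ρ (n + 1) = next (ρ n) by simpa using hcons n hp]
        exact hmem _ ih hp
      · exact hK.p2 _ ih hp _ (hρ.2 n)
  exact fun n => hb _ (hρK n)

lemma exists_seq_of_reflTransGen {α : Type*} {r : α → α → Prop} {a b : α}
    (hab : Relation.ReflTransGen r a b)
    (hb : ∀ c, Relation.ReflTransGen r b c → ∃ c', r c c') :
    ∃ s : ℕ → α, s 0 = a ∧ (∀ n, r (s n) (s (n + 1))) ∧ ∃ n, s n = b := by
  induction hab using Relation.ReflTransGen.head_induction_on with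
  | refl =>
    choose next hnext using fun c : {c // Relation.ReflTransGen r b c} => hb c c.2
    let s : ℕ → {c // Relation.ReflTransGen r b c} :=
      fun n => (fun c => ⟨next c, c.2.tail (hnext c)⟩)^[n] ⟨b, .refl⟩
    refine ⟨fun n => s n, rfl, fun n => ?_, 0, rfl⟩
    simp only [s, Function.iterate_succ_apply']
    exact hnext _
  | @head a c hac _ ih =>
    obtain ⟨s, hs₀, hs, n, hn⟩ := ih
    refine ⟨fun n => Nat.casesOn n a s, rfl, fun n => ?_, n + 1, hn⟩
    cases n with
    | zero => simpa [hs₀] using hac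
    | succ n => exact hs n

/-- One step of a play in which Player 1 follows `σ`, on pairs consisting of the past
configurations and the current one. -/
def StratStep (G : MWG V d) (σ : Strat V d) (p q : List (Conf V d) × Conf V d) : Prop :=
  q.1 = p.1 ++ [p.2] ∧ Step G p.2 q.2 ∧
    (p.2.1 ∈ G.P1 → q.2 = ((σ p.1 p.2).2, p.2.2 + (σ p.1 p.2).1))

section StratStep

variable {G : MWG V d} {σ : Strat V d} {v₀ : V} {p : List (Conf V d) × Conf V d}

lemma isPathL_of_reflTransGen_stratStep
    (hp : Relation.ReflTransGen (G.StratStep σ) ([], v₀, 0) p) : IsPathL G (p.1 ++ [p.2]) := by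
  induction hp with
  | refl => exact List.isChain_singleton _
  | tail _ hs ih =>
    rw [hs.1]
    exact List.isChain_append.2 ⟨ih, List.isChain_singleton _, by simpa using hs.2.1⟩

lemma stratStep_of_mem (hσ : ValidStrat G (G.P1 : Set V) σ)
    (hp : Relation.ReflTransGen (G.StratStep σ) ([], v₀, 0) p) (h1 : p.2.1 ∈ G.P1) :
    G.StratStep σ p (p.1 ++ [p.2], (σ p.1 p.2).2, p.2.2 + (σ p.1 p.2).1) :=
  ⟨rfl, by simpa [Step] using hσ _ _ (isPathL_of_reflTransGen_stratStep hp) h1, fun _ => rfl⟩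

lemma stratStep_of_notMem (h1 : p.2.1 ∉ G.P1) {c' : Conf V d} (hc : Step G p.2 c') :
    G.StratStep σ p (p.1 ++ [p.2], c') :=
  ⟨rfl, hc, fun h => absurd h h1⟩

lemma exists_stratStep (hσ : ValidStrat G (G.P1 : Set V) σ)
    (hp : Relation.ReflTransGen (G.StratStep σ) ([], v₀, 0) p) : ∃ q, G.StratStep σ p q := by
  by_cases h1 : p.2.1 ∈ G.P1
  · exact ⟨_, stratStep_of_mem hσ hp h1⟩
  · obtain ⟨c', hc⟩ := G.exists_step p.2
    exact ⟨_, stratStep_of_notMem h1 hc⟩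

lemma exists_play_of_reflTransGen_stratStep (hσ : ValidStrat G (G.P1 : Set V) σ)
    (hp : Relation.ReflTransGen (G.StratStep σ) ([], v₀, 0) p) :
    ∃ ρ, IsPlay G v₀ ρ ∧ Consistent (G.P1 : Set V) σ ρ ∧ ∃ n, ρ n = p.2 := by
  obtain ⟨s, hs₀, hs, n, hn⟩ :=
    exists_seq_of_reflTransGen hp fun q hq => exists_stratStep hσ (hp.trans hq)
  have hhist : ∀ k, (s k).1 = hist (fun j => (s j).2) k := by
    intro k
    induction k with
    | zero => simp [hs₀, hist]
    | succ k ih => rw [(hs k).1, ih]; simp [hist, List.range_succ]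
  refine ⟨fun j => (s j).2, ⟨by simp [hs₀], fun k => (hs k).2.1⟩, fun k hk => ?_, n, by simp [hn]⟩
  simp only [← hhist]
  exact (hs k).2.2 hk

end StratStep

theorem exists_isInvariant_of_p1WinsEnergy {G : MWG V d} {b : Fin d → ℕ} {v₀ : V}
    (h : P1WinsEnergy G b v₀) :
    ∃ K, G.IsInvariant K ∧ (v₀, 0) ∈ K ∧ ∀ c ∈ K, ∀ i, 0 ≤ (b i : ℤ) + c.2 i := by
  obtain ⟨σ, hσ, hwin⟩ := h
  refine ⟨{c | ∃ h, Relation.ReflTransGen (G.StratStep σ) ([], v₀, 0) (h, c)},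
    ⟨?_, ?_⟩, ⟨[], .refl⟩, ?_⟩
  · rintro c ⟨h, hc⟩ h1
    have hs := stratStep_of_mem hσ hc h1
    exact ⟨_, ⟨_, hc.tail hs⟩, hs.2.1⟩
  · rintro c ⟨h, hc⟩ h1 c' hs
    exact ⟨_, hc.tail (stratStep_of_notMem h1 hs)⟩
  · rintro c ⟨h, hc⟩ i
    obtain ⟨ρ, hρ, hcons, n, rfl⟩ := exists_play_of_reflTransGen_stratStep hσ hc
    exact hwin ρ hρ hcons n i

/-- The upper set of all vectors `a ≥ b + x` with `(v, x) ∈ K`. -/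
def creditsAbove (K : Set (Conf V d)) (b : Fin d → ℕ) (v : V) : Set (Fin d → ℤ) :=
  {a | ∃ c ∈ K, c.1 = v ∧ ∀ i, (b i : ℤ) + c.2 i ≤ a i}

/-- A family of finite sets of vectors, one per vertex, in which Player 1 can remain forever when
every move may lose weight, each lossy label `u'` being bounded by `‖E‖` like a true label `u`. -/
structure IsClosedFamily (G : MWG V d) (A : V → Finset (Fin d → ℤ)) : Prop where
  p1 : ∀ v ∈ G.P1, ∀ a ∈ A v, ∃ u v', (v, u, v') ∈ G.E ∧
    ∃ u' ≤ u, (∀ i, |u' i| ≤ (enorm G : ℤ)) ∧ a + u' ∈ A v'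
  p2 : ∀ v ∉ G.P1, ∀ a ∈ A v, ∀ u v', (v, u, v') ∈ G.E →
    ∃ u' ≤ u, (∀ i, |u' i| ≤ (enorm G : ℤ)) ∧ a + u' ∈ A v'

lemma abs_label_le_enorm {G : MWG V d} {v v' : V} {u : Fin d → ℤ} (h : (v, u, v') ∈ G.E)
    (i : Fin d) : |u i| ≤ (enorm G : ℤ) := by
  have h₁ : (u i).natAbs ≤ vnorm u :=
    Finset.le_sup (f := fun i => (u i).natAbs) (Finset.mem_univ i)
  have h₂ : vnorm u ≤ _root_.enorm G :=
    Finset.le_sup (f := fun e : V × (Fin d → ℤ) × V => vnorm e.2.1) (G.finE.mem_toFinset.2 h)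
  rw [Int.abs_eq_natAbs]
  exact_mod_cast h₁.trans h₂

/-- Dickson's lemma bounds the finitely many minimal elements of `s`. -/
lemma exists_forall_inf_mem_of_isUpperSet {ι : Type*} [Finite ι] {s : Set (ι → ℤ)}
    (hs : IsUpperSet s) (h₀ : ∀ a ∈ s, 0 ≤ a) :
    ∃ N : ℕ, ∀ M : ℕ, N ≤ M → ∀ a ∈ s, (a ⊓ fun _ => (M : ℤ)) ∈ s := by
  classical
  have := Fintype.ofFinite ι
  let t : Set (ι → ℕ) := {n | (fun i => (n i : ℤ)) ∈ s}
  have hfin : {n | Minimal (· ∈ t) n}.Finite :=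
    WellQuasiOrderedLE.finite_of_isAntichain (setOfPred_minimal_antichain _)
  refine ⟨hfin.toFinset.sup fun n => Finset.univ.sup n, fun M hM a ha => ?_⟩
  have hat : (fun i => (a i).toNat) ∈ t := by
    have : (fun i => (((a i).toNat : ℕ) : ℤ)) = a := funext fun i => Int.toNat_of_nonneg (h₀ a ha i)
    simpa only [t, Set.mem_ofPred_eq, this] using ha
  obtain ⟨n, hna, hn⟩ := exists_minimal_le_of_wellFoundedLT (· ∈ t) _ hat
  refine hs (fun i => ?_) hn.1
  have hnM : n i ≤ M := calc
    n i ≤ Finset.univ.sup n := Finset.le_sup (Finset.mem_univ i)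
    _ ≤ hfin.toFinset.sup fun n => Finset.univ.sup n :=
      Finset.le_sup (f := fun n : ι → ℕ => Finset.univ.sup n) (hfin.mem_toFinset.2 hn)
    _ ≤ M := hM
  have hnai : n i ≤ (a i).toNat := hna i
  have hai : 0 ≤ a i := h₀ a ha i
  simp only [Pi.inf_apply, le_inf_iff]
  omega

omit [Fintype V] [DecidableEq V] in
lemma isUpperSet_creditsAbove (K : Set (Conf V d)) (b : Fin d → ℕ) (v : V) :
    IsUpperSet (creditsAbove K b v) := by
  rintro a a' haa' ⟨c, hc, hcv, hca⟩
  exact ⟨c, hc, hcv, fun i => (hca i).trans (haa' i)⟩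

omit [Fintype V] [DecidableEq V] in
lemma add_mem_creditsAbove {K : Set (Conf V d)} {b : Fin d → ℕ} {c c' : Conf V d}
    {a : Fin d → ℤ} (hc' : c' ∈ K) (ha : ∀ i, (b i : ℤ) + c.2 i ≤ a i) :
    a + (c'.2 - c.2) ∈ creditsAbove K b c'.1 := by
  refine ⟨c', hc', rfl, fun i => ?_⟩
  have := ha i
  simp only [Pi.add_apply, Pi.sub_apply]
  omega

lemma exists_inf_const_eq_add {ι : Type*} {a u : ι → ℤ} {N e : ℤ} (ha : ∀ i, a i ≤ N)
    (hu : ∀ i, |u i| ≤ e) :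
    ∃ u' ≤ u, (∀ i, |u' i| ≤ e) ∧ a + u' = (a + u) ⊓ fun _ => N := by
  refine ⟨(a + u) ⊓ (fun _ => N) - a, fun i => ?_, fun i => ?_, by abel⟩ <;>
  · have h₁ := ha i
    have h₂ := abs_le.1 (hu i)
    simp only [Pi.sub_apply, Pi.inf_apply, Pi.add_apply, abs_le]
    omega

theorem exists_isClosedFamily {G : MWG V d} {K : Set (Conf V d)} (hK : G.IsInvariant K)
    {v₀ : V} (h₀ : (v₀, 0) ∈ K) {b : Fin d → ℕ} (hb : ∀ c ∈ K, ∀ i, 0 ≤ (b i : ℤ) + c.2 i) :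
    ∃ A, G.IsClosedFamily A ∧ (A v₀).Nonempty := by
  classical
  have hnonneg : ∀ v, ∀ a ∈ creditsAbove K b v, 0 ≤ a := by
    rintro v a ⟨c, hc, -, hca⟩ i
    exact (hb c hc i).trans (hca i)
  choose N hN using fun v =>
    exists_forall_inf_mem_of_isUpperSet (isUpperSet_creditsAbove K b v) (hnonneg v)
  let M := Finset.univ.sup N
  let A : V → Finset (Fin d → ℤ) := fun v =>
    (Finset.Icc 0 fun _ => (M : ℤ)).filter (· ∈ creditsAbove K b v)
  have hcap : ∀ v, ∀ a ∈ creditsAbove K b v, (a ⊓ fun _ => (M : ℤ)) ∈ A v := by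
    intro v a ha
    have h := hN v M (Finset.le_sup (Finset.mem_univ v)) a ha
    exact Finset.mem_filter.2 ⟨Finset.mem_Icc.2 ⟨hnonneg v _ h, inf_le_right⟩, h⟩
  have hmove : ∀ c c' : Conf V d, c' ∈ K → Step G c c' → ∀ a ∈ A c.1,
      (∀ i, (b i : ℤ) + c.2 i ≤ a i) → ∃ u' ≤ c'.2 - c.2, (∀ i, |u' i| ≤ (enorm G : ℤ)) ∧
        a + u' ∈ A c'.1 := by
    intro c c' hc' hs a ha hca
    obtain ⟨u', hu', hbound, heq⟩ := exists_inf_const_eq_add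
      (Finset.mem_Icc.1 (Finset.mem_filter.1 ha).1).2 (abs_label_le_enorm hs)
    exact ⟨u', hu', hbound, heq ▸ hcap _ _ (add_mem_creditsAbove hc' hca)⟩
  refine ⟨A, ⟨fun v hv a ha => ?_, fun v hv a ha u v' he => ?_⟩, _, hcap v₀ (fun i => b i)
    ⟨_, h₀, rfl, fun i => by simp⟩⟩
  · obtain ⟨c, hc, rfl, hca⟩ := (Finset.mem_filter.1 ha).2
    obtain ⟨c', hc', hs⟩ := hK.p1 c hc hv
    exact ⟨_, _, hs, hmove c c' hc' hs a ha hca⟩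
  · obtain ⟨c, hc, rfl, hca⟩ := (Finset.mem_filter.1 ha).2
    have hs : Step G c (v', c.2 + u) := by simpa [Step] using he
    simpa using hmove c _ (hK.p2 c hc hv _ hs) hs a ha hca

open Matrix

/-- The coordinatewise cast of an integer vector to a rational one. -/
def toRat (w : Fin d → ℤ) : Fin d → ℚ := fun i => w i

@[simp] lemma toRat_zero : toRat (0 : Fin d → ℤ) = 0 := by ext; simp [toRat]

@[simp] lemma toRat_neg (w : Fin d → ℤ) : toRat (-w) = -toRat w := by ext; simp [toRat]

lemma toRat_smul (n : ℤ) (w : Fin d → ℤ) : toRat (n • w) = (n : ℚ) • toRat w := by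
  ext; simp [toRat]

lemma toRat_injective : Function.Injective (toRat (d := d)) := fun _ _ h =>
  funext fun i => Int.cast_injective (congrFun h i)

lemma toRat_dotProduct (a b : Fin d → ℤ) : toRat a ⬝ᵥ toRat b = ((a ⬝ᵥ b : ℤ) : ℚ) := by
  simp [toRat, dotProduct]

/-- A finite set of integer vectors which is symmetric about the origin and spans `ℚ^d`. It is
the set of normals of a central hyperplane arrangement. -/
structure IsSymmSpanning (W : Finset (Fin d → ℤ)) : Prop where
  neg_mem : ∀ w ∈ W, -w ∈ W
  exists_dot_ne_zero : ∀ y : Fin d → ℚ, y ≠ 0 → ∃ w ∈ W, y ⬝ᵥ toRat w ≠ 0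

/-- `μ` and `ν` lie in the relative interior of the same face of the arrangement with normals
`W`. -/
def SameFace (W : Finset (Fin d → ℤ)) (μ ν : Fin d → ℤ) : Prop :=
  ∀ w ∈ W, (μ ⬝ᵥ w).sign = (ν ⬝ᵥ w).sign

lemma IsSymmSpanning.exists_int_dot_ne_zero {W : Finset (Fin d → ℤ)} (hW : IsSymmSpanning W)
    {μ : Fin d → ℤ} (hμ : μ ≠ 0) : ∃ w ∈ W, μ ⬝ᵥ w ≠ 0 := by
  obtain ⟨w, hw, hne⟩ := hW.exists_dot_ne_zero (toRat μ)
    fun h => hμ (toRat_injective (h.trans toRat_zero.symm))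
  exact ⟨w, hw, by simpa [toRat_dotProduct] using hne⟩

lemma IsSymmSpanning.sameFace {W : Finset (Fin d → ℤ)} (hW : IsSymmSpanning W)
    {μ ν : Fin d → ℤ} (h₀ : ∀ w ∈ W, μ ⬝ᵥ w = 0 → ν ⬝ᵥ w = 0)
    (hpos : ∀ w ∈ W, 0 < μ ⬝ᵥ w → 0 < ν ⬝ᵥ w) : SameFace W μ ν := by
  intro w hw
  rcases lt_trichotomy (μ ⬝ᵥ w) 0 with h | h | h
  · have hν := hpos (-w) (hW.neg_mem w hw) (by rw [dotProduct_neg]; omega)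
    rw [dotProduct_neg] at hν
    rw [Int.sign_eq_neg_one_of_neg h, Int.sign_eq_neg_one_of_neg (by omega)]
  · rw [h, h₀ w hw h]
  · rw [Int.sign_eq_one_of_pos h, Int.sign_eq_one_of_pos (hpos w hw h)]

/-- A polyhedron of rational vectors lying in the same face as `μ`, bounded away from the other
faces. Its vertices provide representatives of that face with small entries. -/
def facePolyhedron (W : Finset (Fin d → ℤ)) (μ : Fin d → ℤ) : Set (Fin d → ℚ) :=
  {y | ∀ w ∈ W, (μ ⬝ᵥ w = 0 → y ⬝ᵥ toRat w = 0) ∧ (0 < μ ⬝ᵥ w → 1 ≤ y ⬝ᵥ toRat w)}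

lemma toRat_mem_facePolyhedron (W : Finset (Fin d → ℤ)) (μ : Fin d → ℤ) :
    toRat μ ∈ facePolyhedron W μ := by
  intro w _
  rw [toRat_dotProduct]
  exact ⟨fun h => by rw [h, Int.cast_zero], fun h => by exact_mod_cast h⟩

section Vertex

variable {W : Finset (Fin d → ℤ)} {μ : Fin d → ℤ} {y z : Fin d → ℚ}

lemma exists_tight_of_neg (hy : y ∈ facePolyhedron W μ)
    (hz₀ : ∀ w ∈ W, μ ⬝ᵥ w = 0 → z ⬝ᵥ toRat w = 0)
    (hneg : ∃ w ∈ W, 0 < μ ⬝ᵥ w ∧ z ⬝ᵥ toRat w < 0) :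
    ∃ t : ℚ, y + t • z ∈ facePolyhedron W μ ∧
      ∃ w ∈ W, z ⬝ᵥ toRat w ≠ 0 ∧ (y + t • z) ⬝ᵥ toRat w = 1 := by
  obtain ⟨w₀, hw₀, hmin⟩ := Finset.exists_min_image
    (W.filter fun w => 0 < μ ⬝ᵥ w ∧ z ⬝ᵥ toRat w < 0)
    (fun w => (y ⬝ᵥ toRat w - 1) / -(z ⬝ᵥ toRat w))
    (by obtain ⟨w, hw⟩ := hneg; exact ⟨w, Finset.mem_filter.2 hw⟩)
  obtain ⟨hw₀, hμ₀, hzw₀⟩ := Finset.mem_filter.1 hw₀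
  set t := (y ⬝ᵥ toRat w₀ - 1) / -(z ⬝ᵥ toRat w₀)
  have ht₀ : 0 ≤ t := div_nonneg (by linarith [(hy w₀ hw₀).2 hμ₀]) (by linarith)
  have hexpand : ∀ w, (y + t • z) ⬝ᵥ toRat w = y ⬝ᵥ toRat w + t * (z ⬝ᵥ toRat w) := by
    intro w
    rw [add_dotProduct, smul_dotProduct, smul_eq_mul]
  refine ⟨t, fun w hw => ⟨fun h => ?_, fun h => ?_⟩, w₀, hw₀, hzw₀.ne, ?_⟩
  · rw [hexpand, (hy w hw).1 h, hz₀ w hw h, mul_zero, add_zero]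
  · rw [hexpand]
    have hyw := (hy w hw).2 h
    rcases lt_or_ge (z ⬝ᵥ toRat w) 0 with hzw | hzw
    · have := hmin w (Finset.mem_filter.2 ⟨hw, h, hzw⟩)
      rw [le_div_iff₀ (by linarith)] at this
      linarith
    · linarith [mul_nonneg ht₀ hzw]
  · have : t * -(z ⬝ᵥ toRat w₀) = y ⬝ᵥ toRat w₀ - 1 := div_mul_cancel₀ _ (by linarith)
    rw [hexpand]
    linarith

lemma IsSymmSpanning.exists_tight (hW : IsSymmSpanning W) (hy : y ∈ facePolyhedron W μ)
    (hz : z ≠ 0) :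
    ∃ t : ℚ, y + t • z ∈ facePolyhedron W μ ∧
      ∃ w ∈ W, z ⬝ᵥ toRat w ≠ 0 ∧ ∃ e : ℤ, |e| ≤ 1 ∧ (y + t • z) ⬝ᵥ toRat w = e := by
  by_cases h₀ : ∃ w ∈ W, μ ⬝ᵥ w = 0 ∧ z ⬝ᵥ toRat w ≠ 0
  · obtain ⟨w, hw, hμw, hzw⟩ := h₀
    exact ⟨0, by simpa using hy, w, hw, hzw, 0, by simp, by simpa using (hy w hw).1 hμw⟩
  push Not at h₀
  obtain ⟨w, hw, hμw, hzw⟩ : ∃ w ∈ W, 0 < μ ⬝ᵥ w ∧ z ⬝ᵥ toRat w ≠ 0 := by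
    obtain ⟨w, hw, hzw⟩ := hW.exists_dot_ne_zero z hz
    rcases lt_or_gt_of_ne (mt (h₀ w hw) hzw) with h | h
    · exact ⟨-w, hW.neg_mem w hw, by rw [dotProduct_neg]; omega, by simpa using hzw⟩
    · exact ⟨w, hw, h, hzw⟩
  rcases lt_or_gt_of_ne hzw with h | h
  · obtain ⟨t, ht, w, hw, hzw, hyw⟩ := exists_tight_of_neg hy h₀ ⟨w, hw, hμw, h⟩
    exact ⟨t, ht, w, hw, hzw, 1, by simp, by simpa using hyw⟩
  · obtain ⟨t, ht, w, hw, hzw, hyw⟩ := exists_tight_of_neg (z := -z) hy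
      (fun w hw h => by rw [neg_dotProduct, h₀ w hw h, neg_zero])
      ⟨w, hw, hμw, by rw [neg_dotProduct]; linarith⟩
    exact ⟨-t, by simpa using ht, w, hw, by simpa using hzw, 1, by simp, by simpa using hyw⟩

lemma exists_ne_zero_forall_dotProduct_eq_zero {k : ℕ} (hk : k < d) (f : Fin k → Fin d → ℚ) :
    ∃ z ≠ 0, ∀ j, z ⬝ᵥ f j = 0 := by
  have hker : LinearMap.ker (Matrix.of f).mulVecLin ≠ ⊥ :=
    LinearMap.ker_ne_bot_of_finrank_lt (by simpa using hk)
  obtain ⟨z, hz, hz₀⟩ := (Submodule.ne_bot_iff _).1 hker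
  exact ⟨z, hz₀, fun j => (dotProduct_comm _ _).trans (congrFun (LinearMap.mem_ker.1 hz) j)⟩

lemma notMem_span_of_dotProduct_ne_zero {k : ℕ} {f : Fin k → Fin d → ℚ} {x : Fin d → ℚ}
    (hf : ∀ j, z ⬝ᵥ f j = 0) (hx : z ⬝ᵥ x ≠ 0) : x ∉ Submodule.span ℚ (Set.range f) := by
  intro hmem
  have hle : Submodule.span ℚ (Set.range f) ≤ LinearMap.ker (dotProductBilin ℚ ℚ z) :=
    Submodule.span_le.2 (by rintro _ ⟨j, rfl⟩; exact hf j)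
  exact hx (hle hmem)

lemma IsSymmSpanning.exists_linearIndependent_tight (hW : IsSymmSpanning W) (μ : Fin d → ℤ)
    {k : ℕ} (hk : k ≤ d) :
    ∃ y ∈ facePolyhedron W μ, ∃ f : Fin k → Fin d → ℤ, (∀ j, f j ∈ W) ∧
      LinearIndependent ℚ (fun j => toRat (f j)) ∧
      ∃ e : Fin k → ℤ, (∀ j, |e j| ≤ 1) ∧ ∀ j, y ⬝ᵥ toRat (f j) = e j := by
  induction k with
  | zero =>
    exact ⟨_, toRat_mem_facePolyhedron W μ, Fin.elim0, fun j => j.elim0,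
      linearIndependent_empty_type, Fin.elim0, fun j => j.elim0, fun j => j.elim0⟩
  | succ k ih =>
    obtain ⟨y, hy, f, hf, hli, e, he, hye⟩ := ih (by omega)
    obtain ⟨z, hz, hzf⟩ := exists_ne_zero_forall_dotProduct_eq_zero hk fun j => toRat (f j)
    obtain ⟨t, ht, w, hw, hzw, e₀, he₀, hyw⟩ := hW.exists_tight hy hz
    refine ⟨_, ht, Fin.cons w f, Fin.cases hw hf, ?_, Fin.cons e₀ e, Fin.cases he₀ he,
      Fin.cases hyw fun j => ?_⟩
    · have hcons : (fun j => toRat ((Fin.cons w f : Fin (k + 1) → Fin d → ℤ) j)) =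
          Fin.cons (toRat w) (fun j => toRat (f j)) :=
        funext (Fin.cases rfl fun _ => rfl)
      rw [hcons]
      exact hli.finCons (notMem_span_of_dotProduct_ne_zero hzf hzw)
    · simp [add_dotProduct, smul_dotProduct, hzf, hye]

end Vertex

lemma toRat_sign_det_smul_cramer {A : Matrix (Fin d) (Fin d) ℤ} {e : Fin d → ℤ} {y : Fin d → ℚ}
    (hy : A.map (Int.cast : ℤ → ℚ) *ᵥ y = toRat e) :
    toRat (A.det.sign • A.cramer e) = |(A.det : ℚ)| • y := by
  have hcramer : toRat (A.cramer e) = (A.det : ℚ) • y := calc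
    toRat (A.cramer e) = A.adjugate.map (Int.cast : ℤ → ℚ) *ᵥ toRat e := by
      ext i
      simp [toRat, Matrix.cramer_eq_adjugate_mulVec, Matrix.mulVec, dotProduct]
    _ = ((A.adjugate * A).map (Int.cast : ℤ → ℚ)) *ᵥ y := by
      rw [← hy, Matrix.mulVec_mulVec, Matrix.map_mul_intCast]
    _ = (A.det : ℚ) • y := by
      rw [Matrix.adjugate_mul, Matrix.smul_one_eq_diagonal, Matrix.diagonal_map Int.cast_zero]
      ext i
      simp [Matrix.mulVec_diagonal]
  rw [toRat_smul, hcramer, smul_smul, ← Int.cast_mul, Int.sign_mul_self_eq_abs, Int.cast_abs]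

lemma abs_sign_det_smul_cramer_le {A : Matrix (Fin d) (Fin d) ℤ} {e : Fin d → ℤ} {D : ℤ}
    (hA : ∀ i j, |A i j| ≤ D) (he : ∀ i, |e i| ≤ D) (i : Fin d) :
    |(A.det.sign • A.cramer e) i| ≤ d.factorial * D ^ d := by
  have hdet : |(A.updateCol i e).det| ≤ d.factorial * D ^ d := by
    simpa using Matrix.det_le (A := A.updateCol i e) (abv := AbsoluteValue.abs) (x := D)
      fun a b => by
        by_cases h : b = i
        · simpa [h] using he a
        · simpa [h] using hA a b
  have hsign : |A.det.sign| ≤ 1 := by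
    rcases Int.sign_trichotomy A.det with h | h | h <;> simp [h]
  calc |(A.det.sign • A.cramer e) i| = |A.det.sign| * |(A.updateCol i e).det| := by
        rw [Pi.smul_apply, smul_eq_mul, abs_mul, Matrix.cramer_apply]
    _ ≤ 1 * |(A.updateCol i e).det| := by gcongr
    _ ≤ d.factorial * D ^ d := by rwa [one_mul]

theorem IsSymmSpanning.exists_sameFace_abs_le {W : Finset (Fin d → ℤ)} (hW : IsSymmSpanning W)
    {D : ℕ} (hD : 1 ≤ D) (hWD : ∀ w ∈ W, ∀ i, |w i| ≤ (D : ℤ)) (μ : Fin d → ℤ) :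
    ∃ ν, SameFace W μ ν ∧ ∀ i, |ν i| ≤ d.factorial * (D : ℤ) ^ d := by
  obtain ⟨y, hy, f, hf, hli, e, he, hye⟩ := hW.exists_linearIndependent_tight μ le_rfl
  have hdet : (0 : ℚ) < |((Matrix.of f).det : ℚ)| := by
    have hunit : IsUnit ((Matrix.of f).map (Int.cast : ℤ → ℚ)) :=
      Matrix.linearIndependent_rows_iff_isUnit.1 hli
    rw [abs_pos, Int.cast_det]
    exact ((Matrix.isUnit_iff_isUnit_det _).1 hunit).ne_zero
  have hν := toRat_sign_det_smul_cramer (A := Matrix.of f) (e := e) (y := y)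
    (funext fun j => (dotProduct_comm _ _).trans (hye j))
  set ν := (Matrix.of f).det.sign • (Matrix.of f).cramer e
  have hdot : ∀ w, ((ν ⬝ᵥ w : ℤ) : ℚ) = |((Matrix.of f).det : ℚ)| * (y ⬝ᵥ toRat w) := by
    intro w
    rw [← toRat_dotProduct, hν, smul_dotProduct, smul_eq_mul]
  refine ⟨ν, hW.sameFace (fun w hw h => ?_) (fun w hw h => ?_), abs_sign_det_smul_cramer_le
    (fun i j => hWD _ (hf i) j) fun i => (he i).trans (by exact_mod_cast hD)⟩
  · have := hdot w
    rw [(hy w hw).1 h, mul_zero] at this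
    exact_mod_cast this
  · have : (0 : ℚ) < ((ν ⬝ᵥ w : ℤ) : ℚ) := by
      rw [hdot]
      exact mul_pos hdet (by linarith [(hy w hw).2 h])
    exact_mod_cast this

section Faces

variable {W C : Finset (Fin d → ℤ)} {μ ν τ σ w : Fin d → ℤ}

lemma SameFace.pos_iff (h : SameFace W μ ν) (hw : w ∈ W) : 0 < μ ⬝ᵥ w ↔ 0 < ν ⬝ᵥ w := by
  rw [← Int.sign_eq_one_iff_pos, ← Int.sign_eq_one_iff_pos, h w hw]

lemma SameFace.eq_zero_iff (h : SameFace W μ ν) (hw : w ∈ W) : μ ⬝ᵥ w = 0 ↔ ν ⬝ᵥ w = 0 := by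
  rw [← Int.sign_eq_zero_iff_zero, h w hw, Int.sign_eq_zero_iff_zero]

/-- The face order: the face containing `τ` lies in the closure of the one containing `σ`
(for symmetric `W`). -/
def FaceLE (W : Finset (Fin d → ℤ)) (τ σ : Fin d → ℤ) : Prop :=
  ∀ w ∈ W, 0 < τ ⬝ᵥ w → 0 < σ ⬝ᵥ w

lemma FaceLE.refl (W : Finset (Fin d → ℤ)) (τ : Fin d → ℤ) : FaceLE W τ τ := fun _ _ h => h

lemma FaceLE.trans (h : FaceLE W τ σ) (h' : FaceLE W σ μ) : FaceLE W τ μ :=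
  fun w hw hpos => h' w hw (h w hw hpos)

lemma FaceLE.neg_of_neg (h : FaceLE W τ σ) (hW : IsSymmSpanning W) (hw : w ∈ W)
    (hneg : τ ⬝ᵥ w < 0) : σ ⬝ᵥ w < 0 := by
  simpa using h (-w) (hW.neg_mem w hw) (by simpa using hneg)

lemma FaceLE.eq_zero_of_eq_zero (h : FaceLE W τ σ) (hW : IsSymmSpanning W) (hw : w ∈ W)
    (h₀ : σ ⬝ᵥ w = 0) : τ ⬝ᵥ w = 0 := by
  rcases lt_trichotomy (τ ⬝ᵥ w) 0 with hτ | hτ | hτ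
  · have := h.neg_of_neg hW hw hτ
    omega
  · exact hτ
  · have := h w hw hτ
    omega

/-- The linear span of the face containing `τ`, cut out by the normals orthogonal to `τ`. -/
def faceSpan (W : Finset (Fin d → ℤ)) (τ : Fin d → ℤ) : Submodule ℚ (Fin d → ℚ) where
  carrier := {y | ∀ w ∈ W, τ ⬝ᵥ w = 0 → y ⬝ᵥ toRat w = 0}
  zero_mem' := fun w _ _ => zero_dotProduct _
  add_mem' := fun hx hy w hw h => by rw [add_dotProduct, hx w hw h, hy w hw h, add_zero]
  smul_mem' := fun a x hx w hw h => by rw [smul_dotProduct, hx w hw h, smul_zero]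

/-- The dimension of the face containing `τ`. -/
noncomputable def faceDim (W : Finset (Fin d → ℤ)) (τ : Fin d → ℤ) : ℕ :=
  Module.finrank ℚ (faceSpan W τ)

lemma faceDim_le (W : Finset (Fin d → ℤ)) (τ : Fin d → ℤ) : faceDim W τ ≤ d := by
  simpa [faceDim] using (faceSpan W τ).finrank_le

lemma toRat_mem_faceSpan_iff : toRat σ ∈ faceSpan W τ ↔ ∀ w ∈ W, τ ⬝ᵥ w = 0 → σ ⬝ᵥ w = 0 :=
  forall₃_congr fun w _ _ => by rw [toRat_dotProduct, Int.cast_eq_zero]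

lemma faceDim_lt (h : ∀ w ∈ W, σ ⬝ᵥ w = 0 → τ ⬝ᵥ w = 0)
    (h' : ∃ w ∈ W, τ ⬝ᵥ w = 0 ∧ σ ⬝ᵥ w ≠ 0) : faceDim W τ < faceDim W σ := by
  refine Submodule.finrank_lt_finrank_of_lt (SetLike.lt_iff_le_and_exists.2
    ⟨fun y hy w hw hσ => hy w hw (h w hw hσ), toRat σ,
      toRat_mem_faceSpan_iff.2 fun _ _ => id, fun hmem => ?_⟩)
  obtain ⟨w, hw, hτ, hσ⟩ := h'
  exact hσ (toRat_mem_faceSpan_iff.1 hmem w hw hτ)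

lemma SameFace.faceDim_eq (h : SameFace W μ ν) : faceDim W μ = faceDim W ν := by
  have : faceSpan W μ = faceSpan W ν :=
    SetLike.ext fun y => forall₂_congr fun w hw => by rw [h.eq_zero_iff hw]
  rw [faceDim, faceDim, this]

end Faces

/-- `C` contains exactly one vector of each nonzero face of the arrangement with normals `W`, and
`M` bounds the products of the vectors in `C` and `W`. -/
structure IsFaceReps (W C : Finset (Fin d → ℤ)) (M : ℤ) : Prop extends IsSymmSpanning W where
  ne_zero : ∀ ν ∈ C, ν ≠ 0
  exists_sameFace : ∀ μ ≠ 0, ∃ ν ∈ C, SameFace W μ ν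
  eq_of_sameFace : ∀ ν ∈ C, ∀ κ ∈ C, SameFace W ν κ → ν = κ
  abs_dot_le : ∀ ν ∈ C, ∀ w ∈ W, |ν ⬝ᵥ w| ≤ M
  one_le : 1 ≤ M

lemma IsFaceReps.eq_of_faceLE {W C : Finset (Fin d → ℤ)} {M : ℤ} (hC : IsFaceReps W C M)
    {τ σ : Fin d → ℤ} (hτ : τ ∈ C) (hσ : σ ∈ C) (h : FaceLE W τ σ)
    (hdim : faceDim W σ ≤ faceDim W τ) : τ = σ := by
  refine hC.eq_of_sameFace τ hτ σ hσ (hC.sameFace (fun w hw h₀ => ?_) h)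
  by_contra hne
  exact hdim.not_gt (faceDim_lt (fun w hw => h.eq_zero_of_eq_zero hC.toIsSymmSpanning hw)
    ⟨w, hw, h₀, hne⟩)

lemma IsFaceReps.faceDim_lt {W C : Finset (Fin d → ℤ)} {M : ℤ} (hC : IsFaceReps W C M)
    {τ σ : Fin d → ℤ} (hτ : τ ∈ C) (hσ : σ ∈ C) (h : FaceLE W τ σ) (hne : τ ≠ σ) :
    faceDim W τ < faceDim W σ :=
  not_le.1 fun hdim => hne (hC.eq_of_faceLE hτ hσ h hdim)

lemma abs_dotProduct_le {a b : Fin d → ℤ} {A B : ℤ} (ha : ∀ i, |a i| ≤ A) (hb : ∀ i, |b i| ≤ B) :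
    |a ⬝ᵥ b| ≤ d * (A * B) := calc
  |a ⬝ᵥ b| ≤ ∑ i, |a i * b i| := Finset.abs_sum_le_sum_abs _ _
  _ ≤ ∑ _i : Fin d, A * B := Finset.sum_le_sum fun i _ => by
    rw [abs_mul]
    exact mul_le_mul (ha i) (hb i) (abs_nonneg _) ((abs_nonneg _).trans (ha i))
  _ = d * (A * B) := by simp

/-- The integer vectors of norm at most `D`. -/
noncomputable def box (d D : ℕ) : Finset (Fin d → ℤ) :=
  Finset.Icc (fun _ => -(D : ℤ)) (fun _ => (D : ℤ))

lemma mem_box {D : ℕ} {w : Fin d → ℤ} : w ∈ box d D ↔ ∀ i, |w i| ≤ (D : ℤ) := by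
  simp only [box, Finset.mem_Icc, Pi.le_def, abs_le, forall_and]

lemma card_box (d D : ℕ) : (box d D).card = (2 * D + 1) ^ d := by
  simp only [box, Pi.card_Icc, Int.card_Icc, Finset.prod_const, Finset.card_univ, Fintype.card_fin]
  congr 1
  omega

lemma isSymmSpanning_box {D : ℕ} (hD : 1 ≤ D) : IsSymmSpanning (box d D) where
  neg_mem w hw := mem_box.2 fun i => by simpa using mem_box.1 hw i
  exists_dot_ne_zero y hy := by
    obtain ⟨i, hi⟩ := Function.ne_iff.1 hy
    refine ⟨Pi.single i 1, mem_box.2 fun j => ?_, ?_⟩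
    · by_cases h : j = i
      · subst h
        simpa using mod_cast hD
      · simp [h]
    · have : toRat (Pi.single i 1 : Fin d → ℤ) = Pi.single i 1 := by
        ext j
        by_cases h : j = i <;> simp [toRat, h]
      simpa [this] using hi

theorem exists_isFaceReps_box {D : ℕ} (hD : 1 ≤ D) :
    ∃ C, IsFaceReps (box d D) C ((d + 1).factorial * (D : ℤ) ^ (d + 1)) := by
  classical
  have hW := isSymmSpanning_box (d := d) hD
  let small := (box d (d.factorial * D ^ d)).filter (· ≠ 0)
  let signs : (Fin d → ℤ) → box d D → ℤ := fun μ w => (μ ⬝ᵥ (w : Fin d → ℤ)).sign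
  have hsigns : ∀ μ ν, SameFace (box d D) μ ν ↔ signs μ = signs ν := fun μ ν => by
    simp only [SameFace, signs, funext_iff, Subtype.forall]
  obtain ⟨C, hCsub, hCbij⟩ := Set.exists_subset_bijOn (small : Set (Fin d → ℤ)) signs
  have hCfin : C.Finite := small.finite_toSet.subset hCsub
  have hCsmall : ∀ ν ∈ C, (∀ i, |ν i| ≤ d.factorial * (D : ℤ) ^ d) ∧ ν ≠ 0 := by
    intro ν hν
    obtain ⟨hbox, hne⟩ := Finset.mem_filter.1 (hCsub hν)
    exact ⟨by simpa using mem_box.1 hbox, hne⟩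
  refine ⟨hCfin.toFinset, hW, fun ν hν => (hCsmall ν (hCfin.mem_toFinset.1 hν)).2,
    fun μ hμ => ?_, fun ν hν κ hκ h => ?_, fun ν hν w hw => ?_, ?_⟩
  · obtain ⟨ν, hμν, hν⟩ := hW.exists_sameFace_abs_le hD (fun w hw => mem_box.1 hw) μ
    have hne : ν ≠ 0 := by
      rintro rfl
      obtain ⟨w, hw, hμw⟩ := hW.exists_int_dot_ne_zero hμ
      exact hμw ((hμν.eq_zero_iff hw).2 (zero_dotProduct _))
    have hmem : signs ν ∈ signs '' small :=
      ⟨ν, Finset.mem_filter.2 ⟨mem_box.2 (by simpa using hν), hne⟩, rfl⟩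
    obtain ⟨κ, hκ, hκν⟩ := hCbij.surjOn hmem
    exact ⟨κ, hCfin.mem_toFinset.2 hκ, (hsigns _ _).2 (((hsigns _ _).1 hμν).trans hκν.symm)⟩
  · exact hCbij.injOn (hCfin.mem_toFinset.1 hν) (hCfin.mem_toFinset.1 hκ) ((hsigns _ _).1 h)
  · calc |ν ⬝ᵥ w| ≤ d * (d.factorial * (D : ℤ) ^ d * D) :=
          abs_dotProduct_le (hCsmall ν (hCfin.mem_toFinset.1 hν)).1 (mem_box.1 hw)
      _ ≤ (d + 1 : ℕ) * (d.factorial * (D : ℤ) ^ d * D) := by gcongr; omega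
      _ = (d + 1).factorial * (D : ℤ) ^ (d + 1) := by rw [Nat.factorial_succ]; push_cast; ring
  · exact_mod_cast Nat.mul_pos (Nat.factorial_pos _) (Nat.pow_pos hD)

/-- The support function of the zonotope `∑ w ∈ W, [-w, w]`. -/
def zonoSupport (W : Finset (Fin d → ℤ)) (μ : Fin d → ℤ) : ℤ := ∑ w ∈ W, |μ ⬝ᵥ w|

section ZonoSupport

variable {W : Finset (Fin d → ℤ)} {μ ν w : Fin d → ℤ}

lemma zonoSupport_zero (W : Finset (Fin d → ℤ)) : zonoSupport W (0 : Fin d → ℤ) = 0 := by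
  simp [zonoSupport]

lemma abs_dot_le_zonoSupport (hw : w ∈ W) (μ : Fin d → ℤ) : |μ ⬝ᵥ w| ≤ zonoSupport W μ :=
  Finset.single_le_sum (f := fun w => |μ ⬝ᵥ w|) (fun _ _ => abs_nonneg _) hw

lemma IsSymmSpanning.zonoSupport_pos (hW : IsSymmSpanning W) (hμ : μ ≠ 0) :
    0 < zonoSupport W μ := by
  obtain ⟨w, hw, hne⟩ := hW.exists_int_dot_ne_zero hμ
  exact (abs_pos.2 hne).trans_le (abs_dot_le_zonoSupport hw μ)

lemma zonoSupport_add_le_of_pos_of_neg (hw : w ∈ W) (hμ : 0 < μ ⬝ᵥ w) (hν : ν ⬝ᵥ w < 0) :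
    zonoSupport W (μ + ν) + 2 ≤ zonoSupport W μ + zonoSupport W ν := by
  have hrest : ∑ w ∈ W.erase w, |(μ + ν) ⬝ᵥ w| ≤ ∑ w ∈ W.erase w, (|μ ⬝ᵥ w| + |ν ⬝ᵥ w|) :=
    Finset.sum_le_sum fun w _ => by rw [add_dotProduct]; exact abs_add_le _ _
  have hstrict : |(μ + ν) ⬝ᵥ w| + 2 ≤ |μ ⬝ᵥ w| + |ν ⬝ᵥ w| := by
    rw [add_dotProduct, abs_of_pos hμ, abs_of_neg hν, ← le_sub_iff_add_le, abs_le]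
    omega
  simp only [zonoSupport]
  rw [← Finset.sum_add_distrib, ← Finset.add_sum_erase _ _ hw,
    ← Finset.add_sum_erase W (fun w => |μ ⬝ᵥ w| + |ν ⬝ᵥ w|) hw]
  linarith

lemma IsSymmSpanning.zonoSupport_add (hW : IsSymmSpanning W)
    (h : ∀ w ∈ W, 0 < μ ⬝ᵥ w → 0 ≤ ν ⬝ᵥ w) :
    zonoSupport W (μ + ν) = zonoSupport W μ + zonoSupport W ν := by
  simp only [zonoSupport]
  rw [← Finset.sum_add_distrib]
  refine Finset.sum_congr rfl fun w hw => ?_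
  rw [add_dotProduct]
  rcases lt_trichotomy (μ ⬝ᵥ w) 0 with hμ | hμ | hμ
  · have := h (-w) (hW.neg_mem w hw) (by simpa using hμ)
    rw [dotProduct_neg] at this
    rw [abs_of_neg hμ, abs_of_nonpos (a := ν ⬝ᵥ w) (by omega), abs_of_neg (by omega)]
    ring
  · simp [hμ]
  · rw [abs_of_pos hμ, abs_of_nonneg (h w hw hμ), abs_of_pos (by linarith [h w hw hμ])]

end ZonoSupport

lemma exists_forall_mul_le_mul {ι : Type*} {s : Finset ι} {f g : ι → ℤ} (hf : ∀ i ∈ s, 0 ≤ f i)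
    (hg : ∀ i ∈ s, 0 ≤ g i) (hpos : ∃ i ∈ s, 0 < g i) :
    ∃ i ∈ s, 0 < g i ∧ ∀ j ∈ s, f i * g j ≤ f j * g i := by
  obtain ⟨i, hi, hmin⟩ := Finset.exists_min_image (s.filter fun i => 0 < g i)
    (fun i => (f i : ℚ) / g i) (by obtain ⟨i, hi⟩ := hpos; exact ⟨i, Finset.mem_filter.2 hi⟩)
  obtain ⟨hi, hgi⟩ := Finset.mem_filter.1 hi
  refine ⟨i, hi, hgi, fun j hj => ?_⟩
  rcases (hg j hj).eq_or_lt with h | h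
  · simpa [← h] using mul_nonneg (hf j hj) hgi.le
  · have := hmin j (Finset.mem_filter.2 ⟨hj, h⟩)
    rw [div_le_div_iff₀ (by exact_mod_cast hgi) (by exact_mod_cast h)] at this
    exact_mod_cast this

lemma mul_abs_eq_of_sign_eq {m v p q : ℤ} (hs : m.sign = v.sign) (hle : p * |v| ≤ q * |m|) :
    q * |m| = p * |v| + |q * m - p * v| := by
  rcases lt_trichotomy m 0 with h | rfl | h
  · have hv : v < 0 := by rwa [← Int.sign_eq_neg_one_iff_neg, ← hs, Int.sign_eq_neg_one_iff_neg]
    rw [abs_of_neg h, abs_of_neg hv] at *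
    rw [abs_of_nonpos (by linarith)]
    ring
  · have hv : v = 0 := by simpa using hs.symm
    simp [hv]
  · have hv : 0 < v := by rwa [← Int.sign_eq_one_iff_pos, ← hs, Int.sign_eq_one_iff_pos]
    rw [abs_of_pos h, abs_of_pos hv] at *
    rw [abs_of_nonneg (by linarith)]
    ring

/-- `q • μ = p • ν + μ'` splits a multiple of `μ` along the ray of its representative `ν`, with a
remainder `μ'` in a proper face, on which `zonoSupport` is additive; `Q` controls the size. -/
structure IsRayDecomp (W : Finset (Fin d → ℤ)) (Q : ℤ) (μ ν μ' : Fin d → ℤ) (p q : ℤ) : Prop where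
  smul_eq : q • μ = p • ν + μ'
  mul_zonoSupport : q * zonoSupport W μ = p * zonoSupport W ν + zonoSupport W μ'
  faceDim_lt : faceDim W μ' < faceDim W μ
  abs_dot_le : ∀ w ∈ W, |μ' ⬝ᵥ w| ≤ q * Q
  one_le_left : 1 ≤ p
  left_le : p ≤ q * Q
  one_le_right : 1 ≤ q

section Decomposition

variable {W C : Finset (Fin d → ℤ)} {M Q R L : ℤ} {μ ν μ' : Fin d → ℤ} {p q : ℤ}

lemma IsRayDecomp.smul_dot (h : IsRayDecomp W Q μ ν μ' p q) (x : Fin d → ℤ) :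
    q * (μ ⬝ᵥ x) = p * (ν ⬝ᵥ x) + μ' ⬝ᵥ x := by
  simpa only [smul_dotProduct, add_dotProduct, smul_eq_mul] using congrArg (· ⬝ᵥ x) h.smul_eq

theorem IsFaceReps.exists_isRayDecomp (hC : IsFaceReps W C M) (hμ : μ ≠ 0)
    (hQ : ∀ w ∈ W, |μ ⬝ᵥ w| ≤ Q) :
    ∃ ν ∈ C, SameFace W μ ν ∧ ∃ μ' p q, IsRayDecomp W Q μ ν μ' p q ∧ q ≤ M := by
  obtain ⟨ν, hν, hμν⟩ := hC.exists_sameFace μ hμ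
  obtain ⟨w₀, hw₀, hνw₀, hmin⟩ := exists_forall_mul_le_mul (s := W) (f := fun w => |μ ⬝ᵥ w|)
    (g := fun w => |ν ⬝ᵥ w|) (fun _ _ => abs_nonneg _) (fun _ _ => abs_nonneg _) (by
      obtain ⟨w, hw, hne⟩ := hC.exists_int_dot_ne_zero (hC.ne_zero ν hν)
      exact ⟨w, hw, abs_pos.2 hne⟩)
  have hμw₀ : μ ⬝ᵥ w₀ ≠ 0 := fun h => (abs_pos.1 hνw₀) ((hμν.eq_zero_iff hw₀).1 h)
  set p := |μ ⬝ᵥ w₀|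
  set q := |ν ⬝ᵥ w₀|
  have hdot : ∀ w, (q • μ - p • ν) ⬝ᵥ w = q * (μ ⬝ᵥ w) - p * (ν ⬝ᵥ w) := fun w => by
    rw [sub_dotProduct, smul_dotProduct, smul_dotProduct, smul_eq_mul, smul_eq_mul]
  have habs : ∀ w ∈ W, q * |μ ⬝ᵥ w| = p * |ν ⬝ᵥ w| + |(q • μ - p • ν) ⬝ᵥ w| := fun w hw => by
    rw [hdot]
    exact mul_abs_eq_of_sign_eq (hμν w hw) ((hmin w hw).trans_eq (mul_comm _ _))
  have hp : 0 < p := abs_pos.2 hμw₀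
  refine ⟨ν, hν, hμν, q • μ - p • ν, p, q, ⟨by abel, ?_, ?_, fun w hw => ?_, hp,
    (hQ w₀ hw₀).trans (le_mul_of_one_le_left ((abs_nonneg _).trans (hQ w₀ hw₀)) hνw₀), hνw₀⟩,
    hC.abs_dot_le ν hν w₀ hw₀⟩
  · simp only [zonoSupport, Finset.mul_sum]
    rw [← Finset.sum_add_distrib]
    exact Finset.sum_congr rfl habs
  · refine MWG.faceDim_lt (fun w hw h => ?_) ⟨w₀, hw₀, ?_, hμw₀⟩
    · rw [hdot, h, (hμν.eq_zero_iff hw).1 h, mul_zero, mul_zero, sub_zero]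
    · have := habs w₀ hw₀
      rw [mul_comm q] at this
      exact abs_eq_zero.1 (by linarith)
  · calc |(q • μ - p • ν) ⬝ᵥ w| ≤ q * |μ ⬝ᵥ w| := by
          linarith [habs w hw, mul_nonneg hp.le (abs_nonneg (ν ⬝ᵥ w))]
      _ ≤ q * Q := by gcongr; exact hQ w hw

lemma IsFaceReps.dot_le_of_forall_reps (hC : IsFaceReps W C M) {x : Fin d → ℤ} (hL : 0 ≤ L)
    (hx : ∀ ν ∈ C, ν ⬝ᵥ x ≤ R * zonoSupport W ν + L) (hQ₀ : 0 ≤ Q)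
    (hQ : ∀ w ∈ W, |μ ⬝ᵥ w| ≤ Q) :
    μ ⬝ᵥ x ≤ R * zonoSupport W μ + Q * faceDim W μ * L := by
  induction hk : faceDim W μ using Nat.strong_induction_on generalizing μ Q with
  | _ k ih =>
    subst hk
    by_cases hμ : μ = 0
    · subst hμ
      rw [zero_dotProduct, zonoSupport_zero, mul_zero, zero_add]
      positivity
    obtain ⟨ν, hν, -, μ', p, q, h, -⟩ := hC.exists_isRayDecomp hμ hQ
    have hq : 0 ≤ q := zero_le_one.trans h.one_le_right
    have hdim : (faceDim W μ' : ℤ) + 1 ≤ faceDim W μ := by exact_mod_cast h.faceDim_lt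
    refine le_of_mul_le_mul_left ?_ (zero_lt_one.trans_le h.one_le_right)
    calc q * (μ ⬝ᵥ x) = p * (ν ⬝ᵥ x) + μ' ⬝ᵥ x := h.smul_dot x
      _ ≤ p * (R * zonoSupport W ν + L) +
          (R * zonoSupport W μ' + q * Q * faceDim W μ' * L) := by
        have hp := h.one_le_left
        gcongr
        · exact hx ν hν
        · exact ih _ h.faceDim_lt (by positivity) h.abs_dot_le rfl
      _ = R * (q * zonoSupport W μ) + p * L + q * Q * faceDim W μ' * L := by
        rw [h.mul_zonoSupport]
        ring
      _ ≤ R * (q * zonoSupport W μ) + q * Q * L + q * Q * faceDim W μ' * L := by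
        gcongr
        exact h.left_le
      _ = R * (q * zonoSupport W μ) + q * Q * (faceDim W μ' + 1) * L := by ring
      _ ≤ R * (q * zonoSupport W μ) + q * Q * faceDim W μ * L := by gcongr
      _ = q * (R * zonoSupport W μ + Q * faceDim W μ * L) := by ring

end Decomposition

/-- The support function of the zonotope `R • ∑ w ∈ W, [-w, w]`, lowered by `δ k` on the faces of
dimension `k`. -/
noncomputable def erodedSupport (W : Finset (Fin d → ℤ)) (R : ℤ) (δ : ℕ → ℤ) (ν : Fin d → ℤ) : ℤ :=
  R * zonoSupport W ν - δ (faceDim W ν)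

/-- Depths `δ` for which the constraints `ν ⬝ᵥ x ≤ erodedSupport W R δ ν` that are tight up to `L`
at a point `x` form a flag of faces. -/
structure IsErosion (d : ℕ) (M R L : ℤ) (δ : ℕ → ℤ) : Prop where
  tolerance_pos : 0 < L
  lt_depth : ∀ k, 2 * L + 2 * M * d * L < δ k
  mul_depth_le : ∀ j k, j < k → 3 * M * δ j ≤ δ k
  depth_add_le : ∀ k ≤ d, δ k + (2 * L + 2 * M * d * L) ≤ R

section Erosion

variable {W C : Finset (Fin d → ℤ)} {M Q R L Y : ℤ} {δ : ℕ → ℤ} {μ τ τ' x : Fin d → ℤ}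

lemma IsErosion.depth_pos (hδ : IsErosion d M R L δ) (hM : 0 ≤ M) (k : ℕ) : 0 < δ k := by
  have hL := hδ.tolerance_pos
  exact lt_of_le_of_lt (by positivity) (hδ.lt_depth k)

lemma IsErosion.erodedSupport_pos (hδ : IsErosion d M R L δ) (hC : IsFaceReps W C M) (hτ : τ ∈ C) :
    0 < erodedSupport W R δ τ := by
  have hM : 0 ≤ M := zero_le_one.trans hC.one_le
  have hL := hδ.tolerance_pos
  have hdepth := hδ.depth_add_le _ (faceDim_le W τ)
  have hR : 0 < R := lt_of_lt_of_le (by have := hδ.depth_pos hM (faceDim W τ); positivity) hdepth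
  have hzono : 1 ≤ zonoSupport W τ := hC.zonoSupport_pos (hC.ne_zero τ hτ)
  have hslack : 0 < 2 * L + 2 * M * d * L := by positivity
  have := le_mul_of_one_le_right hR.le hzono
  simp only [erodedSupport]
  linarith

lemma IsErosion.dot_add_le (hδ : IsErosion d M R L δ) (hC : IsFaceReps W C M)
    (hx : ∀ ν ∈ C, ν ⬝ᵥ x ≤ erodedSupport W R δ ν + L) (hμ : μ ≠ 0)
    (hQ₀ : 0 ≤ Q) (hQ : ∀ w ∈ W, |μ ⬝ᵥ w| ≤ Q) (hY₀ : 0 ≤ Y) (hY : M * Y ≤ δ (faceDim W μ)) :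
    μ ⬝ᵥ x + Y ≤ R * zonoSupport W μ + Q * d * L := by
  obtain ⟨ν, hν, hμν, μ', p, q, h, hqM⟩ := hC.exists_isRayDecomp hμ hQ
  have hL := hδ.tolerance_pos.le
  have hδ₀ := fun k => (hδ.depth_pos (zero_le_one.trans hC.one_le) k).le
  have hp : 0 ≤ p := zero_le_one.trans h.one_le_left
  have hq : 0 ≤ q := zero_le_one.trans h.one_le_right
  have hdim : (faceDim W μ' : ℤ) + 1 ≤ d := by exact_mod_cast h.faceDim_lt.trans_le (faceDim_le W μ)
  have hray : ν ⬝ᵥ x ≤ R * zonoSupport W ν - δ (faceDim W μ) + L := by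
    rw [hμν.faceDim_eq]
    exact hx ν hν
  have hrest : μ' ⬝ᵥ x ≤ R * zonoSupport W μ' + q * Q * faceDim W μ' * L := by
    refine hC.dot_le_of_forall_reps hL (fun κ hκ => (hx κ hκ).trans ?_) (by positivity) h.abs_dot_le
    simp only [erodedSupport]
    linarith [hδ₀ (faceDim W κ)]
  have hdepth : q * Y ≤ p * δ (faceDim W μ) := calc
    q * Y ≤ M * Y := by gcongr
    _ ≤ δ (faceDim W μ) := hY
    _ ≤ p * δ (faceDim W μ) := le_mul_of_one_le_left (hδ₀ _) h.one_le_left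
  refine le_of_mul_le_mul_left ?_ (zero_lt_one.trans_le h.one_le_right)
  calc q * (μ ⬝ᵥ x + Y) = p * (ν ⬝ᵥ x) + μ' ⬝ᵥ x + q * Y := by rw [mul_add, h.smul_dot x]
    _ ≤ p * (R * zonoSupport W ν - δ (faceDim W μ) + L) +
        (R * zonoSupport W μ' + q * Q * faceDim W μ' * L) + p * δ (faceDim W μ) := by gcongr
    _ = R * (q * zonoSupport W μ) + p * L + q * Q * faceDim W μ' * L := by
      rw [h.mul_zonoSupport]
      ring
    _ ≤ R * (q * zonoSupport W μ) + q * Q * L + q * Q * faceDim W μ' * L := by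
      gcongr
      exact h.left_le
    _ = R * (q * zonoSupport W μ) + q * Q * (faceDim W μ' + 1) * L := by ring
    _ ≤ R * (q * zonoSupport W μ) + q * Q * d * L := by gcongr
    _ = q * (R * zonoSupport W μ + Q * d * L) := by ring

lemma IsFaceReps.abs_add_dot_le (hC : IsFaceReps W C M) (hτ : τ ∈ C) (hτ' : τ' ∈ C) :
    ∀ w ∈ W, |(τ + τ') ⬝ᵥ w| ≤ 2 * M := fun w hw => by
  rw [add_dotProduct]
  linarith [abs_add_le (τ ⬝ᵥ w) (τ' ⬝ᵥ w), hC.abs_dot_le τ hτ w hw, hC.abs_dot_le τ' hτ' w hw]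

lemma IsErosion.nonneg_of_pos_of_tight (hδ : IsErosion d M R L δ) (hC : IsFaceReps W C M)
    (hx : ∀ ν ∈ C, ν ⬝ᵥ x ≤ erodedSupport W R δ ν + L) (hτ : τ ∈ C) (hτ' : τ' ∈ C)
    (htight : erodedSupport W R δ τ - L ≤ τ ⬝ᵥ x) (htight' : erodedSupport W R δ τ' - L ≤ τ' ⬝ᵥ x) :
    ∀ w ∈ W, 0 < τ ⬝ᵥ w → 0 ≤ τ' ⬝ᵥ w := by
  intro w hw hpos
  by_contra! hneg
  have hM : 0 ≤ M := zero_le_one.trans hC.one_le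
  have hL := hδ.tolerance_pos
  have hslack : 0 < 2 * L + 2 * M * d * L := by positivity
  have hdepth := hδ.depth_add_le _ (faceDim_le W τ)
  have hdepth' := hδ.depth_add_le _ (faceDim_le W τ')
  have hR : 0 ≤ R := by linarith [hδ.depth_pos hM (faceDim W τ)]
  have hupper := hC.dot_le_of_forall_reps (x := x) (R := R) hL.le (fun ν hν => (hx ν hν).trans (by
    simp only [erodedSupport]
    linarith [hδ.depth_pos hM (faceDim W ν)])) (by positivity) (hC.abs_add_dot_le hτ hτ')
  have hdim : 2 * M * (faceDim W (τ + τ') : ℤ) * L ≤ 2 * M * d * L := by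
    gcongr
    exact faceDim_le W _
  have hgap := mul_le_mul_of_nonneg_left (zonoSupport_add_le_of_pos_of_neg hw hpos hneg) hR
  rw [add_dotProduct] at hupper
  simp only [erodedSupport] at htight htight'
  linarith

theorem IsErosion.faceLE_total_of_tight (hδ : IsErosion d M R L δ) (hC : IsFaceReps W C M)
    (hx : ∀ ν ∈ C, ν ⬝ᵥ x ≤ erodedSupport W R δ ν + L) (hτ : τ ∈ C) (hτ' : τ' ∈ C)
    (htight : erodedSupport W R δ τ - L ≤ τ ⬝ᵥ x) (htight' : erodedSupport W R δ τ' - L ≤ τ' ⬝ᵥ x) :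
    FaceLE W τ τ' ∨ FaceLE W τ' τ := by
  have hpos := hδ.nonneg_of_pos_of_tight hC hx hτ hτ' htight htight'
  have hpos' := hδ.nonneg_of_pos_of_tight hC hx hτ' hτ htight' htight
  have hadd := hC.zonoSupport_add hpos
  have hne : τ + τ' ≠ 0 := fun h => by
    rw [h, zonoSupport_zero] at hadd
    linarith [hC.zonoSupport_pos (hC.ne_zero τ hτ), hC.zonoSupport_pos (hC.ne_zero τ' hτ')]
  obtain ⟨σ, hσ, hsame⟩ := hC.exists_sameFace _ hne
  have hle : FaceLE W τ σ := fun w hw h => (hsame.pos_iff hw).1 (by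
    rw [add_dotProduct]
    linarith [hpos w hw h])
  have hle' : FaceLE W τ' σ := fun w hw h => (hsame.pos_iff hw).1 (by
    rw [add_dotProduct]
    linarith [hpos' w hw h])
  by_cases hτσ : τ = σ
  · exact .inr (hτσ ▸ hle')
  by_cases hτσ' : τ' = σ
  · exact .inl (hτσ' ▸ hle)
  exfalso
  have hdim := hδ.mul_depth_le _ _ (hC.faceDim_lt hτ hσ hle hτσ)
  have hdim' := hδ.mul_depth_le _ _ (hC.faceDim_lt hτ' hσ hle' hτσ')
  rw [← hsame.faceDim_eq] at hdim hdim'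
  obtain ⟨m, hm, hm', hlt, hmσ⟩ : ∃ m, δ (faceDim W τ) ≤ m ∧ δ (faceDim W τ') ≤ m ∧
      2 * L + 2 * M * d * L < m ∧ 3 * M * m ≤ δ (faceDim W (τ + τ')) := by
    rcases le_total (δ (faceDim W τ)) (δ (faceDim W τ')) with h | h
    exacts [⟨_, h, le_rfl, hδ.lt_depth _, hdim'⟩, ⟨_, le_rfl, h, hδ.lt_depth _, hdim⟩]
  have hM : 0 ≤ M := zero_le_one.trans hC.one_le
  have hm₀ := (hδ.depth_pos hM (faceDim W τ)).trans_le hm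
  have := hδ.dot_add_le hC hx hne (by positivity) (hC.abs_add_dot_le hτ hτ')
    (Y := 3 * m) (by positivity) (by linarith)
  rw [hadd, add_dotProduct] at this
  simp only [erodedSupport] at htight htight'
  linarith

end Erosion

/-- A flag: a set of representatives of faces totally ordered by `FaceLE`. -/
structure IsFlag (W C act : Finset (Fin d → ℤ)) : Prop where
  subset : act ⊆ C
  total : ∀ τ ∈ act, ∀ σ ∈ act, FaceLE W τ σ ∨ FaceLE W σ τ

open Classical in
/-- The faces of `act` in the closure of the face of `τ`. -/
noncomputable def lowerFaces (W act : Finset (Fin d → ℤ)) (τ : Fin d → ℤ) :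
    Finset (Fin d → ℤ) :=
  act.filter (FaceLE W · τ)

/-- The weighted sum of the faces in `S` whose dot products compare vectors lexicographically,
low-dimensional faces first, when `N` is large. -/
noncomputable def lexVec (W : Finset (Fin d → ℤ)) (N : ℤ) (S : Finset (Fin d → ℤ)) : Fin d → ℤ :=
  ∑ σ ∈ S, N ^ (d - faceDim W σ) • σ

/-- The support function of `F`. For `F = ∅` it takes the junk value `0`. -/
noncomputable def finSupport (F : Finset (Fin d → ℤ)) (μ : Fin d → ℤ) : ℤ :=
  sSup ((μ ⬝ᵥ ·) '' (F : Set (Fin d → ℤ)))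

lemma abs_sum_pow_mul_lt {ι : Type*} {S : Finset ι} {e : ι → ℕ} {f : ι → ℤ} {N : ℤ} {m : ℕ}
    (hN : 1 ≤ N) (he : Set.InjOn e S) (hm : ∀ i ∈ S, e i < m) (hf : ∀ i ∈ S, |f i| < N) :
    |∑ i ∈ S, N ^ e i * f i| < N ^ m := by
  classical
  rw [← Int.le_sub_one_iff]
  have hN₀ : 0 ≤ N := by omega
  calc |∑ i ∈ S, N ^ e i * f i| ≤ ∑ i ∈ S, |N ^ e i * f i| := Finset.abs_sum_le_sum_abs _ _
    _ ≤ ∑ i ∈ S, N ^ e i * (N - 1) := Finset.sum_le_sum fun i hi => by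
      rw [abs_mul, abs_of_nonneg (pow_nonneg hN₀ _)]
      exact mul_le_mul_of_nonneg_left (Int.le_sub_one_of_lt (hf i hi)) (pow_nonneg hN₀ _)
    _ = (∑ j ∈ S.image e, N ^ j) * (N - 1) := by rw [Finset.sum_image he, Finset.sum_mul]
    _ ≤ (∑ j ∈ Finset.range m, N ^ j) * (N - 1) := by
      refine mul_le_mul_of_nonneg_right (Finset.sum_le_sum_of_subset_of_nonneg ?_
        fun _ _ _ => pow_nonneg hN₀ _) (by omega)
      exact Finset.image_subset_iff.2 fun i hi => Finset.mem_range.2 (hm i hi)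
    _ = N ^ m - 1 := geom_sum_mul N m

section Flag

variable {W C act act₂ : Finset (Fin d → ℤ)} {M N : ℤ} {τ σ x w : Fin d → ℤ}

lemma mem_lowerFaces : σ ∈ lowerFaces W act τ ↔ σ ∈ act ∧ FaceLE W σ τ := by
  simp [lowerFaces]

lemma self_mem_lowerFaces (hτ : τ ∈ act) : τ ∈ lowerFaces W act τ :=
  mem_lowerFaces.2 ⟨hτ, FaceLE.refl W τ⟩

lemma lowerFaces_lowerFaces (h : FaceLE W σ τ) :
    lowerFaces W (lowerFaces W act τ) σ = lowerFaces W act σ := by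
  ext κ
  simp only [mem_lowerFaces, and_assoc]
  exact and_congr_right fun _ => and_iff_right_of_imp fun hκ => hκ.trans h

lemma lowerFaces_congr_of_faceLE (h : FaceLE W σ τ)
    (heq : lowerFaces W act τ = lowerFaces W act₂ τ) :
    lowerFaces W act σ = lowerFaces W act₂ σ := by
  rw [← lowerFaces_lowerFaces h, heq, lowerFaces_lowerFaces h]

lemma lexVec_dot (S : Finset (Fin d → ℤ)) (x : Fin d → ℤ) :
    lexVec W N S ⬝ᵥ x = ∑ σ ∈ S, N ^ (d - faceDim W σ) * (σ ⬝ᵥ x) := by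
  simp only [lexVec, sum_dotProduct, smul_dotProduct, smul_eq_mul]

namespace IsFlag

lemma injOn_faceDim (h : IsFlag W C act) (hC : IsFaceReps W C M) :
    Set.InjOn (faceDim W) act := fun τ hτ σ hσ heq => by
  rcases h.total τ hτ σ hσ with hle | hle
  · exact hC.eq_of_faceLE (h.subset hτ) (h.subset hσ) hle heq.ge
  · exact (hC.eq_of_faceLE (h.subset hσ) (h.subset hτ) hle heq.le).symm

lemma card_lowerFaces_erase_le (h : IsFlag W C act) (hC : IsFaceReps W C M) (hτ : τ ∈ act) :
    (((lowerFaces W act τ).erase τ).card : ℤ) ≤ d := by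
  have hmem : ∀ σ ∈ (lowerFaces W act τ).erase τ, σ ≠ τ ∧ σ ∈ act ∧ FaceLE W σ τ := fun σ hσ => by
    rwa [Finset.mem_erase, mem_lowerFaces] at hσ
  have hcard := Finset.card_le_card_of_injOn (t := Finset.range (faceDim W τ)) (faceDim W)
    (fun σ hσ => by
      obtain ⟨hne, hact, hle⟩ := hmem σ hσ
      exact Finset.mem_coe.2 (Finset.mem_range.2
        (hC.faceDim_lt (h.subset hact) (h.subset hτ) hle hne)))
    ((h.injOn_faceDim hC).mono fun σ hσ => (hmem σ hσ).2.1)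
  rw [Finset.card_range] at hcard
  exact_mod_cast hcard.trans (faceDim_le W τ)

lemma lexVec_lowerFaces_dot_nonpos (h : IsFlag W C act) (hC : IsFaceReps W C M) (hN : 1 ≤ N)
    (hx : ∀ σ ∈ act, |σ ⬝ᵥ x| < N) (hτ : τ ∈ act) (hle : lexVec W N act ⬝ᵥ x ≤ 0) :
    lexVec W N (lowerFaces W act τ) ⬝ᵥ x ≤ 0 := by
  classical
  have hdim := faceDim_le W (d := d)
  have hdvd : N ^ (d - faceDim W τ) ∣ lexVec W N (lowerFaces W act τ) ⬝ᵥ x := by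
    rw [lexVec_dot]
    refine Finset.dvd_sum fun σ hσ => Dvd.dvd.mul_right (pow_dvd_pow N ?_) _
    obtain ⟨hσ, hστ⟩ := mem_lowerFaces.1 hσ
    rcases eq_or_ne σ τ with rfl | hne
    · rfl
    · exact Nat.sub_le_sub_left (hC.faceDim_lt (h.subset hσ) (h.subset hτ) hστ hne).le d
  have hhigh : |lexVec W N (act \ lowerFaces W act τ) ⬝ᵥ x| < N ^ (d - faceDim W τ) := by
    rw [lexVec_dot]
    refine abs_sum_pow_mul_lt hN (fun σ hσ κ hκ heq => ?_) (fun σ hσ => ?_)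
      fun σ hσ => hx σ (Finset.mem_sdiff.1 hσ).1
    · refine h.injOn_faceDim hC (Finset.mem_sdiff.1 hσ).1 (Finset.mem_sdiff.1 hκ).1 ?_
      have := hdim σ
      have := hdim κ
      omega
    · obtain ⟨hσ, hστ⟩ := Finset.mem_sdiff.1 hσ
      have hnle : ¬FaceLE W σ τ := fun hle => hστ (mem_lowerFaces.2 ⟨hσ, hle⟩)
      have := hC.faceDim_lt (h.subset hτ) (h.subset hσ) ((h.total σ hσ τ hτ).resolve_left hnle)
        fun heq => hnle (heq ▸ FaceLE.refl W _)
      have := hdim σ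
      omega
  have hsplit : lexVec W N act ⬝ᵥ x = lexVec W N (act \ lowerFaces W act τ) ⬝ᵥ x +
      lexVec W N (lowerFaces W act τ) ⬝ᵥ x := by
    rw [← add_dotProduct, lexVec, lexVec, lexVec,
      Finset.sum_sdiff fun σ hσ => (mem_lowerFaces.1 hσ).1]
  by_contra! hpos
  linarith [Int.le_of_dvd hpos hdvd, neg_abs_le (lexVec W N (act \ lowerFaces W act τ) ⬝ᵥ x)]

end IsFlag

lemma dot_nonpos_of_lexVec_lowerFaces_dot_nonpos (hW : IsSymmSpanning W) (hN : 0 < N)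
    (hτ : τ ∈ act) (hw : w ∈ W) (h : lexVec W N (lowerFaces W act τ) ⬝ᵥ w ≤ 0) : τ ⬝ᵥ w ≤ 0 := by
  by_contra! hpos
  have hnonneg : ∀ σ ∈ lowerFaces W act τ, 0 ≤ N ^ (d - faceDim W σ) * (σ ⬝ᵥ w) := fun σ hσ => by
    have : 0 ≤ σ ⬝ᵥ w := by
      by_contra! hneg
      exact hpos.not_gt ((mem_lowerFaces.1 hσ).2.neg_of_neg hW hw hneg)
    positivity
  have hsingle := Finset.single_le_sum hnonneg (self_mem_lowerFaces hτ)
  rw [← lexVec_dot] at hsingle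
  exact (hsingle.trans h).not_gt (by positivity)

end Flag

section FinSupport

variable {W C act F : Finset (Fin d → ℤ)} {M N : ℤ} {a : Fin d → ℤ}

lemma dot_le_finSupport (μ : Fin d → ℤ) (ha : a ∈ F) : μ ⬝ᵥ a ≤ finSupport F μ :=
  le_csSup (F.finite_toSet.image _).bddAbove ⟨a, ha, rfl⟩

lemma IsFlag.exists_forall_finSupport_eq (h : IsFlag W C act) (hC : IsFaceReps W C M) (hN : 1 ≤ N)
    (hF : F.Nonempty) (hdiff : ∀ σ ∈ C, ∀ a ∈ F, ∀ a' ∈ F, |σ ⬝ᵥ (a' - a)| < N) :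
    ∃ a ∈ F, ∀ τ ∈ act, finSupport F (lexVec W N (lowerFaces W act τ)) =
      lexVec W N (lowerFaces W act τ) ⬝ᵥ a := by
  obtain ⟨a, ha, hmax⟩ := Finset.exists_max_image F (lexVec W N act ⬝ᵥ ·) hF
  refine ⟨a, ha, fun τ hτ => (csSup_le (hF.to_set.image _) ?_).antisymm (dot_le_finSupport _ ha)⟩
  rintro _ ⟨a', ha', rfl⟩
  have := h.lexVec_lowerFaces_dot_nonpos hC hN
    (fun σ hσ => hdiff σ (h.subset hσ) a ha a' ha') hτ (by
      rw [dotProduct_sub]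
      exact sub_nonpos.2 (hmax a' ha'))
  rw [dotProduct_sub] at this
  exact sub_nonpos.1 this

lemma exists_forall_abs_dot_sub_lt {ι : Type*} [Finite ι] (C : Finset (Fin d → ℤ))
    (A : ι → Finset (Fin d → ℤ)) :
    ∃ N : ℤ, 1 ≤ N ∧ ∀ v, ∀ σ ∈ C, ∀ a ∈ A v, ∀ a' ∈ A v, |σ ⬝ᵥ (a' - a)| < N := by
  classical
  have := Fintype.ofFinite ι
  let triples := Finset.univ.biUnion fun v => C ×ˢ A v ×ˢ A v
  obtain ⟨K, hK⟩ := (triples.image fun t => |t.1 ⬝ᵥ (t.2.2 - t.2.1)|).exists_le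
  refine ⟨max K 0 + 1, by omega, fun v σ hσ a ha a' ha' => ?_⟩
  have hmem : (σ, a, a') ∈ triples := by
    simp only [triples, Finset.mem_biUnion, Finset.mem_product]
    exact ⟨v, Finset.mem_univ v, hσ, ha, ha'⟩
  have hle : |σ ⬝ᵥ (a' - a)| ≤ K := hK _ (Finset.mem_image_of_mem _ hmem)
  omega

end FinSupport

/-- The weight of the leading term of `rank`. -/
def rankWeight (d : ℕ) (M : ℤ) : ℤ := 3 * (d + 1) * M

/-- The amount by which `rank` may grow when the leading term varies by `r`; active faces are
dropped `4 * rankGap d M r` below the threshold at which they are entered. -/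
def rankGap (d : ℕ) (M r : ℤ) : ℤ := rankWeight d M * r

/-- The amortised potential of the face `τ` of the flag `act` at the point with coordinates `P`,
relative to the thresholds `c`. Raising the coordinate of `τ` is paid for by a gain on a face of
smaller dimension or by a change of the faces below `τ`. -/
noncomputable def rank (W : Finset (Fin d → ℤ)) (M r : ℤ) (c P : (Fin d → ℤ) → ℤ)
    (act : Finset (Fin d → ℤ)) (τ : Fin d → ℤ) : ℤ :=
  rankWeight d M * P τ + ∑ σ ∈ (lowerFaces W act τ).erase τ, (c σ - 2 * rankGap d M r - P σ)

/-- The bound on `rank` maintained for all active faces: a newly entered face satisfies it. -/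
def rankBound (d : ℕ) (M r c : ℤ) : ℤ := rankWeight d M * (c + M + (2 * d + 1) * r)

lemma sum_add_le_of_ne {ι : Type*} {E E₂ : Finset ι} {f f₂ : ι → ℤ} {r B : ℤ} (hne : E ≠ E₂)
    (hr : 0 ≤ r) (hB : 0 ≤ B) (hcommon : ∀ i ∈ E, i ∈ E₂ → f₂ i ≤ f i + r)
    (hnew : ∀ i ∈ E₂, i ∉ E → f₂ i ≤ -B) (hold : ∀ i ∈ E, i ∉ E₂ → B ≤ f i) :
    ∑ i ∈ E₂, f₂ i + B ≤ ∑ i ∈ E, f i + E.card * r := by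
  classical
  have hsum : ∑ i ∈ E ∩ E₂, f₂ i ≤ ∑ i ∈ E ∩ E₂, f i + E.card * r := calc
    ∑ i ∈ E ∩ E₂, f₂ i ≤ ∑ i ∈ E ∩ E₂, (f i + r) := Finset.sum_le_sum fun i hi =>
      hcommon i (Finset.mem_inter.1 hi).1 (Finset.mem_inter.1 hi).2
    _ = ∑ i ∈ E ∩ E₂, f i + (E ∩ E₂).card * r := by
      rw [Finset.sum_add_distrib, Finset.sum_const, nsmul_eq_mul]
    _ ≤ ∑ i ∈ E ∩ E₂, f i + E.card * r := by
      gcongr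
      exact Finset.inter_subset_left
  have hnew_sum : ∑ i ∈ E₂ \ E, f₂ i ≤ (E₂ \ E).card * -B := by
    rw [← nsmul_eq_mul]
    exact Finset.sum_le_card_nsmul _ _ _ fun i hi =>
      hnew i (Finset.mem_sdiff.1 hi).1 (Finset.mem_sdiff.1 hi).2
  have hold_sum : (E \ E₂).card * B ≤ ∑ i ∈ E \ E₂, f i := by
    rw [← nsmul_eq_mul]
    exact Finset.card_nsmul_le_sum _ _ _ fun i hi =>
      hold i (Finset.mem_sdiff.1 hi).1 (Finset.mem_sdiff.1 hi).2
  have hcard : (1 : ℤ) ≤ (E \ E₂).card + (E₂ \ E).card := by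
    by_contra! hlt
    have hsub : E \ E₂ = ∅ := Finset.card_eq_zero.1 (by omega)
    have hsub₂ : E₂ \ E = ∅ := Finset.card_eq_zero.1 (by omega)
    exact hne ((Finset.sdiff_eq_empty_iff_subset.1 hsub).antisymm
      (Finset.sdiff_eq_empty_iff_subset.1 hsub₂))
  have hBcard := le_mul_of_one_le_left hB hcard
  rw [← Finset.sum_inter_add_sum_sdiff E E₂ f, ← Finset.sum_inter_add_sum_sdiff E₂ E f₂,
    Finset.inter_comm E₂ E]
  linarith

section Rank

variable {W C act act₂ : Finset (Fin d → ℤ)} {M r : ℤ} {c P P₂ y : (Fin d → ℤ) → ℤ}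
  {τ σ w : Fin d → ℤ}

lemma le_rankWeight (hM : 1 ≤ M) : 3 * (d + 1 : ℤ) ≤ rankWeight d M :=
  le_mul_of_one_le_right (by positivity) hM

lemma le_rankGap (hM : 1 ≤ M) (hr : 0 ≤ r) : 3 * (d + 1 : ℤ) * r ≤ rankGap d M r :=
  mul_le_mul_of_nonneg_right (le_rankWeight hM) hr

lemma add_le_rankGap (hM : 1 ≤ M) (hr : 1 ≤ r) : M + (2 * d + 1) * r ≤ rankGap d M r := by
  have hMr : M ≤ M * r := le_mul_of_one_le_right (by positivity) hr
  have hrM : r ≤ M * r := le_mul_of_one_le_left (by positivity) hM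
  calc M + (2 * d + 1) * r ≤ M * r + (2 * d + 1) * (M * r) := by gcongr
    _ ≤ M * r + (2 * d + 1) * (M * r) + (d + 1) * (M * r) := le_add_of_nonneg_right (by positivity)
    _ = rankGap d M r := by
      rw [rankGap, rankWeight]
      ring

lemma rankGap_pos (hM : 1 ≤ M) (hr : 1 ≤ r) : 0 < rankGap d M r := by
  rw [rankGap, rankWeight]
  positivity

lemma mem_lowerFaces_erase :
    σ ∈ (lowerFaces W act τ).erase τ ↔ σ ≠ τ ∧ σ ∈ act ∧ FaceLE W σ τ := by
  rw [Finset.mem_erase, mem_lowerFaces]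

lemma rank_congr (hlow : lowerFaces W act τ = lowerFaces W act₂ τ) (hτ : τ ∈ act)
    (h : ∀ σ ∈ lowerFaces W act τ, P σ = P₂ σ) :
    rank W M r c P act τ = rank W M r c P₂ act₂ τ := by
  rw [rank, rank, ← hlow, h τ (self_mem_lowerFaces hτ)]
  congr 1
  exact Finset.sum_congr rfl fun σ hσ => by rw [h σ (Finset.mem_of_mem_erase hσ)]

lemma IsFlag.sum_lowerFaces_le (h : IsFlag W C act) (hC : IsFaceReps W C M) (hτ : τ ∈ act)
    {f : (Fin d → ℤ) → ℤ} {B : ℤ} (hB : 0 ≤ B)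
    (hf : ∀ σ ∈ (lowerFaces W act τ).erase τ, f σ ≤ B) :
    ∑ σ ∈ (lowerFaces W act τ).erase τ, f σ ≤ d * B := calc
  ∑ σ ∈ (lowerFaces W act τ).erase τ, f σ ≤ ((lowerFaces W act τ).erase τ).card * B := by
    simpa using Finset.sum_le_card_nsmul _ _ _ hf
  _ ≤ d * B := mul_le_mul_of_nonneg_right (h.card_lowerFaces_erase_le hC hτ) hB

lemma le_add_of_rank_le (h : IsFlag W C act) (hC : IsFaceReps W C M) (hr : 1 ≤ r)
    (hrank : ∀ τ ∈ act, rank W M r c P act τ ≤ rankBound d M r (c τ)) :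
    ∀ τ ∈ act, P τ ≤ c τ + 4 * rankGap d M r := by
  intro σ hσ
  obtain ⟨τ, hτ, hmax⟩ := act.exists_max_image (fun τ => P τ - c τ) ⟨σ, hσ⟩
  suffices P τ ≤ c τ + 4 * rankGap d M r by linarith [hmax σ hσ]
  by_contra! hlarge
  have hA := le_rankWeight (d := d) hC.one_le
  have hX := add_le_rankGap (d := d) hC.one_le hr
  have hX₀ := rankGap_pos (d := d) hC.one_le hr
  have hsum := h.sum_lowerFaces_le hC hτ (f := fun σ => P σ - c σ + 2 * rankGap d M r)
    (B := P τ - c τ + 2 * rankGap d M r) (by linarith) fun σ hσ => by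
      linarith [hmax σ (mem_lowerFaces_erase.1 hσ).2.1]
  have hneg : ∑ σ ∈ (lowerFaces W act τ).erase τ, (c σ - 2 * rankGap d M r - P σ) =
      -∑ σ ∈ (lowerFaces W act τ).erase τ, (P σ - c σ + 2 * rankGap d M r) := by
    rw [← Finset.sum_neg_distrib]
    exact Finset.sum_congr rfl fun _ _ => by ring
  have hτrank := hrank τ hτ
  rw [rank, rankBound, hneg] at hτrank
  nlinarith

lemma rank_le_of_entered (h : IsFlag W C act) (hC : IsFaceReps W C M) (hr : 0 ≤ r) (hτ : τ ∈ act)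
    (hlow : ∀ σ ∈ act, c σ - 4 * rankGap d M r ≤ P σ) (hP : P τ ≤ c τ + M + r) :
    rank W M r c P act τ ≤ rankBound d M r (c τ) := by
  have hA : 0 ≤ rankWeight d M := by
    have := hC.one_le
    rw [rankWeight]
    positivity
  have hX : 0 ≤ rankGap d M r := mul_nonneg hA hr
  have hsum := h.sum_lowerFaces_le hC hτ (f := fun σ => c σ - 2 * rankGap d M r - P σ)
    (B := 2 * rankGap d M r) (by positivity) fun σ hσ => by
      linarith [hlow σ (mem_lowerFaces_erase.1 hσ).2.1]
  calc rank W M r c P act τ ≤ rankWeight d M * (c τ + M + r) + d * (2 * rankGap d M r) := by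
        rw [rank]
        gcongr
    _ = rankBound d M r (c τ) := by
      rw [rankBound, rankGap]
      ring

lemma rank_le_rank_of_lowerFaces_ne (h : IsFlag W C act) (hC : IsFaceReps W C M) (hr : 0 ≤ r)
    (hτ : τ ∈ act) (hτ₂ : τ ∈ act₂) (hP : ∀ σ, y σ ≤ P σ ∧ P σ ≤ y σ + r)
    (hP₂ : ∀ σ, y σ ≤ P₂ σ ∧ P₂ σ ≤ y σ + r) (hentered : ∀ σ ∈ act₂, σ ∉ act → c σ ≤ y σ)
    (hleft : ∀ σ ∈ act, σ ∉ act₂ → y σ ≤ c σ - 4 * rankGap d M r)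
    (hne : lowerFaces W act τ ≠ lowerFaces W act₂ τ) :
    rank W M r c P₂ act₂ τ ≤ rank W M r c P act τ := by
  have hA := le_rankWeight (d := d) hC.one_le
  have hX := le_rankGap (d := d) hC.one_le hr
  have hdr : 0 ≤ d * r := by positivity
  have hE : (lowerFaces W act τ).erase τ ≠ (lowerFaces W act₂ τ).erase τ := fun heq => hne (by
    rw [← Finset.insert_erase (self_mem_lowerFaces (W := W) hτ), heq,
      Finset.insert_erase (self_mem_lowerFaces hτ₂)])
  have hsum := sum_add_le_of_ne hE (f := fun σ => c σ - 2 * rankGap d M r - P σ)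
    (f₂ := fun σ => c σ - 2 * rankGap d M r - P₂ σ) (B := 2 * rankGap d M r - r) hr (by linarith)
    (fun σ _ _ => by linarith [hP σ, hP₂ σ])
    (fun σ hσ hnot => by
      obtain ⟨hστ, hact, hle⟩ := mem_lowerFaces_erase.1 hσ
      have := hentered σ hact fun h => hnot (mem_lowerFaces_erase.2 ⟨hστ, h, hle⟩)
      linarith [hP₂ σ])
    (fun σ hσ hnot => by
      obtain ⟨hστ, hact, hle⟩ := mem_lowerFaces_erase.1 hσ
      have := hleft σ hact fun h => hnot (mem_lowerFaces_erase.2 ⟨hστ, h, hle⟩)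
      linarith [hP σ])
  have hcard := mul_le_mul_of_nonneg_right (h.card_lowerFaces_erase_le hC hτ) hr
  have hlead : rankWeight d M * P₂ τ ≤ rankWeight d M * (P τ + r) :=
    mul_le_mul_of_nonneg_left (by linarith [hP τ, hP₂ τ]) (le_trans (by positivity) hA)
  have hgap : rankWeight d M * r = rankGap d M r := rfl
  rw [mul_add, hgap] at hlead
  rw [rank, rank]
  linarith

lemma rank_le_rank_of_cycle (h : IsFlag W C act) (hC : IsFaceReps W C M) (hτ : τ ∈ act)
    (hw : w ∈ W) {k : (Fin d → ℤ) → ℤ} (hk₀ : ∀ σ, 0 ≤ k σ)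
    (hP : ∀ σ ∈ act, P₂ σ = P σ + σ ⬝ᵥ w - 2 * M * k σ)
    (hk : ∀ σ ∈ act, FaceLE W σ τ → k σ ≤ k τ) (hzero : k τ = 0 → τ ⬝ᵥ w ≤ 0) :
    rank W M r c P₂ act τ ≤ rank W M r c P act τ := by
  have hM := hC.one_le
  have hA := le_rankWeight (d := d) hM
  have hdot : ∀ σ ∈ act, |σ ⬝ᵥ w| ≤ M := fun σ hσ => hC.abs_dot_le σ (h.subset hσ) w hw
  suffices hgain : rankWeight d M * (τ ⬝ᵥ w - 2 * M * k τ) +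
      ∑ σ ∈ (lowerFaces W act τ).erase τ, (2 * M * k σ - σ ⬝ᵥ w) ≤ 0 by
    have hsum : ∑ σ ∈ (lowerFaces W act τ).erase τ, (c σ - 2 * rankGap d M r - P₂ σ) =
        ∑ σ ∈ (lowerFaces W act τ).erase τ, (c σ - 2 * rankGap d M r - P σ) +
          ∑ σ ∈ (lowerFaces W act τ).erase τ, (2 * M * k σ - σ ⬝ᵥ w) := by
      rw [← Finset.sum_add_distrib]
      refine Finset.sum_congr rfl fun σ hσ => ?_
      rw [hP σ (mem_lowerFaces_erase.1 hσ).2.1]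
      ring
    rw [rank, rank, hsum, hP τ hτ]
    linarith
  have hrest : ∑ σ ∈ (lowerFaces W act τ).erase τ, (2 * M * k σ - σ ⬝ᵥ w) ≤
      d * (M + 2 * M * k τ) := by
    refine h.sum_lowerFaces_le hC hτ (by have := hk₀ τ; positivity) fun σ hσ => ?_
    obtain ⟨-, hact, hle⟩ := mem_lowerFaces_erase.1 hσ
    have : 2 * M * k σ ≤ 2 * M * k τ := by gcongr; exact hk σ hact hle
    linarith [neg_le_of_abs_le (hdot σ hact)]
  rcases (hk₀ τ).eq_or_lt with h₀ | hpos
  · rcases (hzero h₀.symm).eq_or_lt with htight | hneg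
    · rw [htight, ← h₀, mul_zero, sub_zero, mul_zero, zero_add]
      refine Finset.sum_nonpos fun σ hσ => ?_
      obtain ⟨-, hact, hle⟩ := mem_lowerFaces_erase.1 hσ
      have : k σ = 0 := le_antisymm (h₀ ▸ hk σ hact hle) (hk₀ σ)
      rw [hle.eq_zero_of_eq_zero hC.toIsSymmSpanning hw htight, this, mul_zero, sub_zero]
    · rw [← h₀] at hrest ⊢
      rw [rankWeight] at hA ⊢
      nlinarith
  · have hlead : τ ⬝ᵥ w - 2 * M * k τ ≤ -(M * k τ) := by
      nlinarith [le_of_abs_le (hdot τ hτ)]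
    have : M ≤ M * k τ := le_mul_of_one_le_right (by positivity) hpos
    nlinarith

end Rank

/-- A move waiting to be completed to a cycle: the vertex it leaves, its label, and the flag of
active faces at the time it was made. -/
structure PendingMove (V : Type) (d : ℕ) where
  src : V
  label : Fin d → ℤ
  act : Finset (Fin d → ℤ)

/-- The memory of Player 1's strategy: the current vertex, the simple path leading to it (last
move first), the total label of the completed cycles, and the flag of active faces. -/
structure LexState (V : Type) (d : ℕ) where
  vertex : V
  pending : List (PendingMove V d)
  point : Fin d → ℤ
  act : Finset (Fin d → ℤ)

/-- The total label of a list of pending moves. -/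
def totalLabel (l : List (PendingMove V d)) : Fin d → ℤ := (l.map PendingMove.label).sum

/-- The total label of all moves made so far. -/
def LexState.total (s : LexState V d) : Fin d → ℤ := s.point + totalLabel s.pending

open Classical in
/-- The number of pending moves made when the active faces below `τ` were not those of `act`. -/
noncomputable def staleCount (W act : Finset (Fin d → ℤ)) (l : List (PendingMove V d))
    (τ : Fin d → ℤ) : ℕ :=
  l.countP fun t => lowerFaces W t.act τ ≠ lowerFaces W act τ

section Pending

variable {W act act₂ : Finset (Fin d → ℤ)} {l : List (PendingMove V d)} {τ σ : Fin d → ℤ}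

omit [Fintype V] [DecidableEq V]

lemma totalLabel_cons (t : PendingMove V d) (l : List (PendingMove V d)) :
    totalLabel (t :: l) = t.label + totalLabel l := by
  simp [totalLabel]

lemma totalLabel_append (l l' : List (PendingMove V d)) :
    totalLabel (l ++ l') = totalLabel l + totalLabel l' := by
  simp [totalLabel]

lemma abs_totalLabel_le {e : ℕ} (h : ∀ t ∈ l, ∀ i, |t.label i| ≤ (e : ℤ)) (i : Fin d) :
    |totalLabel l i| ≤ l.length * e := by
  induction l with
  | nil => simp [totalLabel]
  | cons t l ih =>
    rw [totalLabel_cons, Pi.add_apply, List.length_cons]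
    have hl := ih fun t ht => h t (List.mem_cons_of_mem _ ht)
    have ht := h t List.mem_cons_self i
    push_cast
    linarith [abs_add_le (t.label i) (totalLabel l i)]

lemma staleCount_congr (h : lowerFaces W act τ = lowerFaces W act₂ τ) :
    staleCount W act l τ = staleCount W act₂ l τ := by
  simp only [staleCount, h]

lemma staleCount_append (W act : Finset (Fin d → ℤ)) (l l' : List (PendingMove V d))
    (τ : Fin d → ℤ) :
    staleCount W act (l ++ l') τ = staleCount W act l τ + staleCount W act l' τ :=
  List.countP_append

lemma staleCount_cons_of_act_eq {t : PendingMove V d} (h : t.act = act) :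
    staleCount W act (t :: l) τ = staleCount W act l τ :=
  List.countP_cons_of_neg (by simp [h])

lemma staleCount_mono (h : FaceLE W σ τ) : staleCount W act l σ ≤ staleCount W act l τ := by
  classical
  refine List.countP_mono_left fun t _ ht => ?_
  rw [decide_eq_true_eq] at ht ⊢
  exact fun heq => ht (lowerFaces_congr_of_faceLE h heq)

lemma lowerFaces_eq_of_staleCount_eq_zero (h : staleCount W act l τ = 0) :
    ∀ t ∈ l, lowerFaces W t.act τ = lowerFaces W act τ := fun t ht => by
  simpa using List.countP_eq_zero.1 h t ht

end Pending

/-- The parameters of Player 1's lexicographic strategy for the closed family `A` of credits, in a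
game with labels of norm at most `e`: representatives `C` of the faces of the arrangement whose
normals `W` include the total labels of all simple cycles, depths `δ` of an erosion of the zonotope
of `W`, a base `N` large enough for comparing elements of `A` lexicographically, and a bound `r` on
the contribution of the pending moves to the coordinates. -/
structure LexSetup (A : V → Finset (Fin d → ℤ)) (e : ℕ) where
  (W C : Finset (Fin d → ℤ))
  (M N r R : ℤ)
  δ : ℕ → ℤ
  isFaceReps : IsFaceReps W C M
  mem_of_abs_le : ∀ w : Fin d → ℤ, (∀ i, |w i| ≤ Fintype.card V * e) → w ∈ W
  isErosion : IsErosion d M R (4 * rankGap d M r) δ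
  one_le_width : 1 ≤ r
  mul_card_le_width : 2 * M * Fintype.card V ≤ r
  one_le_base : 1 ≤ N
  abs_dot_sub_lt : ∀ v, ∀ σ ∈ C, ∀ a ∈ A v, ∀ a' ∈ A v, |σ ⬝ᵥ (a' - a)| < N

namespace LexSetup

variable {A : V → Finset (Fin d → ℤ)} {e : ℕ}

/-- The value of `τ ⬝ᵥ s.point` at which the face of `τ` is activated. -/
noncomputable def threshold (P : LexSetup A e) : (Fin d → ℤ) → ℤ := erodedSupport P.W P.R P.δ

/-- The coordinate of a state along `τ`. A stale move may push the cycle it will belong to in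
direction `τ`, and is charged for that in advance. -/
noncomputable def coord (P : LexSetup A e) (s : LexState V d) (τ : Fin d → ℤ) : ℤ :=
  τ ⬝ᵥ s.point + 2 * P.M * staleCount P.W s.act s.pending τ

/-- The potential of the active face `τ` in the state `s`. -/
noncomputable def stateRank (P : LexSetup A e) (s : LexState V d) (τ : Fin d → ℤ) : ℤ :=
  rank P.W P.M P.r P.threshold (P.coord s) s.act τ

/-- A path of pending moves to a given vertex, each of which was lexicographically at most the
difference of the support functions of `A` at its end points. -/
def IsLexPath (P : LexSetup A e) : V → List (PendingMove V d) → Prop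
  | _, [] => True
  | v, t :: l => (∀ τ ∈ t.act, lexVec P.W P.N (lowerFaces P.W t.act τ) ⬝ᵥ t.label ≤
      finSupport (A v) (lexVec P.W P.N (lowerFaces P.W t.act τ)) -
        finSupport (A t.src) (lexVec P.W P.N (lowerFaces P.W t.act τ))) ∧
      P.IsLexPath t.src l

/-- The conditions that hold even while a cycle is being completed and the active faces are being
recomputed. -/
structure IsValid (P : LexSetup A e) (s : LexState V d) : Prop where
  isFlag : IsFlag P.W P.C s.act
  rank_le : ∀ τ ∈ s.act, P.stateRank s τ ≤ rankBound d P.M P.r (P.threshold τ)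
  nodup : (s.pending.map PendingMove.src).Nodup
  abs_label_le : ∀ t ∈ s.pending, ∀ i, |t.label i| ≤ (e : ℤ)
  isLexPath : P.IsLexPath s.vertex s.pending
  nonempty : (A s.vertex).Nonempty
  dot_lt : ∀ τ ∈ P.C, τ ∉ s.act → τ ⬝ᵥ s.point < P.threshold τ + P.M

/-- The invariant of Player 1's strategy: the pending moves form a simple path and all faces beyond
their threshold are active. -/
structure IsSettled (P : LexSetup A e) (s : LexState V d) : Prop extends P.IsValid s where
  not_mem : s.vertex ∉ s.pending.map PendingMove.src
  dot_lt_threshold : ∀ τ ∈ P.C, τ ∉ s.act → τ ⬝ᵥ s.point < P.threshold τ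

open Classical in
/-- Deactivate the faces that are far below their threshold, and activate those that reached it. -/
noncomputable def refresh (P : LexSetup A e) (s : LexState V d) : LexState V d :=
  { s with act := P.C.filter fun τ => P.threshold τ ≤ τ ⬝ᵥ s.point ∨
      τ ∈ s.act ∧ P.threshold τ - 4 * rankGap d P.M P.r < τ ⬝ᵥ s.point }

variable {P : LexSetup A e} {s : LexState V d} {τ σ : Fin d → ℤ}

omit [DecidableEq V]

lemma one_le_bound (P : LexSetup A e) : 1 ≤ P.M := P.isFaceReps.one_le

lemma le_gap (P : LexSetup A e) : P.M ≤ 4 * rankGap d P.M P.r := by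
  have hr := P.one_le_width
  have hM := P.one_le_bound
  have hgap := add_le_rankGap (d := d) hM hr
  have : 0 ≤ (2 * d + 1) * P.r := by positivity
  linarith

lemma dot_le_coord (P : LexSetup A e) (s : LexState V d) (τ : Fin d → ℤ) :
    τ ⬝ᵥ s.point ≤ P.coord s τ := by
  have := P.one_le_bound
  exact le_add_of_nonneg_right (by positivity)

lemma coord_le (hlen : s.pending.length ≤ Fintype.card V) (τ : Fin d → ℤ) :
    P.coord s τ ≤ τ ⬝ᵥ s.point + P.r := by
  have hM := P.one_le_bound
  have hstale : staleCount P.W s.act s.pending τ ≤ Fintype.card V :=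
    List.countP_le_length.trans hlen
  have : 2 * P.M * staleCount P.W s.act s.pending τ ≤ 2 * P.M * Fintype.card V := by gcongr
  rw [coord]
  linarith [P.mul_card_le_width]

lemma mem_act_refresh : τ ∈ (P.refresh s).act ↔ τ ∈ P.C ∧ (P.threshold τ ≤ τ ⬝ᵥ s.point ∨
    τ ∈ s.act ∧ P.threshold τ - 4 * rankGap d P.M P.r < τ ⬝ᵥ s.point) := by
  simp only [refresh, Finset.mem_filter]

lemma sub_le_dot_of_mem_refresh (hτ : τ ∈ (P.refresh s).act) :
    P.threshold τ - 4 * rankGap d P.M P.r ≤ τ ⬝ᵥ s.point := by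
  rcases (mem_act_refresh.1 hτ).2 with h | h
  · linarith [P.le_gap, P.one_le_bound]
  · exact h.2.le

lemma IsLexPath.of_append_cons {v : V} {p q : List (PendingMove V d)} {t : PendingMove V d}
    (h : P.IsLexPath v (p ++ t :: q)) : P.IsLexPath t.src q := by
  induction p generalizing v with
  | nil => exact h.2
  | cons s p ih => exact ih h.2

lemma IsLexPath.lexVec_dot_totalLabel_le {v : V} {p q : List (PendingMove V d)}
    {t : PendingMove V d} (h : P.IsLexPath v (p ++ t :: q)) {act : Finset (Fin d → ℤ)}
    (hτ : τ ∈ act) (hfresh : ∀ t' ∈ p ++ [t], lowerFaces P.W t'.act τ = lowerFaces P.W act τ) :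
    lexVec P.W P.N (lowerFaces P.W act τ) ⬝ᵥ totalLabel (p ++ [t]) ≤
      finSupport (A v) (lexVec P.W P.N (lowerFaces P.W act τ)) -
        finSupport (A t.src) (lexVec P.W P.N (lowerFaces P.W act τ)) := by
  have hhead : ∀ t' ∈ p ++ [t], τ ∈ t'.act := fun t' ht' =>
    (mem_lowerFaces.1 (hfresh t' ht' ▸ self_mem_lowerFaces hτ)).1
  induction p generalizing v with
  | nil =>
    have := h.1 τ (hhead t (by simp))
    rw [hfresh t (by simp)] at this
    simpa [totalLabel] using this
  | cons t' p ih =>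
    have hp := ih h.2 (fun s hs => hfresh s (List.mem_cons_of_mem _ hs))
      fun s hs => hhead s (List.mem_cons_of_mem _ hs)
    have ht' := h.1 τ (hhead t' (by simp))
    rw [hfresh t' (by simp)] at ht'
    rw [List.cons_append, totalLabel_cons, dotProduct_add]
    linarith

namespace IsValid

lemma length_pending_le (h : P.IsValid s) : s.pending.length ≤ Fintype.card V := by
  simpa using h.nodup.length_le_card

lemma dot_le (h : P.IsValid s) :
    ∀ ν ∈ P.C, ν ⬝ᵥ s.point ≤ P.threshold ν + 4 * rankGap d P.M P.r := by
  intro ν hν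
  by_cases hact : ν ∈ s.act
  · exact (P.dot_le_coord s ν).trans
      (le_add_of_rank_le h.isFlag P.isFaceReps P.one_le_width h.rank_le ν hact)
  · linarith [h.dot_lt ν hν hact, P.le_gap]

lemma isFlag_refresh (h : P.IsValid s) : IsFlag P.W P.C (P.refresh s).act where
  subset _ hτ := (mem_act_refresh.1 hτ).1
  total _ hτ _ hσ := P.isErosion.faceLE_total_of_tight P.isFaceReps h.dot_le
    (mem_act_refresh.1 hτ).1 (mem_act_refresh.1 hσ).1 (sub_le_dot_of_mem_refresh hτ)
    (sub_le_dot_of_mem_refresh hσ)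

lemma rank_refresh_le (h : P.IsValid s) (hτ : τ ∈ (P.refresh s).act) :
    P.stateRank (P.refresh s) τ ≤ rankBound d P.M P.r (P.threshold τ) := by
  have hr : 0 ≤ P.r := zero_le_one.trans P.one_le_width
  have hlen : (P.refresh s).pending.length ≤ Fintype.card V := h.length_pending_le
  have hcoord : ∀ σ, σ ⬝ᵥ s.point ≤ P.coord (P.refresh s) σ ∧
      P.coord (P.refresh s) σ ≤ σ ⬝ᵥ s.point + P.r := fun σ =>
    ⟨P.dot_le_coord (P.refresh s) σ, coord_le hlen σ⟩
  by_cases hact : τ ∈ s.act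
  · refine le_trans ?_ (h.rank_le τ hact)
    by_cases hlow : lowerFaces P.W s.act τ = lowerFaces P.W (P.refresh s).act τ
    · refine (rank_congr hlow hact fun σ hσ => ?_).ge
      rw [coord, coord, staleCount_congr (lowerFaces_congr_of_faceLE (mem_lowerFaces.1 hσ).2 hlow)]
      rfl
    · refine rank_le_rank_of_lowerFaces_ne h.isFlag P.isFaceReps hr hact hτ
        (fun σ => ⟨P.dot_le_coord s σ, coord_le h.length_pending_le σ⟩) hcoord
        (fun σ hσ hnot => ?_) (fun σ hσ hnot => ?_) hlow
      · exact (mem_act_refresh.1 hσ).2.resolve_right fun hmem => hnot hmem.1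
      · by_contra! hlt
        exact hnot (mem_act_refresh.2 ⟨h.isFlag.subset hσ, .inr ⟨hσ, hlt⟩⟩)
  · have hdot := h.dot_lt τ (mem_act_refresh.1 hτ).1 hact
    exact rank_le_of_entered h.isFlag_refresh P.isFaceReps hr hτ
      (fun σ hσ => (sub_le_dot_of_mem_refresh hσ).trans (hcoord σ).1) (by linarith [hcoord τ])

lemma isSettled_refresh (h : P.IsValid s) (hv : s.vertex ∉ s.pending.map PendingMove.src) :
    P.IsSettled (P.refresh s) := by
  have hlt : ∀ τ ∈ P.C, τ ∉ (P.refresh s).act → τ ⬝ᵥ s.point < P.threshold τ := by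
    intro τ hτ hnot
    by_contra! hle
    exact hnot (mem_act_refresh.2 ⟨hτ, .inl hle⟩)
  exact
    { isFlag := h.isFlag_refresh
      rank_le := fun _ => h.rank_refresh_le
      nodup := h.nodup
      abs_label_le := h.abs_label_le
      isLexPath := h.isLexPath
      nonempty := h.nonempty
      dot_lt := fun τ hτ hnot => (hlt τ hτ hnot).trans (lt_add_of_pos_right _ P.one_le_bound)
      not_mem := hv
      dot_lt_threshold := hlt }

lemma totalLabel_mem (h : P.IsValid s) {l q : List (PendingMove V d)} (hl : s.pending = l ++ q) :
    totalLabel l ∈ P.W := by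
  have hlen : l.length ≤ Fintype.card V := calc
    l.length ≤ s.pending.length := by simp [hl]
    _ ≤ Fintype.card V := h.length_pending_le
  refine P.mem_of_abs_le _ fun i => (abs_totalLabel_le (fun t ht =>
    h.abs_label_le t (hl ▸ List.mem_append_left q ht)) i).trans ?_
  gcongr

/-- Weights of cycles without stale moves are lexicographically nonpositive, as the differences of
support functions telescope to zero. -/
lemma rank_pop_le (h : P.IsValid s) {p q : List (PendingMove V d)} {t : PendingMove V d}
    (hpending : s.pending = p ++ t :: q) (hsrc : t.src = s.vertex) (hτ : τ ∈ s.act) :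
    P.stateRank ⟨s.vertex, q, s.point + totalLabel (p ++ [t]), s.act⟩ τ ≤ P.stateRank s τ := by
  have hsplit : s.pending = (p ++ [t]) ++ q := by simp [hpending]
  have hw := h.totalLabel_mem hsplit
  refine rank_le_rank_of_cycle h.isFlag P.isFaceReps hτ hw
    (k := fun σ => staleCount P.W s.act (p ++ [t]) σ) (fun _ => by positivity) (fun σ _ => ?_)
    (fun σ _ hσ => by exact_mod_cast staleCount_mono hσ) fun hzero => ?_
  · simp only [coord, hsplit, staleCount_append, dotProduct_add]
    push_cast
    ring
  · have hlex := (hpending ▸ h.isLexPath).lexVec_dot_totalLabel_le hτ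
      (lowerFaces_eq_of_staleCount_eq_zero (by exact_mod_cast hzero))
    rw [hsrc, sub_self] at hlex
    exact dot_nonpos_of_lexVec_lowerFaces_dot_nonpos P.isFaceReps.toIsSymmSpanning
      (zero_lt_one.trans_le P.one_le_base) hτ hw hlex

lemma isValid_pop (h : P.IsValid s)
    (hlt : ∀ τ ∈ P.C, τ ∉ s.act → τ ⬝ᵥ s.point < P.threshold τ) {p q : List (PendingMove V d)}
    {t : PendingMove V d} (hpending : s.pending = p ++ t :: q) (hsrc : t.src = s.vertex) :
    P.IsValid ⟨s.vertex, q, s.point + totalLabel (p ++ [t]), s.act⟩ where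
  isFlag := h.isFlag
  rank_le τ hτ := (h.rank_pop_le hpending hsrc hτ).trans (h.rank_le τ hτ)
  nodup := h.nodup.sublist (by simp [hpending])
  abs_label_le t' ht' := h.abs_label_le t' (by simp [hpending, ht'])
  isLexPath := hsrc ▸ (hpending ▸ h.isLexPath).of_append_cons
  nonempty := h.nonempty
  dot_lt τ hτ hnot := by
    have hw := P.isFaceReps.abs_dot_le τ hτ _ (h.totalLabel_mem (l := p ++ [t]) (q := q)
      (by simp [hpending]))
    rw [dotProduct_add]
    linarith [le_of_abs_le hw, hlt τ hτ hnot]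

end IsValid

lemma IsSettled.neg_le_total (h : P.IsSettled s) {D : ℕ} (hW : P.W = box d D)
    (hD : Fintype.card V * e ≤ D) (i : Fin d) :
    -(P.R * ((2 * D + 1) ^ d * D) + D * d * (4 * rankGap d P.M P.r) + D) ≤ s.total i := by
  have hL := P.isErosion.tolerance_pos
  have hM := P.one_le_bound
  have hδ := P.isErosion.depth_pos (zero_le_one.trans hM)
  have hR : 0 ≤ P.R := by
    refine le_trans ?_ (P.isErosion.depth_add_le 0 (Nat.zero_le d))
    have := hδ 0
    positivity
  have hunit : ∀ w : Fin d → ℤ, (Pi.single i (-1) : Fin d → ℤ) ⬝ᵥ w = -w i := by simp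
  have hQ : ∀ w ∈ P.W, |(Pi.single i (-1) : Fin d → ℤ) ⬝ᵥ w| ≤ (D : ℤ) := fun w hw => by
    rw [hunit, abs_neg]
    exact mem_box.1 (hW ▸ hw) i
  have hpoint := P.isFaceReps.dot_le_of_forall_reps (x := s.point) (R := P.R) hL.le
    (fun ν hν => (h.dot_le ν hν).trans (by
      simp only [threshold, erodedSupport]
      linarith [hδ (faceDim P.W ν)])) (by positivity) hQ
  have hdim : D * (faceDim P.W (Pi.single i (-1)) : ℤ) * (4 * rankGap d P.M P.r) ≤
      D * d * (4 * rankGap d P.M P.r) := by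
    gcongr
    exact faceDim_le _ _
  have hzono : zonoSupport P.W (Pi.single i (-1)) ≤ (2 * D + 1) ^ d * D := by
    have := Finset.sum_le_card_nsmul _ _ _ hQ
    rw [nsmul_eq_mul, hW, card_box] at this
    rw [zonoSupport, hW]
    exact_mod_cast this
  have hpending : |totalLabel s.pending i| ≤ (D : ℤ) := calc
    |totalLabel s.pending i| ≤ s.pending.length * e := abs_totalLabel_le h.abs_label_le i
    _ ≤ Fintype.card V * e := by
      gcongr
      exact h.length_pending_le
    _ ≤ D := by exact_mod_cast hD
  have hRzono := mul_le_mul_of_nonneg_left hzono hR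
  rw [hunit] at hpoint
  rw [LexState.total, Pi.add_apply]
  linarith [neg_le_of_abs_le hpending]

lemma isSettled_init (P : LexSetup A e) {v₀ : V} (hA : (A v₀).Nonempty) :
    P.IsSettled ⟨v₀, [], 0, ∅⟩ := by
  have hpos : ∀ τ ∈ P.C, 0 < P.threshold τ := fun τ hτ =>
    P.isErosion.erodedSupport_pos P.isFaceReps hτ
  exact
    { isFlag := ⟨by simp, by simp⟩
      rank_le := by simp
      nodup := by simp
      abs_label_le := by simp
      isLexPath := trivial
      nonempty := hA
      dot_lt := fun τ hτ _ => by simpa using add_pos (hpos τ hτ) P.one_le_bound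
      not_mem := by simp
      dot_lt_threshold := fun τ hτ _ => by simpa using hpos τ hτ }

/-- The state after a move along an edge labelled `u` to `v`, before completed cycles are removed
from the pending moves. -/
def push (s : LexState V d) (u : Fin d → ℤ) (v : V) : LexState V d :=
  { s with vertex := v, pending := ⟨s.vertex, u, s.act⟩ :: s.pending }

lemma coord_push (P : LexSetup A e) (s : LexState V d) (u : Fin d → ℤ) (v : V) :
    P.coord (push s u v) = P.coord s := by
  funext τ
  simp only [coord, push]
  rw [staleCount_cons_of_act_eq (t := ⟨s.vertex, u, s.act⟩) rfl]

namespace IsSettled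

variable {u : Fin d → ℤ} {v : V}

lemma isValid_push (h : P.IsSettled s) (hu : ∀ i, |u i| ≤ (e : ℤ)) (hA : (A v).Nonempty)
    (hlex : ∀ τ ∈ s.act, lexVec P.W P.N (lowerFaces P.W s.act τ) ⬝ᵥ u ≤
      finSupport (A v) (lexVec P.W P.N (lowerFaces P.W s.act τ)) -
        finSupport (A s.vertex) (lexVec P.W P.N (lowerFaces P.W s.act τ))) :
    P.IsValid (push s u v) where
  isFlag := h.isFlag
  rank_le τ hτ := by
    rw [stateRank, coord_push]
    exact h.rank_le τ hτ
  nodup := List.nodup_cons.2 ⟨h.not_mem, h.nodup⟩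
  abs_label_le := List.forall_mem_cons.2 ⟨hu, h.abs_label_le⟩
  isLexPath := ⟨hlex, h.isLexPath⟩
  nonempty := hA
  dot_lt := h.dot_lt

lemma exists_move (h : P.IsSettled s) :
    ∃ a ∈ A s.vertex, ∀ u v, (∀ i, |u i| ≤ (e : ℤ)) → a + u ∈ A v →
      ∃ s', P.IsSettled s' ∧ s'.vertex = v ∧ s'.total = s.total + u := by
  obtain ⟨a, ha, hmax⟩ := h.isFlag.exists_forall_finSupport_eq P.isFaceReps P.one_le_base
    h.nonempty (P.abs_dot_sub_lt s.vertex)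
  refine ⟨a, ha, fun u v hu hau => ?_⟩
  have hpush := h.isValid_push hu ⟨_, hau⟩ fun τ hτ => by
    have := dot_le_finSupport (lexVec P.W P.N (lowerFaces P.W s.act τ)) hau
    rw [dotProduct_add] at this
    rw [hmax τ hτ]
    linarith
  have htotal : (push s u v).total = s.total + u := by
    simp only [LexState.total, push, totalLabel_cons]
    abel
  by_cases hv : v ∈ (push s u v).pending.map PendingMove.src
  · obtain ⟨t, ht, hsrc⟩ := List.mem_map.1 hv
    obtain ⟨p, q, hpq⟩ := List.append_of_mem ht
    have hpop := hpush.isValid_pop h.dot_lt_threshold hpq hsrc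
    refine ⟨_, hpop.isSettled_refresh ?_, rfl, htotal ▸ ?_⟩
    · have hnodup := hpush.nodup
      rw [hpq, List.map_append, List.map_cons] at hnodup
      exact hsrc ▸ (List.nodup_cons.1 (List.nodup_append.1 hnodup).2.1).1
    · simp only [LexState.total, refresh]
      rw [hpq, add_assoc, ← totalLabel_append, List.append_assoc, List.singleton_append]
  · exact ⟨_, hpush.isSettled_refresh hv, rfl, htotal⟩

end IsSettled

/-- The configurations whose weight dominates the total label of a settled state. -/
def configs (P : LexSetup A e) : Set (Conf V d) :=
  {c | ∃ s, P.IsSettled s ∧ s.vertex = c.1 ∧ s.total ≤ c.2}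

lemma mem_configs_of_le {c c' : Conf V d} {u : Fin d → ℤ} (hs : s.total ≤ c.2)
    (hu : u ≤ c'.2 - c.2) (h : ∃ s', P.IsSettled s' ∧ s'.vertex = c'.1 ∧ s'.total = s.total + u) :
    c' ∈ P.configs := by
  obtain ⟨s', hs', hv, htotal⟩ := h
  refine ⟨s', hs', hv, htotal ▸ ?_⟩
  calc s.total + u ≤ c.2 + (c'.2 - c.2) := add_le_add hs hu
    _ = c'.2 := by abel

end LexSetup

theorem IsClosedFamily.isInvariant_configs {G : MWG V d} {A : V → Finset (Fin d → ℤ)}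
    (hA : G.IsClosedFamily A) (P : LexSetup A (enorm G)) : G.IsInvariant P.configs where
  p1 := by
    rintro c ⟨s, hs, hv, hle⟩ hc
    obtain ⟨a, ha, hmove⟩ := hs.exists_move
    obtain ⟨u, v, hE, u', hu', habs, hmem⟩ := hA.p1 s.vertex (hv ▸ hc) a ha
    have hsub : c.2 + u - c.2 = u := by abel
    exact ⟨(v, c.2 + u), LexSetup.mem_configs_of_le hle (hsub.symm ▸ hu') (hmove u' v habs hmem),
      by rwa [Step, hsub, ← hv]⟩
  p2 := by
    rintro c ⟨s, hs, hv, hle⟩ hc c' hstep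
    obtain ⟨a, ha, hmove⟩ := hs.exists_move
    obtain ⟨u', hu', habs, hmem⟩ :=
      hA.p2 s.vertex (hv ▸ hc) a ha (c'.2 - c.2) c'.1 (hv ▸ hstep)
    exact LexSetup.mem_configs_of_le hle hu' (hmove u' c'.1 habs hmem)

/-- The depth of the erosion on the open faces of dimension `0`. -/
def baseDepth (d : ℕ) (M L : ℤ) : ℤ := 2 * L + 2 * M * d * L + 1

/-- The least depths, as a function of the dimension of a face, that make an erosion of
tolerance `L`. -/
def geomDepth (d : ℕ) (M L : ℤ) (k : ℕ) : ℤ := baseDepth d M L * (3 * M) ^ k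

/-- The dilation factor of the zonotope that leaves room for the erosion by `geomDepth`. -/
def erosionRadius (d : ℕ) (M L : ℤ) : ℤ := geomDepth d M L d + baseDepth d M L

lemma isErosion_geomDepth {M L : ℤ} (hM : 1 ≤ M) (hL : 0 < L) :
    IsErosion d M (erosionRadius d M L) L (geomDepth d M L) := by
  have hbase : 0 ≤ baseDepth d M L := by
    rw [baseDepth]
    positivity
  have h3M : 1 ≤ 3 * M := by linarith
  exact
    { tolerance_pos := hL
      lt_depth := fun k => calc
        2 * L + 2 * M * d * L < baseDepth d M L := lt_add_one _
        _ ≤ geomDepth d M L k := le_mul_of_one_le_right hbase (one_le_pow₀ h3M)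
      mul_depth_le := fun j k hjk => calc
        3 * M * geomDepth d M L j = baseDepth d M L * (3 * M) ^ (j + 1) := by
          rw [geomDepth]
          ring
        _ ≤ geomDepth d M L k := by
          rw [geomDepth]
          gcongr
          exact hjk
      depth_add_le := fun k hk => by
        rw [erosionRadius, geomDepth, geomDepth]
        gcongr
        exact (lt_add_one _).le }

section Numerics

variable {M L b n : ℤ} {m l : ℕ}

lemma factorial_mul_pow_le (d : ℕ) {D : ℕ} (hD : 1 ≤ D) :
    (d + 1).factorial * D ^ (d + 1) ≤ (4 * D) ^ (d + 1) ^ 2 := calc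
  (d + 1).factorial * D ^ (d + 1) ≤ (4 ^ d) ^ (d + 1) * D ^ (d + 1) := by
    gcongr
    exact (Nat.factorial_le_pow _).trans (by gcongr; exact Nat.lt_pow_self (by norm_num))
  _ ≤ ((4 * D) ^ d) ^ (d + 1) * (4 * D) ^ (d + 1) := by
    gcongr <;> omega
  _ = (4 * D) ^ (d + 1) ^ 2 := by ring

lemma succ_le_pow (hb : 4 ≤ b) (d : ℕ) : (d : ℤ) + 1 ≤ b ^ d := calc
  (d : ℤ) + 1 ≤ 4 ^ d := by exact_mod_cast Nat.lt_pow_self (by norm_num)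
  _ ≤ b ^ d := by gcongr

lemma four_mul_rankGap_le (hb : 4 ≤ b) (hM : 0 ≤ M) (hMb : M ≤ b ^ m) (hn : 0 ≤ n) (hnb : n ≤ b) :
    4 * rankGap d M (2 * M * n) ≤ b ^ (2 * m + d + 4) := calc
  4 * rankGap d M (2 * M * n) = 24 * (d + 1) * M ^ 2 * n := by
    rw [rankGap, rankWeight]
    ring
  _ ≤ 4 ^ 3 * (d + 1) * M ^ 2 * n := by gcongr; norm_num
  _ ≤ b ^ 3 * b ^ d * (b ^ m) ^ 2 * b := by
    gcongr
    exact succ_le_pow hb d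
  _ = b ^ (2 * m + d + 4) := by ring

lemma baseDepth_le (hb : 4 ≤ b) (hM : 1 ≤ M) (hMb : M ≤ b ^ m) (hL : 1 ≤ L) (hLb : L ≤ b ^ l) :
    baseDepth d M L ≤ b ^ (m + l + d + 1) := by
  have hLM : L ≤ M * L := le_mul_of_one_le_left (by positivity) hM
  have hdML : 0 ≤ d * (M * L) := by positivity
  calc baseDepth d M L ≤ 4 * (d + 1) * M * L := by
        rw [baseDepth]
        linarith
    _ ≤ b * b ^ d * b ^ m * b ^ l := by
      gcongr
      exact succ_le_pow hb d
    _ = b ^ (m + l + d + 1) := by ring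

lemma erosionRadius_le (hb : 4 ≤ b) (hM : 1 ≤ M) (hMb : M ≤ b ^ m) (hL : 1 ≤ L)
    (hLb : L ≤ b ^ l) : erosionRadius d M L ≤ b ^ (m + l + d + 1 + (m + 1) * d + 1) := by
  have hbase : 0 ≤ baseDepth d M L := by
    rw [baseDepth]
    positivity
  calc erosionRadius d M L ≤ geomDepth d M L d + geomDepth d M L d := by
        rw [erosionRadius]
        gcongr
        exact le_mul_of_one_le_right hbase (one_le_pow₀ (by linarith))
    _ = baseDepth d M L * (3 * M) ^ d * 2 := by
      rw [geomDepth]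
      ring
    _ ≤ b ^ (m + l + d + 1) * (b * b ^ m) ^ d * b := by
      gcongr
      · exact baseDepth_le hb hM hMb hL hLb
      · linarith
      · linarith
    _ = b ^ (m + l + d + 1 + (m + 1) * d + 1) := by ring

lemma erosionRadius_mul_add_le {D : ℤ} (hM : 1 ≤ M) (hMb : M ≤ b ^ m) (hL : 1 ≤ L)
    (hLb : L ≤ b ^ (2 * m + d + 4)) (hD : 1 ≤ D) (hDb : 4 * D ≤ b) :
    erosionRadius d M L * ((2 * D + 1) ^ d * D) + D * d * L + D ≤
      b ^ ((d + 3) * m + 4 * d + 8) := by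
  have hb : 4 ≤ b := by linarith
  have hzono : erosionRadius d M L * ((2 * D + 1) ^ d * D) ≤ b ^ ((d + 3) * m + 4 * d + 7) := calc
    erosionRadius d M L * ((2 * D + 1) ^ d * D) ≤
        b ^ (m + (2 * m + d + 4) + d + 1 + (m + 1) * d + 1) * (b ^ d * b) := by
      gcongr
      · exact erosionRadius_le hb hM hMb hL hLb
      · linarith
      · linarith
    _ = b ^ ((d + 3) * m + 4 * d + 7) := by ring
  have hrest : D * d * L + D ≤ b ^ ((d + 3) * m + 4 * d + 7) := calc
    D * d * L + D ≤ D * d * L + D * L := by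
      gcongr
      exact le_mul_of_one_le_right (by linarith) hL
    _ = D * (d + 1) * L := by ring
    _ ≤ b * b ^ d * b ^ (2 * m + d + 4) := by
      gcongr
      · linarith
      · exact succ_le_pow hb d
    _ = b ^ (2 * m + 2 * d + 5) := by ring
    _ ≤ b ^ ((d + 3) * m + 4 * d + 7) := pow_le_pow_right₀ (by linarith) (by nlinarith)
  calc erosionRadius d M L * ((2 * D + 1) ^ d * D) + D * d * L + D
      ≤ b ^ ((d + 3) * m + 4 * d + 7) * 2 := by linarith
    _ ≤ b ^ ((d + 3) * m + 4 * d + 7) * b := by gcongr; linarith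
    _ = b ^ ((d + 3) * m + 4 * d + 8) := by ring

lemma erosionRadius_rankGap_mul_add_le {D : ℤ} (hM : 1 ≤ M) (hMb : M ≤ (4 * D) ^ (d + 1) ^ 2)
    (hn : 1 ≤ n) (hnD : n ≤ D) :
    erosionRadius d M (4 * rankGap d M (2 * M * n)) * ((2 * D + 1) ^ d * D) +
      D * d * (4 * rankGap d M (2 * M * n)) + D ≤ (4 * D) ^ (2 * (d + 2) ^ 3) := by
  have hgap := rankGap_pos (d := d) (r := 2 * M * n) hM (by nlinarith)
  calc _ ≤ (4 * D) ^ ((d + 3) * (d + 1) ^ 2 + 4 * d + 8) :=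
        erosionRadius_mul_add_le hM hMb (by linarith)
          (four_mul_rankGap_le (by linarith) (by linarith) hMb (by linarith) (by linarith))
          (hn.trans hnD) le_rfl
    _ ≤ (4 * D) ^ (2 * (d + 2) ^ 3) := pow_le_pow_right₀ (by linarith) (by nlinarith)

end Numerics

omit [DecidableEq V] in
theorem exists_lexSetup (A : V → Finset (Fin d → ℤ)) {e : ℕ} (hn : 1 ≤ Fintype.card V)
    (he : 1 ≤ e) : ∃ P : LexSetup A e, ∀ s, P.IsSettled s → ∀ i,
      -(4 * Fintype.card V * e) ^ (2 * (d + 2) ^ 3) ≤ s.total i := by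
  obtain ⟨D, hD⟩ : ∃ D, D = Fintype.card V * e := ⟨_, rfl⟩
  have hD₁ : 1 ≤ D := hD ▸ Nat.mul_pos hn he
  have hnD : Fintype.card V ≤ D := hD ▸ Nat.le_mul_of_pos_right _ he
  obtain ⟨C, M, hC, hM⟩ : ∃ C M, IsFaceReps (box d D) C M ∧ M ≤ (4 * D) ^ (d + 1) ^ 2 := by
    obtain ⟨C, hC⟩ := exists_isFaceReps_box (d := d) hD₁
    exact ⟨C, _, hC, by exact_mod_cast factorial_mul_pow_le d hD₁⟩
  obtain ⟨N, hN, hNA⟩ := exists_forall_abs_dot_sub_lt C A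
  have hr : 1 ≤ 2 * M * Fintype.card V := by nlinarith [hC.one_le]
  let P : LexSetup A e :=
    { W := box d D, C, M, N
      r := 2 * M * Fintype.card V
      R := erosionRadius d M (4 * rankGap d M (2 * M * Fintype.card V))
      δ := geomDepth d M (4 * rankGap d M (2 * M * Fintype.card V))
      isFaceReps := hC
      mem_of_abs_le := fun w hw => mem_box.2 fun i => (hw i).trans (by rw [hD]; push_cast; rfl)
      isErosion := isErosion_geomDepth hC.one_le (by linarith [rankGap_pos (d := d) hC.one_le hr])
      one_le_width := hr
      mul_card_le_width := le_rfl
      one_le_base := hN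
      abs_dot_sub_lt := hNA }
  refine ⟨P, fun s hs i => le_trans (neg_le_neg ?_) (hs.neg_le_total rfl hD.ge i)⟩
  rw [mul_assoc (4 : ℤ), ← Nat.cast_mul (Fintype.card V) e, ← hD]
  exact erosionRadius_rankGap_mul_add_le hC.one_le hM (by exact_mod_cast hn)
    (by exact_mod_cast hnD)

end MWG

/-- Pareto limit bound: if some initial credit `b ∈ ℕ^d`
lets Player 1 win the energy game from `v₀`, then some initial credit of norm
at most `(4|V|·‖E‖)^(2(d+2)³)` does. -/
theorem pareto_limit_bound
    (V : Type) [Fintype V] [DecidableEq V] (d : ℕ) (G : MWG V d)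
    (hE : 0 < enorm G) (v₀ : V)
    (hwin : ∃ b : Fin d → ℕ, P1WinsEnergy G b v₀) :
    ∃ b : Fin d → ℕ,
      (Finset.univ.sup b) ≤ (4 * Fintype.card V * enorm G) ^ (2 * (d + 2)^3) ∧
      P1WinsEnergy G b v₀ := by
  obtain ⟨b, hb⟩ := hwin
  obtain ⟨K, hK, h₀, hKb⟩ := MWG.exists_isInvariant_of_p1WinsEnergy hb
  obtain ⟨A, hA, hA₀⟩ := MWG.exists_isClosedFamily hK h₀ hKb
  obtain ⟨P, hP⟩ := MWG.exists_lexSetup A (Fintype.card_pos_iff.2 ⟨v₀⟩) hE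
  refine ⟨fun _ => (4 * Fintype.card V * enorm G) ^ (2 * (d + 2) ^ 3),
    Finset.sup_le fun _ _ => le_rfl, (hA.isInvariant_configs P).p1WinsEnergy ?_ ?_⟩
  · exact ⟨_, P.isSettled_init hA₀, rfl, by simp [MWG.LexState.total, MWG.totalLabel]⟩
  · rintro c ⟨s, hs, -, hle⟩ i
    push_cast
    linarith [hP s hs i, hle i]
end

section
/- Let ⟨V,E,d⟩ be a multi-weighted game graph in which every cycle contains at least one Player-1 vertex, and let σ be a strategy of Player 2 from a vertex v₀ in the first-cycle bounding game G⟨V,E,d⟩. Define the strategy σ̃ of Player 2 in the bounding game Γ⟨V,E,d⟩ which, at any Player-2 vertex, chooses the edge specified by σ, and whenever a cycle is formed, cuts it out of its memory and continues playing according to σ. If σ is winning for Player 2 in G⟨V,E,d⟩ from v₀, then σ̃ is winning for Player 2 in Γ⟨V,E,d⟩ from v₀. -/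
variable {V : Type} [Fintype V] [DecidableEq V] {d : ℕ}

/-! Perfect half-spaces in `ℚ^d`. -/

/-- Vectors of `ℚ^d`. -/
abbrev QVec (d : ℕ) := Fin d → ℚ

/-- The entries of `v` all have absolute value at most `M`. -/
def QNormLe (M : ℕ) {d : ℕ} (v : QVec d) : Prop := ∀ i, |v i| ≤ (M : ℚ)

/-- A subspace of `ℚ^d` is `M`-generated if it is spanned by a set of vectors
of norm at most `M`. -/
def MGenSpace (M : ℕ) {d : ℕ} (S : Submodule ℚ (QVec d)) : Prop :=
  ∃ B : Set (QVec d), (∀ v ∈ B, QNormLe M v) ∧ Submodule.span ℚ B = S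

/-- `H` is an open half-space of the subspace `S`: the set of points of `S` on
which some linear functional, not vanishing identically on `S`, is negative. -/
def IsOpenHalfOf {d : ℕ} (S : Submodule ℚ (QVec d)) (H : Set (QVec d)) : Prop :=
  ∃ f : QVec d →ₗ[ℚ] ℚ, (∃ v ∈ S, f v ≠ 0) ∧ H = {v | v ∈ S ∧ f v < 0}

/-- `H` is an `M`-generated open half-space of the subspace `S`: moreover its
boundary is the span of a set of vectors of norm at most `M`. -/
def IsMGenHalfOf (M : ℕ) {d : ℕ} (S : Submodule ℚ (QVec d)) (H : Set (QVec d)) : Prop :=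
  ∃ f : QVec d →ₗ[ℚ] ℚ, (∃ v ∈ S, f v ≠ 0) ∧ H = {v | v ∈ S ∧ f v < 0} ∧
    ∃ B : Set (QVec d), (∀ v ∈ B, QNormLe M v) ∧
      (Submodule.span ℚ B : Set (QVec d)) = {v | v ∈ S ∧ f v = 0}

/-- Auxiliary chain of subspaces: `chainAux d f i` is the subspace obtained
from `ℚ^d` by intersecting with the kernels of `f d, f (d-1), …, f (d-i+1)`. -/
def chainAux (d : ℕ) (f : ℕ → (QVec d →ₗ[ℚ] ℚ)) : ℕ → Submodule ℚ (QVec d)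
  | 0 => ⊤
  | (i+1) => chainAux d f i ⊓ LinearMap.ker (f (d - i))

/-- `chainSub d f j` is the subspace on which the component half-space `H_j`
lives: `chainSub d f d = ℚ^d` and `chainSub d f j = chainSub d f (j+1) ∩ ker (f (j+1))`. -/
def chainSub (d : ℕ) (f : ℕ → (QVec d →ₗ[ℚ] ℚ)) (j : ℕ) : Submodule ℚ (QVec d) :=
  chainAux d f (d - j)

/-- The component open half-space `H_j = {v ∈ S_j | f j v < 0}`. -/
def halfComp (d : ℕ) (f : ℕ → (QVec d →ₗ[ℚ] ℚ)) (j : ℕ) : Set (QVec d) :=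
  {v | v ∈ chainSub d f j ∧ f j v < 0}

/-- The boundary of the component half-space `H_j`. -/
def bdComp (d : ℕ) (f : ℕ → (QVec d →ₗ[ℚ] ℚ)) (j : ℕ) : Set (QVec d) :=
  {v | v ∈ chainSub d f j ∧ f j v = 0}

/-- The chain condition: for `k ≤ j ≤ d`, the functional `f j` does not vanish
identically on `S_j`, so that each `H_j` is a `j`-dimensional open half-space
of `S_j`. -/
def ChainCond (d k : ℕ) (f : ℕ → (QVec d →ₗ[ℚ] ℚ)) : Prop :=
  ∀ j, k ≤ j → j ≤ d → ∃ v ∈ chainSub d f j, f j v ≠ 0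

/-- The union `H_d ∪ ⋯ ∪ H_k`. -/
def PPHSSet (d k : ℕ) (f : ℕ → (QVec d →ₗ[ℚ] ℚ)) : Set (QVec d) :=
  ⋃ j ∈ Set.Icc k d, halfComp d f j

/-- `A` is a `k`-perfect half-space of `ℚ^d` (for `k = d+1`, the empty set). -/
def IsPPHS (d k : ℕ) (A : Set (QVec d)) : Prop :=
  1 ≤ k ∧ k ≤ d + 1 ∧ ∃ f, ChainCond d k f ∧ A = PPHSSet d k f

/-- `A` is a partially-perfect half-space of `ℚ^d`. -/
def IsPartialPHS (d : ℕ) (A : Set (QVec d)) : Prop := ∃ k, IsPPHS d k A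

/-- `A` is an `M`-generated `k`-perfect half-space of `ℚ^d`: each component
open half-space has an `M`-generated boundary. -/
def IsMGenPPHS (M d k : ℕ) (A : Set (QVec d)) : Prop :=
  1 ≤ k ∧ k ≤ d + 1 ∧ ∃ f, ChainCond d k f ∧
    (∀ j, k ≤ j → j ≤ d → ∃ B : Set (QVec d), (∀ v ∈ B, QNormLe M v) ∧
      (Submodule.span ℚ B : Set (QVec d)) = bdComp d f j) ∧
    A = PPHSSet d k f

/-- `A` is an `M`-generated perfect half-space of `ℚ^d`. -/
def IsMGenPerfectHS (M d : ℕ) (A : Set (QVec d)) : Prop := IsMGenPPHS M d 1 A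

/-! The first-cycle bounding game `G⟨V,E,d⟩`. -/

/-- A colour: a set of vectors of `ℚ^d` (intended: a perfect half-space). -/
abbrev Colour (d : ℕ) := Set (QVec d)

/-- A coloured history: past configurations, each together with the colour
chosen by Player 2 at it if it is a Player-1 vertex. -/
abbrev CHist (V : Type) (d : ℕ) := List (Conf V d × Option (Colour d))

variable {V : Type} [Fintype V] [DecidableEq V] {d : ℕ}

/-- Record a colour at a configuration: only Player-1 vertices are coloured. -/
def colOpt (G : MWG V d) (c : Conf V d) (H : Colour d) : Option (Colour d) :=
  if c.1 ∈ G.P1 then some H else none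

/-- The coloured history before instant `n` of a play `ρ` with colour
choices `χ`. -/
def chist (G : MWG V d) (ρ : ℕ → Conf V d) (χ : ℕ → Colour d) (n : ℕ) : CHist V d :=
  (List.range n).map fun j => (ρ j, colOpt G (ρ j) (χ j))

/-- A strategy of Player 2 in the first-cycle bounding game: at Player-1
vertices choose a colour, at Player-2 vertices choose a move. -/
structure FCStratP2 (V : Type) (d : ℕ) where
  col : CHist V d → Conf V d → Colour d
  edge : CHist V d → Conf V d → (Fin d → ℤ) × V

/-- A strategy of Player 1 in the first-cycle bounding game: at Player-1
vertices, given moreover the colour just chosen by Player 2, choose a move. -/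
abbrev FCStratP1 (V : Type) (d : ℕ) :=
  CHist V d → Conf V d → Colour d → (Fin d → ℤ) × V

/-- Validity of a Player 2 first-cycle strategy: colours are
`|V|·‖E‖`-generated perfect half-spaces of `ℚ^d`, and moves at Player-2
vertices follow edges of the graph. -/
def ValidFCP2 (G : MWG V d) (σ : FCStratP2 V d) : Prop :=
  (∀ h c, c.1 ∈ G.P1 →
    IsMGenPerfectHS (Fintype.card V * enorm G) d (σ.col h c)) ∧
  (∀ h c, c.1 ∉ G.P1 → (c.1, (σ.edge h c).1, (σ.edge h c).2) ∈ G.E)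

/-- Validity of a Player 1 first-cycle strategy: moves at Player-1 vertices
follow edges of the graph. -/
def ValidFCP1 (G : MWG V d) (τ : FCStratP1 V d) : Prop :=
  ∀ h c H, c.1 ∈ G.P1 → (c.1, (τ h c H).1, (τ h c H).2) ∈ G.E

/-- The colours chosen along a play are legal moves of the first-cycle game:
at every Player-1 vertex, a `|V|·‖E‖`-generated perfect half-space. -/
def LegalCols (G : MWG V d) (ρ : ℕ → Conf V d) (χ : ℕ → Colour d) : Prop :=
  ∀ n, (ρ n).1 ∈ G.P1 → IsMGenPerfectHS (Fintype.card V * enorm G) d (χ n)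

/-- Consistency of a coloured play with a Player 2 first-cycle strategy. -/
def FCConsistentP2 (G : MWG V d) (σ : FCStratP2 V d)
    (ρ : ℕ → Conf V d) (χ : ℕ → Colour d) : Prop :=
  ∀ n, ((ρ n).1 ∈ G.P1 → χ n = σ.col (chist G ρ χ n) (ρ n)) ∧
    ((ρ n).1 ∉ G.P1 →
      ρ (n+1) = ((σ.edge (chist G ρ χ n) (ρ n)).2,
                 (ρ n).2 + (σ.edge (chist G ρ χ n) (ρ n)).1))

/-- Consistency of a coloured play with a Player 1 first-cycle strategy. -/
def FCConsistentP1 (G : MWG V d) (τ : FCStratP1 V d)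
    (ρ : ℕ → Conf V d) (χ : ℕ → Colour d) : Prop :=
  ∀ n, (ρ n).1 ∈ G.P1 →
    ρ (n+1) = ((τ (chist G ρ χ n) (ρ n) (χ n)).2,
               (ρ n).2 + (τ (chist G ρ χ n) (ρ n) (χ n)).1)

/-- `n₀ < n₁` witness the first time a vertex is visited twice along `ρ`,
producing the first (simple) cycle of the play. -/
def FirstRepeat (ρ : ℕ → Conf V d) (n₀ n₁ : ℕ) : Prop :=
  n₀ < n₁ ∧ (ρ n₀).1 = (ρ n₁).1 ∧ ∀ i j, i < j → j < n₁ → (ρ i).1 ≠ (ρ j).1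

/-- Cast an integer vector into `ℚ^d`. -/
def intQ {d : ℕ} (u : Fin d → ℤ) : QVec d := fun i => (u i : ℚ)

/-- Player 2 wins the first cycle (from `n₀` to `n₁`): its total weight lies
in the largest partially-perfect half-space of `ℚ^d` contained in all the
colours occurring in the cycle. -/
def CycleWinP2 (G : MWG V d) (ρ : ℕ → Conf V d) (χ : ℕ → Colour d)
    (n₀ n₁ : ℕ) : Prop :=
  ∃ A : Colour d, IsPartialPHS d A ∧
    (∀ j, n₀ ≤ j → j < n₁ → (ρ j).1 ∈ G.P1 → A ⊆ χ j) ∧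
    (∀ B : Colour d, IsPartialPHS d B →
      (∀ j, n₀ ≤ j → j < n₁ → (ρ j).1 ∈ G.P1 → B ⊆ χ j) → B ⊆ A) ∧
    intQ ((ρ n₁).2 - (ρ n₀).2) ∈ A

/-- Player 2 wins the first-cycle bounding game from `v₀`. -/
def P2WinsFC (G : MWG V d) (v₀ : V) : Prop :=
  ∃ σ : FCStratP2 V d, ValidFCP2 G σ ∧
    ∀ ρ χ, IsPlay G v₀ ρ → LegalCols G ρ χ → FCConsistentP2 G σ ρ χ →
      ∀ n₀ n₁, FirstRepeat ρ n₀ n₁ → CycleWinP2 G ρ χ n₀ n₁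

/-- Player 1 wins the first-cycle bounding game from `v₀`. -/
def P1WinsFC (G : MWG V d) (v₀ : V) : Prop :=
  ∃ τ : FCStratP1 V d, ValidFCP1 G τ ∧
    ∀ ρ χ, IsPlay G v₀ ρ → LegalCols G ρ χ → FCConsistentP1 G τ ρ χ →
      ∀ n₀ n₁, FirstRepeat ρ n₀ n₁ → ¬ CycleWinP2 G ρ χ n₀ n₁

/-! The strategy `σ̃` of Player 2 in the bounding game obtained from a
strategy `σ` of Player 2 in the first-cycle bounding game: at Player-2
vertices it chooses the edge specified by `σ` (for the coloured simple path
kept in its memory), and whenever a cycle is formed it cuts it out of its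
memory and continues playing according to `σ`. -/

variable {V : Type} [Fintype V] [DecidableEq V] {d : ℕ}

/-- One memory update: from memory `(h, c)` (the coloured simple path `h`
followed by the current virtual configuration `c`), after the move `uv`,
append `c` (with the colour `σ` chooses at it, if it is a Player-1 vertex);
if the new vertex closes a cycle, cut the cycle out of the memory, going back
to the earlier occurrence of that vertex. -/
def stepMem (G : MWG V d) (σ : FCStratP2 V d) :
    CHist V d × Conf V d → ((Fin d → ℤ) × V) → CHist V d × Conf V d :=
  fun m uv =>
    let h := m.1
    let c := m.2
    let c' : Conf V d := (uv.2, c.2 + uv.1)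
    let h' := h ++ [(c, colOpt G c (σ.col h c))]
    match h'.findIdx? (fun e => decide (e.1.1 = uv.2)) with
    | none => (h', c')
    | some j => (h'.take j, (h'.getD j (c', none)).1)

/-- The memory reached after the real history `c₀ :: rest`: fold the memory
update along the moves of the real play (the fold state also records the last
real configuration, in order to recover the weights of the moves). -/
def memFold (G : MWG V d) (σ : FCStratP2 V d) (c₀ : Conf V d)
    (rest : List (Conf V d)) : (CHist V d × Conf V d) × Conf V d :=
  rest.foldl (fun s c => (stepMem G σ s.1 (c.2 - s.2.2, c.1), c)) (([], c₀), c₀)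

/-- The strategy `σ̃` of Player 2 in the bounding game induced by the
first-cycle strategy `σ`: it plays the edge that `σ` specifies for the
coloured simple path in its memory. -/
def tildeStrat (G : MWG V d) (σ : FCStratP2 V d) : Strat V d :=
  fun h c =>
    match h with
    | [] => σ.edge [] c
    | c₀ :: rest =>
        let m := (memFold G σ c₀ (rest ++ [c])).1
        σ.edge m.1 m.2

/-!
Follow `σ̃` in the tree of paths consistent with `σ`, and attach the weight of every cycle that is
cut out to the state at which it is cut. From a Player-2 state the continuation is determined by `σ`
up to the first Player-1 state, and the weight of a cycle cut at `m` lies in the colour of that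
state. This is an invariant: when a cycle closes, its own weight lies in a partially-perfect
half-space `A` contained in all the colours on it, and so do all sums with weights attached along
it. Indeed, `A` is the set of vectors with lexicographically negative image under an additive map,
so it is closed under adding any vector whose opposite it does not contain, in particular any vector
of a half-space containing `A`.

Since simple paths are bounded in length, the play visits infinitely often states of some length `L`
and eventually none that are shorter. Between two such instants `p < q` the memory only ever extends
the path at `p`, so it is the same at both, and the weight gained in between belongs to a colour. It
is therefore nonzero, so the weights at these infinitely many instants are pairwise distinct, and
they cannot all be bounded by one number.
-/

section HalfSpaces

variable {d : ℕ}

lemma mem_chainAux {f : ℕ → QVec d →ₗ[ℚ] ℚ} {n : ℕ} {v : QVec d} :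
    v ∈ chainAux d f n ↔ ∀ i < n, f (d - i) v = 0 := by
  induction n with
  | zero => simp [chainAux]
  | succ n ih => rw [chainAux, Submodule.mem_inf, ih, LinearMap.mem_ker, Nat.forall_lt_succ_right]

lemma mem_chainSub {f : ℕ → QVec d →ₗ[ℚ] ℚ} {j : ℕ} {v : QVec d} :
    v ∈ chainSub d f j ↔ ∀ i, j < i → i ≤ d → f i v = 0 := by
  rw [chainSub, mem_chainAux]
  refine ⟨fun h i hji hid ↦ ?_, fun h i hi ↦ h (d - i) (by omega) (by omega)⟩
  simpa only [Nat.sub_sub_self hid] using h (d - i) (by omega)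

/-- The values `f d v, …, f k v`, ordered lexicographically with the largest index first (whence the
order dual). The half-space `PPHSSet d k f` consists of the vectors with negative value. -/
def lexEval (k : ℕ) (f : ℕ → QVec d →ₗ[ℚ] ℚ) : QVec d →+ Lex ((Set.Icc k d)ᵒᵈ → ℚ) where
  toFun v := toLex fun i ↦ f i.ofDual.1 v
  map_zero' := funext fun i ↦ map_zero (f i.ofDual.1)
  map_add' v w := funext fun i ↦ map_add (f i.ofDual.1) v w

lemma mem_PPHSSet_iff_lexEval_neg {k : ℕ} {f : ℕ → QVec d →ₗ[ℚ] ℚ} {v : QVec d} :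
    v ∈ PPHSSet d k f ↔ lexEval k f v < 0 := by
  simp only [PPHSSet, halfComp, Set.mem_iUnion, Set.mem_ofPred_eq, mem_chainSub, exists_prop]
  constructor
  · rintro ⟨j, hj, hzero, hneg⟩
    exact ⟨OrderDual.toDual ⟨j, hj⟩, fun i hi ↦ hzero _ hi i.ofDual.2.2, hneg⟩
  · rintro ⟨j, hzero, hneg⟩
    refine ⟨j.ofDual, j.ofDual.2, fun i hji hid ↦ ?_, hneg⟩
    exact hzero (OrderDual.toDual ⟨i, j.ofDual.2.1.trans hji.le, hid⟩) hji

lemma IsPartialPHS.exists_mem_iff_lexEval_neg {A : Set (QVec d)} (hA : IsPartialPHS d A) :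
    ∃ k f, ∀ v, v ∈ A ↔ lexEval k f v < 0 := by
  obtain ⟨k, -, -, f, -, rfl⟩ := hA
  exact ⟨k, f, fun _ ↦ mem_PPHSSet_iff_lexEval_neg⟩

lemma IsPartialPHS.neg_notMem {A : Set (QVec d)} (hA : IsPartialPHS d A) {v : QVec d}
    (hv : v ∈ A) : -v ∉ A := by
  obtain ⟨k, f, hmem⟩ := hA.exists_mem_iff_lexEval_neg
  rw [hmem] at hv ⊢
  rw [map_neg]
  exact (neg_pos.2 hv).not_gt

lemma IsPartialPHS.neg {A : Set (QVec d)} (hA : IsPartialPHS d A) :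
    IsPartialPHS d {v | -v ∈ A} := by
  obtain ⟨k, hk, hkd, f, hf, rfl⟩ := hA
  refine ⟨k, hk, hkd, fun i ↦ -f i, fun j hkj hjd ↦ ?_, ?_⟩
  · simpa only [mem_chainSub, LinearMap.neg_apply, neg_eq_zero, ne_eq] using hf j hkj hjd
  · ext v
    simp only [PPHSSet, halfComp, Set.mem_iUnion, Set.mem_ofPred_eq, mem_chainSub, map_neg,
      LinearMap.neg_apply]

lemma IsPartialPHS.zero_notMem {A : Set (QVec d)} (hA : IsPartialPHS d A) : (0 : QVec d) ∉ A :=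
  fun h ↦ hA.neg_notMem h (by rwa [neg_zero])

lemma IsPartialPHS.add_mem_of_neg_notMem {A : Set (QVec d)} (hA : IsPartialPHS d A)
    {v w : QVec d} (hv : v ∈ A) (hw : -w ∉ A) : v + w ∈ A := by
  obtain ⟨k, f, hmem⟩ := hA.exists_mem_iff_lexEval_neg
  rw [hmem] at hv hw ⊢
  rw [map_neg] at hw
  rw [map_add]
  exact add_neg_of_neg_of_nonpos hv (not_lt.1 fun h ↦ hw (neg_neg_of_pos h))

lemma IsPartialPHS.add_mem_of_subset {A H : Set (QVec d)} (hA : IsPartialPHS d A)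
    (hH : IsPartialPHS d H) (hAH : A ⊆ H) {v w : QVec d} (hv : v ∈ A) (hw : w ∈ H) : v + w ∈ A :=
  hA.add_mem_of_neg_notMem hv fun h ↦ hH.neg_notMem hw (hAH h)

lemma IsMGenPerfectHS.isPartialPHS {M : ℕ} {A : Set (QVec d)} (hA : IsMGenPerfectHS M d A) :
    IsPartialPHS d A := by
  obtain ⟨hk, hkd, f, hf, -, rfl⟩ := hA
  exact ⟨1, hk, hkd, f, hf, rfl⟩

lemma intQ_add (u v : Fin d → ℤ) : intQ (u + v) = intQ u + intQ v := by
  ext; simp [intQ]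

lemma intQ_sub (u v : Fin d → ℤ) : intQ (u - v) = intQ u - intQ v := by
  ext; simp [intQ]

lemma finite_setOf_vnorm_le (B : ℕ) : {u : Fin d → ℤ | vnorm u ≤ B}.Finite := by
  refine (Set.finite_Icc (fun _ ↦ -(B : ℤ)) fun _ ↦ (B : ℤ)).subset fun u hu ↦ ?_
  have hcoord (i : Fin d) : |u i| ≤ (B : ℤ) := by
    simp only [Set.mem_ofPred_eq, vnorm, Finset.sup_le_iff, Finset.mem_univ, true_imp_iff] at hu
    rw [Int.abs_eq_natAbs]
    exact_mod_cast hu i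
  exact ⟨fun i ↦ neg_le_of_abs_le (hcoord i), fun i ↦ le_of_abs_le (hcoord i)⟩

end HalfSpaces

section Sequences

lemma exists_seq_through_rel {α : Type*} {r : α → α → Prop} (hserial : ∀ a, ∃ b, r a b) {a b c : α}
    (hab : Relation.ReflTransGen r a b) (hbc : r b c) :
    ∃ s : ℕ → α, s 0 = a ∧ (∀ n, r (s n) (s (n + 1))) ∧ ∃ n, s n = b ∧ s (n + 1) = c := by
  induction hab using Relation.ReflTransGen.head_induction_on with
  | refl =>
    choose next hnext using hserial
    refine ⟨fun n ↦ n.casesOn b fun n ↦ next^[n] c, rfl, ?_, 0, rfl, rfl⟩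
    rintro (_ | n)
    · exact hbc
    · simpa only [Function.iterate_succ_apply'] using hnext (next^[n] c)
  | @head a _ haa' _ ih =>
    obtain ⟨s, rfl, hs, n, hn⟩ := ih
    refine ⟨fun n ↦ n.casesOn a s, rfl, ?_, n + 1, hn⟩
    rintro (_ | n)
    exacts [haa', hs n]

lemma reflTransGen_seq {α : Type*} {r : α → α → Prop} {s : ℕ → α} (hs : ∀ n, r (s n) (s (n + 1)))
    {i j : ℕ} (hij : i ≤ j) : Relation.ReflTransGen r (s i) (s j) :=
  (reflTransGen_of_succ_of_le (fun i j ↦ r (s i) (s j)) (fun i _ ↦ hs i) hij).lift s fun _ _ ↦ id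

lemma exists_frequently_eq_eventually_ge {ι : Type*} {l : Filter ι} [l.NeBot] {f : ι → ℕ} {N : ℕ}
    (hf : ∀ i, f i ≤ N) : ∃ L, (∃ᶠ i in l, f i = L) ∧ ∀ᶠ i in l, L ≤ f i := by
  classical
  have hex : ∃ L, ∃ᶠ i in l, f i ≤ L := ⟨N, (Filter.Eventually.of_forall hf).frequently⟩
  have hge : ∀ᶠ i in l, Nat.find hex ≤ f i := by
    by_contra h
    have hlt : ∃ᶠ i in l, f i < Nat.find hex := by simpa using h
    obtain ⟨i, hi⟩ := hlt.exists
    exact Nat.find_min hex (m := Nat.find hex - 1) (by omega) (hlt.mono fun i hi ↦ by omega)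
  exact ⟨_, ((Nat.find_spec hex).and_eventually hge).mono fun i hi ↦ hi.1.antisymm hi.2, hge⟩

end Sequences

lemma CycleWinP2.exists_mem_P1 {G : MWG V d} {ρ : ℕ → Conf V d} {χ : ℕ → Colour d} {n₀ n₁ : ℕ}
    (h : CycleWinP2 G ρ χ n₀ n₁) : ∃ j, n₀ ≤ j ∧ j < n₁ ∧ (ρ j).1 ∈ G.P1 := by
  obtain ⟨A, hA, -, hmax, hmem⟩ := h
  by_contra! hP2
  -- Without colours to constrain it, the largest half-space `A` contains its opposite.
  have hneg : {v | -v ∈ A} ⊆ A := hmax _ hA.neg fun j hj hj' hP1 ↦ (hP2 j hj hj' hP1).elim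
  exact hA.neg_notMem hmem (hneg (by rwa [Set.mem_ofPred_eq, neg_neg]))

/-- A memory state of `σ̃`: a coloured path followed by the current configuration. The memory states
are the nodes of the tree of paths. -/
abbrev Memory (V : Type) (d : ℕ) := CHist V d × Conf V d

namespace FCStratP2

variable {G : MWG V d} {σ : FCStratP2 V d} {v₀ : V}

section Tree

/-- The coloured path of a memory state, including its current configuration. -/
def trail (σ : FCStratP2 V d) (G : MWG V d) (m : Memory V d) : CHist V d :=
  m.1 ++ [(m.2, colOpt G m.2 (σ.col m.1 m.2))]

/-- The memory state obtained by playing `uv` without cutting out any cycle. -/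
def push (σ : FCStratP2 V d) (G : MWG V d) (m : Memory V d) (uv : (Fin d → ℤ) × V) : Memory V d :=
  (σ.trail G m, uv.2, m.2.2 + uv.1)

/-- Moves that can be made from a memory state when Player 2 follows `σ`. -/
def Legal (σ : FCStratP2 V d) (G : MWG V d) (m : Memory V d) (uv : (Fin d → ℤ) × V) : Prop :=
  (m.2.1, uv) ∈ G.E ∧ (m.2.1 ∉ G.P1 → uv = σ.edge m.1 m.2)

/-- The child relation of the tree of paths consistent with `σ`. -/
def Move (σ : FCStratP2 V d) (G : MWG V d) (m m' : Memory V d) : Prop :=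
  ∃ uv, σ.Legal G m uv ∧ σ.push G m uv = m'

/-- The prefix order of the tree of paths consistent with `σ`. -/
abbrev Reaches (σ : FCStratP2 V d) (G : MWG V d) : Memory V d → Memory V d → Prop :=
  Relation.ReflTransGen (σ.Move G)

/-- The initial memory state, the root of the tree of paths from `v₀`. -/
def root (v₀ : V) : Memory V d := ([], v₀, 0)

/-- No vertex occurs twice on the path of the memory state, its current vertex included. -/
def IsSimple (σ : FCStratP2 V d) (G : MWG V d) (m : Memory V d) : Prop :=
  ((σ.trail G m).map (·.1.1)).Nodup

variable {a b m m' m'' : Memory V d} {uv : (Fin d → ℤ) × V}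

lemma trail_injective : Function.Injective (σ.trail G) := by
  rintro ⟨h, c⟩ ⟨h', c'⟩ heq
  obtain ⟨rfl, hc⟩ := List.append_singleton_inj.1 heq
  exact Prod.ext rfl (congrArg Prod.fst hc)

lemma Move.fst_eq_trail (h : σ.Move G m m') : m'.1 = σ.trail G m := by
  obtain ⟨_, -, rfl⟩ := h
  rfl

lemma Move.left_unique (h : σ.Move G m m'') (h' : σ.Move G m' m'') : m = m' :=
  trail_injective (h.fst_eq_trail.symm.trans h'.fst_eq_trail)

lemma Move.eq_push (h : σ.Move G m m') (hm : m.2.1 ∉ G.P1) :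
    m' = σ.push G m (σ.edge m.1 m.2) := by
  obtain ⟨uv, huv, rfl⟩ := h
  rw [huv.2 hm]

lemma Move.length_eq (h : σ.Move G m m') : m'.1.length = m.1.length + 1 := by
  simp [h.fst_eq_trail, trail]

lemma exists_move (hval : ValidFCP2 G σ) (m : Memory V d) : ∃ m', σ.Move G m m' := by
  by_cases hm : m.2.1 ∈ G.P1
  · obtain ⟨u, v', hE⟩ := G.serial m.2.1
    exact ⟨_, (u, v'), ⟨hE, fun h ↦ (h hm).elim⟩, rfl⟩
  · exact ⟨_, σ.edge m.1 m.2, ⟨hval.2 _ _ hm, fun _ ↦ rfl⟩, rfl⟩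

lemma Reaches.length_le (h : σ.Reaches G a b) : a.1.length ≤ b.1.length := by
  induction h with
  | refl => exact le_rfl
  | tail _ hmove ih => exact ih.trans (by rw [hmove.length_eq]; exact Nat.le_succ _)

lemma Reaches.eq_of_length_le (h : σ.Reaches G a b) (hle : b.1.length ≤ a.1.length) : a = b := by
  obtain rfl | ⟨c, hac, hcb⟩ := h.cases_tail
  · rfl
  · have := Reaches.length_le hac
    have := hcb.length_eq
    omega

lemma Reaches.trail_prefix (h : σ.Reaches G a m) : σ.trail G a <+: σ.trail G m := by
  induction h with
  | refl => exact List.prefix_rfl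
  | tail _ hmove ih =>
    rw [← hmove.fst_eq_trail] at ih
    exact ih.trans (List.prefix_append _ _)

lemma IsSimple.of_reaches (hm : σ.IsSimple G m) (h : σ.Reaches G a m) : σ.IsSimple G a :=
  (h.trail_prefix.map _).sublist.nodup hm

lemma isSimple_push_iff (hm : σ.IsSimple G m) :
    σ.IsSimple G (σ.push G m uv) ↔ ∀ x ∈ σ.trail G m, x.1.1 ≠ uv.2 := by
  have hpush : (σ.trail G (σ.push G m uv)).map (·.1.1) =
      (σ.trail G m).map (·.1.1) ++ [uv.2] := by
    rw [trail, List.map_append]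
    rfl
  rw [IsSimple, hpush, ← List.concat_eq_append, List.nodup_concat]
  refine (and_iff_left hm).trans ?_
  simp only [List.mem_map, not_exists, not_and, ne_eq]

lemma IsSimple.length_lt_card (hm : σ.IsSimple G m) : m.1.length < Fintype.card V := by
  simpa only [trail, List.map_append, List.length_append, List.length_map, List.length_singleton,
    List.map_singleton, Nat.succ_le_iff] using List.Nodup.length_le_card hm

lemma not_isSimple_push (hm : σ.IsSimple G m) (ham : σ.Reaches G a m) (hcycle : a.2.1 = uv.2) :
    ¬ σ.IsSimple G (σ.push G m uv) := by
  have hmem : (a.2, colOpt G a.2 (σ.col a.1 a.2)) ∈ σ.trail G a :=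
    List.mem_append_right _ (List.mem_singleton_self _)
  exact fun h ↦ (isSimple_push_iff hm).1 h _ (ham.trail_prefix.subset hmem) hcycle

/-- `s` is an infinite branch of the tree of paths from `v₀` consistent with `σ`. -/
def IsBranch (σ : FCStratP2 V d) (G : MWG V d) (v₀ : V) (s : ℕ → Memory V d) : Prop :=
  s 0 = root v₀ ∧ ∀ n, σ.Move G (s n) (s (n + 1))

/-- The colour choices of `σ` along a branch. -/
def branchCol (σ : FCStratP2 V d) (s : ℕ → Memory V d) (n : ℕ) : Colour d := σ.col (s n).1 (s n).2

variable {s : ℕ → Memory V d}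

lemma IsBranch.chist_eq (hs : σ.IsBranch G v₀ s) (n : ℕ) :
    chist G (fun n ↦ (s n).2) (σ.branchCol s) n = (s n).1 := by
  induction n with
  | zero => rw [hs.1]; rfl
  | succ n ih =>
    rw [chist, List.range_succ, List.map_append, ← chist, ih, (hs.2 n).fst_eq_trail]
    rfl

lemma IsBranch.length_eq (hs : σ.IsBranch G v₀ s) (n : ℕ) : (s n).1.length = n := by
  rw [← hs.chist_eq, chist, List.length_map, List.length_range]

lemma IsBranch.isPlay (hs : σ.IsBranch G v₀ s) : IsPlay G v₀ fun n ↦ (s n).2 := by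
  refine ⟨congrArg Prod.snd hs.1, fun n ↦ ?_⟩
  obtain ⟨uv, huv, hpush⟩ := hs.2 n
  simpa only [Step, ← hpush, push, add_sub_cancel_left] using huv.1

lemma IsBranch.fcConsistentP2 (hs : σ.IsBranch G v₀ s) :
    FCConsistentP2 G σ (fun n ↦ (s n).2) (σ.branchCol s) := by
  refine fun n ↦ ⟨fun _ ↦ ?_, fun hP2 ↦ ?_⟩
  · rw [hs.chist_eq, branchCol]
  · rw [hs.chist_eq]
    exact congrArg Prod.snd ((hs.2 n).eq_push hP2)

lemma IsBranch.exists_eq_of_reaches (hs : σ.IsBranch G v₀ s) {x : Memory V d} {n : ℕ}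
    (h : σ.Reaches G x (s n)) : ∃ j ≤ n, s j = x := by
  induction n with
  | zero => exact ⟨0, le_rfl, (h.eq_of_length_le (by simp [hs.length_eq])).symm⟩
  | succ n ih =>
    obtain hx | ⟨c, hxc, hc⟩ := h.cases_tail
    · exact ⟨n + 1, le_rfl, hx⟩
    · obtain ⟨j, hj, rfl⟩ := ih (hc.left_unique (hs.2 n) ▸ hxc)
      exact ⟨j, hj.trans n.le_succ, rfl⟩

lemma IsBranch.vertex_ne (hs : σ.IsBranch G v₀ s) {n : ℕ} (hn : σ.IsSimple G (s n)) {i j : ℕ}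
    (hij : i < j) (hj : j < n + 1) : (s i).2.1 ≠ (s j).2.1 := by
  rw [IsSimple, ← (hs.2 n).fst_eq_trail, ← hs.chist_eq, chist, List.map_map] at hn
  exact fun h ↦ hij.ne (List.inj_on_of_nodup_map hn (List.mem_range.2 (hij.trans hj))
    (List.mem_range.2 hj) h)

lemma exists_isBranch (hval : ValidFCP2 G σ) (hm : σ.Reaches G (root v₀) m)
    (hmove : σ.Move G m m') : ∃ s n, σ.IsBranch G v₀ s ∧ s n = m ∧ s (n + 1) = m' := by
  obtain ⟨s, h0, hs, n, hn⟩ := exists_seq_through_rel (exists_move hval) hm hmove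
  exact ⟨s, n, ⟨h0, hs⟩, hn⟩

/-- `σ` is winning for Player 2 in the first-cycle bounding game from `v₀`. -/
def FCWinning (σ : FCStratP2 V d) (G : MWG V d) (v₀ : V) : Prop :=
  ∀ ρ χ, IsPlay G v₀ ρ → LegalCols G ρ χ → FCConsistentP2 G σ ρ χ →
    ∀ n₀ n₁, FirstRepeat ρ n₀ n₁ → CycleWinP2 G ρ χ n₀ n₁

lemma FCWinning.exists_cycle_halfSpace (hwin : σ.FCWinning G v₀) (hval : ValidFCP2 G σ)
    (hm : σ.Reaches G (root v₀) m) (hsimple : σ.IsSimple G m) (ham : σ.Reaches G a m)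
    (huv : σ.Legal G m uv) (hcycle : a.2.1 = uv.2) :
    ∃ A, IsPartialPHS d A ∧
      (∀ x, σ.Reaches G a x → σ.Reaches G x m → x.2.1 ∈ G.P1 → A ⊆ σ.col x.1 x.2) ∧
      (∃ x, σ.Reaches G a x ∧ σ.Reaches G x m ∧ x.2.1 ∈ G.P1) ∧
      intQ (m.2.2 + uv.1 - a.2.2) ∈ A := by
  obtain ⟨s, n, hs, rfl, hpush⟩ := exists_isBranch hval hm ⟨uv, huv, rfl⟩
  obtain ⟨j, hjn, rfl⟩ := hs.exists_eq_of_reaches ham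
  have hrepeat : FirstRepeat (fun n ↦ (s n).2) j (n + 1) :=
    ⟨Nat.lt_succ_of_le hjn, by simpa only [hpush, push] using hcycle,
      fun _ _ ↦ hs.vertex_ne hsimple⟩
  have hcycleWin := hwin _ _ hs.isPlay (fun n hn ↦ hval.1 _ _ hn) hs.fcConsistentP2 _ _ hrepeat
  obtain ⟨i, hji, hin, hi⟩ := hcycleWin.exists_mem_P1
  obtain ⟨A, hA, hcol, -, hmem⟩ := hcycleWin
  refine ⟨A, hA, fun x hax hxm hx ↦ ?_, ⟨s i, reflTransGen_seq hs.2 hji,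
    reflTransGen_seq hs.2 (Nat.lt_succ_iff.1 hin), hi⟩, by simpa only [hpush, push] using hmem⟩
  obtain ⟨k, hkn, rfl⟩ := hs.exists_eq_of_reaches hxm
  have hjk : j ≤ k := by simpa only [hs.length_eq] using hax.length_le
  exact hcol k hjk (Nat.lt_succ_of_le hkn) hx

end Tree

section Surplus

/-- A child move made by Player 2. -/
def ForcedMove (σ : FCStratP2 V d) (G : MWG V d) (m m' : Memory V d) : Prop :=
  m.2.1 ∉ G.P1 ∧ σ.Move G m m'

/-- `x` is the first Player-1 state reached from `m`. Until there all moves are Player 2's, so `x`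
depends on `m` only. -/
def FirstP1 (σ : FCStratP2 V d) (G : MWG V d) (m x : Memory V d) : Prop :=
  Relation.ReflTransGen (σ.ForcedMove G) m x ∧ x.2.1 ∈ G.P1

/-- The vectors admitted as weights of cycles attached at `m`: those lying in the colour of the
first Player-1 state from `m` on, provided that this state is simple. -/
def IsLoopWeight (σ : FCStratP2 V d) (G : MWG V d) (m : Memory V d) (w : QVec d) : Prop :=
  ∃ x, σ.FirstP1 G m x ∧ σ.IsSimple G x ∧ w ∈ σ.col x.1 x.2

/-- `w` is a total weight of cycles attached along the path in the tree from `b` to `m`. It records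
what `σ̃` has cut out of its memory, at the states where the cuts took place. -/
inductive Surplus (σ : FCStratP2 V d) (G : MWG V d) (b : Memory V d) :
    Memory V d → QVec d → Prop
  | refl : Surplus σ G b b 0
  | move {m m' : Memory V d} {w : QVec d} :
      Surplus σ G b m w → σ.Move G m m' → Surplus σ G b m' w
  | loop {m : Memory V d} {w x : QVec d} :
      Surplus σ G b m w → σ.IsLoopWeight G m x → Surplus σ G b m (w + x)

variable {a b m m' n x y : Memory V d} {uv : (Fin d → ℤ) × V} {A : Set (QVec d)} {u w : QVec d}

lemma ForcedMove.right_unique (h : σ.ForcedMove G m x) (h' : σ.Move G m y) : x = y :=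
  (h.2.eq_push h.1).trans (h'.eq_push h.1).symm

lemma FirstP1.reaches (h : σ.FirstP1 G m x) : σ.Reaches G m x :=
  Relation.ReflTransGen.mono (fun _ _ ↦ And.right) _ _ h.1

lemma Reaches.exists_firstP1 (h : σ.Reaches G m y) (hy : y.2.1 ∈ G.P1) :
    ∃ x, σ.FirstP1 G m x ∧ σ.Reaches G x y := by
  induction h using Relation.ReflTransGen.head_induction_on with
  | refl => exact ⟨y, ⟨.refl, hy⟩, .refl⟩
  | @head m _ hmove hreach ih =>
    by_cases hm : m.2.1 ∈ G.P1
    · exact ⟨m, ⟨.refl, hm⟩, .head hmove hreach⟩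
    · obtain ⟨x, ⟨hforced, hx⟩, hxy⟩ := ih
      exact ⟨x, ⟨.head ⟨hm, hmove⟩ hforced, hx⟩, hxy⟩

lemma FirstP1.reaches_or_exists_forcedMove (h : σ.FirstP1 G n x) (hnm : σ.Reaches G n m) :
    σ.Reaches G x m ∨ ∃ e, σ.ForcedMove G m e ∧ σ.Reaches G e x := by
  obtain ⟨hforced, -⟩ := h
  induction hforced with
  | refl => exact .inl hnm
  | tail _ hmove ih =>
    obtain hbm | ⟨e, he, hex⟩ := ih
    · obtain rfl | ⟨c, hbc, hcm⟩ := hbm.cases_head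
      · exact .inr ⟨_, hmove, .refl⟩
      · exact .inl (hmove.right_unique hbc ▸ hcm)
    · exact .inr ⟨e, he, hex.tail hmove.2⟩

lemma Surplus.reaches (h : σ.Surplus G b m w) : σ.Reaches G b m := by
  induction h with
  | refl => exact .refl
  | move _ hmove ih => exact ih.tail hmove
  | loop _ _ ih => exact ih

lemma Surplus.split (h : σ.Surplus G b m w) (ham : σ.Reaches G a m)
    (hle : b.1.length ≤ a.1.length) :
    ∃ w₁ w₂, σ.Surplus G b a w₁ ∧ σ.Surplus G a m w₂ ∧ w = w₁ + w₂ := by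
  induction h with
  | refl =>
    obtain rfl := ham.eq_of_length_le hle
    exact ⟨0, 0, .refl, .refl, (add_zero 0).symm⟩
  | move hsurplus hmove ih =>
    obtain rfl | ⟨c, hac, hcm⟩ := ham.cases_tail
    · exact ⟨_, 0, hsurplus.move hmove, .refl, (add_zero _).symm⟩
    · obtain rfl := hcm.left_unique hmove
      obtain ⟨w₁, w₂, h₁, h₂, rfl⟩ := ih hac
      exact ⟨w₁, w₂, h₁, h₂.move hmove, rfl⟩
  | loop _ hloop ih =>
    obtain ⟨w₁, w₂, h₁, h₂, rfl⟩ := ih ham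
    exact ⟨w₁, w₂ + _, h₁, h₂.loop hloop, add_assoc _ _ _⟩

lemma FirstP1.reaches_of_cycle (h : σ.FirstP1 G n x) (hx : σ.IsSimple G x)
    (hm : σ.IsSimple G m) (huv : σ.Legal G m uv) (hcycle : a.2.1 = uv.2)
    (han : σ.Reaches G a n) (hnm : σ.Reaches G n m) : σ.Reaches G x m := by
  obtain hxm | ⟨e, he, hex⟩ := h.reaches_or_exists_forcedMove hnm
  · exact hxm
  · -- The only way to leave the segment `[a, m]` is the closing move `uv`, which repeats a vertex.
    obtain rfl := he.right_unique ⟨uv, huv, rfl⟩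
    exact (not_isSimple_push hm (han.trans hnm) hcycle (hx.of_reaches hex)).elim

lemma Surplus.add_mem_of_cycle (hval : ValidFCP2 G σ) (hm : σ.IsSimple G m)
    (huv : σ.Legal G m uv) (hcycle : a.2.1 = uv.2) (hA : IsPartialPHS d A)
    (hcol : ∀ x, σ.Reaches G a x → σ.Reaches G x m → x.2.1 ∈ G.P1 → A ⊆ σ.col x.1 x.2)
    (hu : u ∈ A) (hw : σ.Surplus G a n w) (hnm : σ.Reaches G n m) : u + w ∈ A := by
  induction hw with
  | refl => rwa [add_zero]
  | move _ hmove ih => exact ih (.head hmove hnm)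
  | loop hsurplus hloop ih =>
    obtain ⟨x, hfirst, hx, hmem⟩ := hloop
    have hxm := hfirst.reaches_of_cycle hx hm huv hcycle hsurplus.reaches hnm
    have hAx := hcol x (hsurplus.reaches.trans hfirst.reaches) hxm hfirst.2
    rw [← add_assoc]
    exact hA.add_mem_of_subset (hval.1 _ _ hfirst.2).isPartialPHS hAx (ih hnm) hmem

lemma FCWinning.isLoopWeight_of_cycle (hwin : σ.FCWinning G v₀) (hval : ValidFCP2 G σ)
    (hm : σ.Reaches G (root v₀) m) (hsimple : σ.IsSimple G m) (huv : σ.Legal G m uv)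
    (hcycle : a.2.1 = uv.2) (hw : σ.Surplus G a m w) :
    σ.IsLoopWeight G a (intQ (m.2.2 + uv.1 - a.2.2) + w) := by
  obtain ⟨A, hA, hcol, ⟨y, hay, hym, hy⟩, hmem⟩ :=
    hwin.exists_cycle_halfSpace hval hm hsimple hw.reaches huv hcycle
  obtain ⟨x, hfirst, hxy⟩ := hay.exists_firstP1 hy
  have hxm := hxy.trans hym
  exact ⟨x, hfirst, hsimple.of_reaches hxm, hcol x hfirst.reaches hxm hfirst.2
    (hw.add_mem_of_cycle hval hsimple huv hcycle hA hcol hmem .refl)⟩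

end Surplus

section Play

variable {b m : Memory V d} {uv : (Fin d → ℤ) × V} {w : QVec d}

lemma stepMem_eq_push_or_prefix (m : Memory V d) (uv : (Fin d → ℤ) × V) :
    (stepMem G σ m uv = σ.push G m uv ∧ ∀ x ∈ σ.trail G m, x.1.1 ≠ uv.2) ∨
      ∃ h x, h ++ [x] <+: σ.trail G m ∧ x.1.1 = uv.2 ∧ stepMem G σ m uv = (h, x.1) := by
  rw [stepMem, ← trail]
  cases hfind : (σ.trail G m).findIdx? fun x ↦ decide (x.1.1 = uv.2) with
  | none => exact .inl ⟨rfl, by simpa using hfind⟩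
  | some j =>
    obtain ⟨hj, hvertex, -⟩ := List.findIdx?_eq_some_iff_getElem.1 hfind
    refine .inr ⟨(σ.trail G m).take j, (σ.trail G m)[j], ?_, of_decide_eq_true hvertex, ?_⟩
    · rw [List.take_append_getElem]
      exact List.take_prefix _ _
    · simp only [List.getD_eq_getElem _ _ hj]

lemma stepMem_vertex (m : Memory V d) (uv : (Fin d → ℤ) × V) : (stepMem G σ m uv).2.1 = uv.2 := by
  obtain ⟨hstep, -⟩ | ⟨h, x, -, hx, hstep⟩ := stepMem_eq_push_or_prefix (G := G) (σ := σ) m uv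
  · rw [hstep, push]
  · rw [hstep, hx]

lemma reaches_of_prefix (hm : σ.Reaches G (root v₀) m) {h : CHist V d}
    {x : Conf V d × Option (Colour d)} (hprefix : h ++ [x] <+: σ.trail G m) :
    σ.Reaches G (root v₀) (h, x.1) ∧ σ.Reaches G (h, x.1) m := by
  induction hm with
  | refl =>
    rw [trail, List.prefix_concat_iff] at hprefix
    obtain heq | hprefix := hprefix
    · obtain ⟨rfl, rfl⟩ := List.append_singleton_inj.1 heq
      exact ⟨.refl, .refl⟩
    · simp [root] at hprefix
  | @tail m _ hm hmove ih =>
    rw [trail, List.prefix_concat_iff] at hprefix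
    obtain heq | hprefix := hprefix
    · obtain ⟨rfl, rfl⟩ := List.append_singleton_inj.1 heq
      exact ⟨hm.tail hmove, .refl⟩
    · obtain ⟨hroot, hreach⟩ := ih (hmove.fst_eq_trail ▸ hprefix)
      exact ⟨hroot, hreach.tail hmove⟩

lemma stepMem_eq_push_or_reaches (hm : σ.Reaches G (root v₀) m) (uv : (Fin d → ℤ) × V) :
    (stepMem G σ m uv = σ.push G m uv ∧ ∀ x ∈ σ.trail G m, x.1.1 ≠ uv.2) ∨
      σ.Reaches G (root v₀) (stepMem G σ m uv) ∧ σ.Reaches G (stepMem G σ m uv) m := by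
  obtain hpush | ⟨h, x, hprefix, -, hstep⟩ := stepMem_eq_push_or_prefix (G := G) (σ := σ) m uv
  · exact .inl hpush
  · exact .inr (hstep ▸ reaches_of_prefix hm hprefix)

lemma FCWinning.exists_surplus_stepMem (hwin : σ.FCWinning G v₀) (hval : ValidFCP2 G σ)
    (hm : σ.Reaches G (root v₀) m) (hsimple : σ.IsSimple G m) (huv : σ.Legal G m uv)
    (hw : σ.Surplus G b m w) (hle : b.1.length ≤ (stepMem G σ m uv).1.length) :
    ∃ w', σ.Surplus G b (stepMem G σ m uv) w' ∧
      intQ (stepMem G σ m uv).2.2 + w' = intQ m.2.2 + intQ uv.1 + w ∧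
      (stepMem G σ m uv = b → σ.IsLoopWeight G b w') := by
  obtain ⟨hpush, -⟩ | ⟨-, ham⟩ := stepMem_eq_push_or_reaches hm uv
  · rw [hpush]
    refine ⟨w, hw.move ⟨uv, huv, rfl⟩, by rw [push, intQ_add], fun hb ↦ ?_⟩
    have hlt := hw.reaches.length_le
    rw [← hb, push, trail, List.length_append, List.length_singleton] at hlt
    omega
  have hcycle : (stepMem G σ m uv).2.1 = uv.2 := stepMem_vertex m uv
  generalize stepMem G σ m uv = a at *
  obtain rfl | hab := eq_or_ne a b
  · have hloop := hwin.isLoopWeight_of_cycle hval hm hsimple huv hcycle hw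
    refine ⟨_, zero_add (intQ _ + w) ▸ Surplus.refl.loop hloop, ?_, fun _ ↦ hloop⟩
    rw [intQ_sub, intQ_add]
    abel
  · obtain ⟨w₁, w₂, h₁, h₂, rfl⟩ := hw.split ham hle
    have hloop := hwin.isLoopWeight_of_cycle hval hm hsimple huv hcycle h₂
    refine ⟨_, h₁.loop hloop, ?_, fun h ↦ (hab h).elim⟩
    rw [intQ_sub, intQ_add]
    abel

lemma reaches_and_isSimple_stepMem (hm : σ.Reaches G (root v₀) m) (hsimple : σ.IsSimple G m)
    (huv : σ.Legal G m uv) :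
    σ.Reaches G (root v₀) (stepMem G σ m uv) ∧ σ.IsSimple G (stepMem G σ m uv) := by
  obtain ⟨hpush, hfresh⟩ | ⟨hroot, ham⟩ := stepMem_eq_push_or_reaches hm uv
  · rw [hpush]
    exact ⟨hm.tail ⟨uv, huv, rfl⟩, (isSimple_push_iff hsimple).2 hfresh⟩
  · exact ⟨hroot, hsimple.of_reaches ham⟩

/-- The memory of `σ̃` after the first `n` moves of the play `ρ`. -/
def memAt (σ : FCStratP2 V d) (G : MWG V d) (ρ : ℕ → Conf V d) : ℕ → Memory V d
  | 0 => ([], ρ 0)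
  | n + 1 => stepMem G σ (memAt σ G ρ n) ((ρ (n + 1)).2 - (ρ n).2, (ρ (n + 1)).1)

variable {ρ : ℕ → Conf V d}

lemma memFold_eq_memAt (ρ : ℕ → Conf V d) (n : ℕ) :
    memFold G σ (ρ 0) ((List.range n).map fun i ↦ ρ (i + 1)) = (σ.memAt G ρ n, ρ n) := by
  induction n with
  | zero => rfl
  | succ n ih =>
    rw [List.range_succ, List.map_append, memFold, List.foldl_append, ← memFold, ih]
    rfl

lemma tildeStrat_hist (ρ : ℕ → Conf V d) (n : ℕ) :
    tildeStrat G σ (hist ρ n) (ρ n) = σ.edge (σ.memAt G ρ n).1 (σ.memAt G ρ n).2 := by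
  cases n with
  | zero => rfl
  | succ n =>
    have hhist : hist ρ (n + 1) = ρ 0 :: (List.range n).map fun i ↦ ρ (i + 1) := by
      rw [hist, List.range_succ_eq_map, List.map_cons, List.map_map]
      rfl
    have hmap : ((List.range n).map fun i ↦ ρ (i + 1)) ++ [ρ (n + 1)] =
        (List.range (n + 1)).map fun i ↦ ρ (i + 1) := by
      rw [List.range_succ, List.map_append, List.map_singleton]
    simp only [hhist, tildeStrat, hmap, memFold_eq_memAt]

lemma validStrat_tildeStrat (hval : ValidFCP2 G σ) :
    ValidStrat G {v | v ∉ G.P1} (tildeStrat G σ) := by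
  rintro (_ | ⟨c₀, rest⟩) c - hc
  · exact hval.2 [] c hc
  · have hvertex : (memFold G σ c₀ (rest ++ [c])).1.2.1 = c.1 := by
      rw [memFold, List.foldl_append]
      exact stepMem_vertex _ _
    rw [← hvertex] at hc ⊢
    exact hval.2 _ _ hc

lemma memAt_vertex (ρ : ℕ → Conf V d) (n : ℕ) : (σ.memAt G ρ n).2.1 = (ρ n).1 := by
  cases n with
  | zero => rfl
  | succ n => exact stepMem_vertex _ _

lemma legal_memAt (hplay : IsPlay G v₀ ρ) (hcons : Consistent {v | v ∉ G.P1} (tildeStrat G σ) ρ)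
    (n : ℕ) : σ.Legal G (σ.memAt G ρ n) ((ρ (n + 1)).2 - (ρ n).2, (ρ (n + 1)).1) := by
  rw [Legal, memAt_vertex]
  refine ⟨hplay.2 n, fun hP2 ↦ ?_⟩
  rw [hcons n hP2, tildeStrat_hist, add_sub_cancel_left]

lemma reaches_and_isSimple_memAt (hplay : IsPlay G v₀ ρ)
    (hcons : Consistent {v | v ∉ G.P1} (tildeStrat G σ) ρ) (n : ℕ) :
    σ.Reaches G (root v₀) (σ.memAt G ρ n) ∧ σ.IsSimple G (σ.memAt G ρ n) := by
  induction n with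
  | zero =>
    rw [memAt, hplay.1]
    exact ⟨.refl, List.nodup_singleton _⟩
  | succ n ih => exact reaches_and_isSimple_stepMem ih.1 ih.2 (legal_memAt hplay hcons n)

lemma FCWinning.exists_surplus_memAt (hwin : σ.FCWinning G v₀) (hval : ValidFCP2 G σ)
    (hplay : IsPlay G v₀ ρ) (hcons : Consistent {v | v ∉ G.P1} (tildeStrat G σ) ρ) {p : ℕ}
    (hle : ∀ n ≥ p, (σ.memAt G ρ p).1.length ≤ (σ.memAt G ρ n).1.length) {n : ℕ} (hpn : p ≤ n) :
    ∃ w, σ.Surplus G (σ.memAt G ρ p) (σ.memAt G ρ n) w ∧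
      intQ (σ.memAt G ρ n).2.2 + w = intQ (σ.memAt G ρ p).2.2 + intQ ((ρ n).2 - (ρ p).2) ∧
      (p < n → σ.memAt G ρ n = σ.memAt G ρ p → σ.IsLoopWeight G (σ.memAt G ρ p) w) := by
  induction n, hpn using Nat.le_induction with
  | base => exact ⟨0, .refl, by rw [intQ_sub, sub_self], fun h ↦ (lt_irrefl _ h).elim⟩
  | succ n hpn ih =>
    obtain ⟨w, hw, hweight, -⟩ := ih
    obtain ⟨hreach, hsimple⟩ := reaches_and_isSimple_memAt hplay hcons n
    obtain ⟨w', hw', hweight', hloop⟩ := hwin.exists_surplus_stepMem hval hreach hsimple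
      (legal_memAt hplay hcons n) hw (hle (n + 1) (hpn.trans n.le_succ))
    refine ⟨w', hw', ?_, fun _ ↦ hloop⟩
    rw [memAt, hweight', add_right_comm, hweight]
    simp only [intQ_sub]
    abel

lemma FCWinning.weight_ne (hwin : σ.FCWinning G v₀) (hval : ValidFCP2 G σ)
    (hplay : IsPlay G v₀ ρ) (hcons : Consistent {v | v ∉ G.P1} (tildeStrat G σ) ρ) {p q : ℕ}
    (hpq : p < q) (hle : ∀ n ≥ p, (σ.memAt G ρ p).1.length ≤ (σ.memAt G ρ n).1.length)
    (hlength : (σ.memAt G ρ q).1.length = (σ.memAt G ρ p).1.length) : (ρ p).2 ≠ (ρ q).2 := by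
  intro heq
  obtain ⟨w, hw, hweight, hloop⟩ := hwin.exists_surplus_memAt hval hplay hcons hle hpq.le
  have hreturn := hw.reaches.eq_of_length_le hlength.le
  rw [hreturn, heq, intQ_sub, sub_self, add_right_inj] at hweight
  obtain ⟨x, hfirst, -, hmem⟩ := hloop hpq hreturn.symm
  exact (hval.1 _ _ hfirst.2).isPartialPHS.zero_notMem (hweight ▸ hmem)

end Play

end FCStratP2

theorem tilde_strategy_winning_general {V : Type} [Fintype V] [DecidableEq V] {d : ℕ}
    {G : MWG V d} {v₀ : V} {σ : FCStratP2 V d} (hval : ValidFCP2 G σ)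
    (hwin : σ.FCWinning G v₀) :
    ValidStrat G {v | v ∉ G.P1} (tildeStrat G σ) ∧
    ∀ ρ, IsPlay G v₀ ρ → Consistent {v | v ∉ G.P1} (tildeStrat G σ) ρ →
      ¬ BoundedPlay ρ := by
  refine ⟨FCStratP2.validStrat_tildeStrat hval, fun ρ hplay hcons ⟨B, hB⟩ ↦ ?_⟩
  have hbounded n := (FCStratP2.reaches_and_isSimple_memAt hplay hcons n).2.length_lt_card.le
  obtain ⟨L, hfreq, hev⟩ := exists_frequently_eq_eventually_ge (l := Filter.atTop) hbounded
  obtain ⟨N, hN⟩ := Filter.eventually_atTop.1 hev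
  have hinf := Nat.frequently_atTop_iff_infinite.1
    (hfreq.and_eventually (Filter.eventually_ge_atTop N))
  obtain ⟨p, ⟨hpL, hNp⟩, q, ⟨hqL, -⟩, hpq, heq⟩ :=
    hinf.exists_lt_map_eq_of_mapsTo (fun n _ ↦ hB n) (finite_setOf_vnorm_le B)
  exact hwin.weight_ne hval hplay hcons hpq
    (fun n hn ↦ hpL.trans_le (hN n (hNp.trans hn))) (hqL.trans hpL.symm) heq

/-- Lemma 6: if `σ` is winning for Player 2 in the
first-cycle bounding game from `v₀`, then `σ̃` is winning for Player 2 in the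
bounding game from `v₀`. -/
theorem tilde_strategy_winning
    (V : Type) [Fintype V] [DecidableEq V] (d : ℕ) (G : MWG V d)
    (hE : 0 < enorm G) (hcyc : EveryCycleHasP1 G) (v₀ : V)
    (σ : FCStratP2 V d) (hval : ValidFCP2 G σ)
    (hwin : ∀ ρ χ, IsPlay G v₀ ρ → LegalCols G ρ χ → FCConsistentP2 G σ ρ χ →
      ∀ n₀ n₁, FirstRepeat ρ n₀ n₁ → CycleWinP2 G ρ χ n₀ n₁) :
    ValidStrat G {v | v ∉ G.P1} (tildeStrat G σ) ∧
    ∀ ρ, IsPlay G v₀ ρ → Consistent {v | v ∉ G.P1} (tildeStrat G σ) ρ →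
      ¬ BoundedPlay ρ :=
  tilde_strategy_winning_general hval hwin
end
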